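/- arXiv:1901.10789 — 5 statements merged into one kernel-verified Lean document; each statement's English description precedes it below -/
import Mathlib

section
/- There exists a universal constant C > 0 such that for all positive integers n, T with T > n and every matrix A ∈ [−1,1]^{n×T}, there exists a sign vector x ∈ {−1,+1}^T with ‖Ax‖_∞ ≤ C·√n. -/
open Finset
open scoped Classical

/-! Suppose first that there are at most `n` columns, of which the set `J` is still uncoloured.
Round the `n` signed row sums of each of the `2 ^ |J|` colourings of `J` to a lattice of mesh `2 Δ`,
with `Δ` of order `n ^ (3/8) |J| ^ (1/8)`. By the fourth moment of a random signed sum the rounded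
vectors have a prefix code of mean length at most `|J| / 8`, so at least `2 ^ |J| exp (-|J| / 8)`
colourings share a rounding, and two of them differ on at least `|J| / 8` columns. Half their
difference is a partial colouring with row sums at most `Δ`. As `|J|` decreases geometrically, so
does `Δ`, and the total is `O(√n)`.

For more columns, an extreme point of `{y ∈ [0,1]^T | A y = A (1/2, …, 1/2)}` has at most `n`
fractional coordinates. These are rounded one binary digit at a time (Lovász–Spencer–Vesztergombi):
by the first part, rounding the `k`-th digit changes each row sum by `O(√n / 2 ^ k)`. -/

section SignedSum

variable {ι : Type*}

/-- The sum of `a` over `J` in which the elements of `S ⊆ J` are coloured `+1` and those of `J \ S`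
are coloured `-1`; its absolute value is the discrepancy of this colouring in a matrix row `a`.
It is written `2 ∑_S - ∑_J` so that no set difference occurs. -/
def signedSum (a : ι → ℝ) (J S : Finset ι) : ℝ := 2 * ∑ j ∈ S, a j - ∑ j ∈ J, a j

lemma sum_powerset_insert_signedSum [DecidableEq ι] (φ : ℝ → ℝ) (a : ι → ℝ) {J : Finset ι} {j : ι}
    (hj : j ∉ J) :
    ∑ S ∈ (insert j J).powerset, φ (signedSum a (insert j J) S) =
      ∑ S ∈ J.powerset, (φ (signedSum a J S - a j) + φ (signedSum a J S + a j)) := by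
  rw [sum_powerset_insert hj, ← sum_add_distrib]
  refine sum_congr rfl fun S hS => ?_
  have hjS : j ∉ S := fun h => hj (mem_powerset.1 hS h)
  congr 2
  · rw [signedSum, signedSum, sum_insert hj]; ring
  · rw [signedSum, signedSum, sum_insert hj, sum_insert hjS]; ring

lemma sum_powerset_signedSum_sq (a : ι → ℝ) (J : Finset ι) :
    ∑ S ∈ J.powerset, signedSum a J S ^ 2 = 2 ^ #J * ∑ j ∈ J, a j ^ 2 := by
  induction J using Finset.induction_on with
  | empty => simp [signedSum]
  | insert j J hj ih =>
    rw [sum_powerset_insert_signedSum (· ^ 2) a hj, sum_insert hj, card_insert_of_notMem hj]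
    calc ∑ S ∈ J.powerset, ((signedSum a J S - a j) ^ 2 + (signedSum a J S + a j) ^ 2)
        = ∑ S ∈ J.powerset, (2 * signedSum a J S ^ 2 + 2 * a j ^ 2) :=
          sum_congr rfl fun S _ => by ring
      _ = 2 * (2 ^ #J * ∑ j ∈ J, a j ^ 2) + 2 ^ #J * (2 * a j ^ 2) := by
          simp [sum_add_distrib, ← mul_sum, ih]
      _ = 2 ^ (#J + 1) * (a j ^ 2 + ∑ j ∈ J, a j ^ 2) := by ring

lemma sum_powerset_signedSum_pow_four_le (a : ι → ℝ) (J : Finset ι) :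
    ∑ S ∈ J.powerset, signedSum a J S ^ 4 ≤ 2 ^ #J * (3 * (∑ j ∈ J, a j ^ 2) ^ 2) := by
  induction J using Finset.induction_on with
  | empty => simp [signedSum]
  | insert j J hj ih =>
    rw [sum_powerset_insert_signedSum (· ^ 4) a hj, sum_insert hj, card_insert_of_notMem hj]
    calc ∑ S ∈ J.powerset, ((signedSum a J S - a j) ^ 4 + (signedSum a J S + a j) ^ 4)
        = ∑ S ∈ J.powerset,
            (2 * signedSum a J S ^ 4 + 12 * a j ^ 2 * signedSum a J S ^ 2 + 2 * a j ^ 4) :=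
          sum_congr rfl fun S _ => by ring
      _ = 2 * ∑ S ∈ J.powerset, signedSum a J S ^ 4
            + 12 * a j ^ 2 * (2 ^ #J * ∑ j ∈ J, a j ^ 2) + 2 ^ #J * (2 * a j ^ 4) := by
          simp [sum_add_distrib, ← mul_sum, sum_powerset_signedSum_sq]
      _ ≤ 2 * (2 ^ #J * (3 * (∑ j ∈ J, a j ^ 2) ^ 2))
            + 12 * a j ^ 2 * (2 ^ #J * ∑ j ∈ J, a j ^ 2) + 2 ^ #J * (6 * a j ^ 4) := by
          gcongr
          norm_num
      _ = 2 ^ (#J + 1) * (3 * (a j ^ 2 + ∑ j ∈ J, a j ^ 2) ^ 2) := by ring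

lemma signedSum_union_sdiff [DecidableEq ι] (a : ι → ℝ) {J S S' P : Finset ι} (hS : S ⊆ J)
    (hS' : S' ⊆ J) (hP : P ⊆ J \ symmDiff S S') :
    signedSum a J (P ∪ S \ S') =
      signedSum a (J \ symmDiff S S') P + (∑ j ∈ S, a j - ∑ j ∈ S', a j) := by
  have hdisj : Disjoint P (S \ S') :=
    disjoint_of_subset_left hP (disjoint_of_subset_right le_sup_left sdiff_disjoint)
  have hsplit : ∑ j ∈ symmDiff S S', a j = ∑ j ∈ S \ S', a j + ∑ j ∈ S' \ S, a j :=
    sum_union disjoint_sdiff_sdiff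
  have hdiff := sum_sdiff_sub_sum_sdiff (s₁ := S') (s₂ := S) (f := a)
  have hJ := sum_sdiff (f := a) (symmDiff_le_sup.trans (sup_le hS hS') : symmDiff S S' ⊆ J)
  rw [signedSum, signedSum, sum_union hdisj]
  linarith

end SignedSum

lemma abs_round_le_pow_four (y : ℝ) : |(round y : ℝ)| ≤ 16 * y ^ 4 := by
  by_cases h : round y = 0
  · rw [h, Int.cast_zero, abs_zero]
    positivity
  have hround : (1 : ℝ) ≤ |(round y : ℝ)| := by exact_mod_cast Int.one_le_abs h
  have hle : |(round y : ℝ)| ≤ |y| + 1 / 2 := by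
    have := abs_sub_abs_le_abs_sub (round y : ℝ) y
    rw [abs_sub_comm] at this
    linarith [abs_sub_round y]
  have hy : 1 / 8 ≤ |y| ^ 3 := by
    calc (1 / 8 : ℝ) = (1 / 2) ^ 3 := by norm_num
      _ ≤ |y| ^ 3 := by gcongr; linarith
  calc |(round y : ℝ)| ≤ 2 * |y| := by linarith
    _ ≤ 16 * |y| ^ 3 * |y| := by gcongr; linarith
    _ = 16 * y ^ 4 := by rw [mul_assoc, ← pow_succ, Even.pow_abs (by decide)]

lemma abs_sub_le_one_of_round_eq {x y : ℝ} (h : round x = round y) : |x - y| ≤ 1 := by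
  have hx := abs_le.1 (abs_sub_round x)
  have hy := abs_le.1 (abs_sub_round y)
  rw [h] at hx
  rw [abs_le]
  constructor <;> linarith

lemma sum_powerset_abs_round_signedSum_le {ι : Type*} (a : ι → ℝ) (J : Finset ι) {t : ℝ}
    (ht : 0 < t) :
    ∑ S ∈ J.powerset, |(round (signedSum a J S / t) : ℝ)| ≤
      2 ^ #J * (48 * (∑ j ∈ J, a j ^ 2) ^ 2 / t ^ 4) := by
  calc ∑ S ∈ J.powerset, |(round (signedSum a J S / t) : ℝ)|
      ≤ ∑ S ∈ J.powerset, 16 / t ^ 4 * signedSum a J S ^ 4 := by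
        refine sum_le_sum fun S _ => (abs_round_le_pow_four _).trans_eq ?_
        ring
    _ ≤ 16 / t ^ 4 * (2 ^ #J * (3 * (∑ j ∈ J, a j ^ 2) ^ 2)) := by
        rw [← mul_sum]
        gcongr
        exact sum_powerset_signedSum_pow_four_le a J
    _ = 2 ^ #J * (48 * (∑ j ∈ J, a j ^ 2) ^ 2 / t ^ 4) := by ring

section CodeLength

/-- The lengths `w` satisfy Kraft's inequality, as the word lengths (in nats) of a prefix code on
`β` do. A map into `β` of mean code length `E` has a fibre of relative size at least `exp (-E)`.
Quantifying over finite sets of words avoids a summability hypothesis. -/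
def IsCodeLength {β : Type*} (w : β → ℝ) : Prop :=
  ∀ s : Finset β, ∑ v ∈ s, Real.exp (-w v) ≤ 1

lemma IsCodeLength.pi {κ : Type*} [Fintype κ] {β : κ → Type*} {w : ∀ i, β i → ℝ}
    (hw : ∀ i, IsCodeLength (w i)) : IsCodeLength fun v : ∀ i, β i => ∑ i, w i (v i) := by
  intro s
  calc ∑ v ∈ s, Real.exp (-∑ i, w i (v i)) = ∑ v ∈ s, ∏ i, Real.exp (-w i (v i)) := by
        simp_rw [← sum_neg_distrib, Real.exp_sum]
    _ ≤ ∑ v ∈ Fintype.piFinset fun i => s.image (· i), ∏ i, Real.exp (-w i (v i)) :=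
        sum_le_sum_of_subset_of_nonneg
          (fun v hv => Fintype.mem_piFinset.2 fun i => mem_image_of_mem (· i) hv)
          fun _ _ _ => by positivity
    _ = ∏ i, ∑ k ∈ s.image (· i), Real.exp (-w i k) :=
        (prod_univ_sum (fun i => s.image (· i)) fun i k => Real.exp (-w i k)).symm
    _ ≤ 1 := prod_le_one (fun _ _ => by positivity) fun i _ => hw i _

lemma hasSum_pow_natAbs {r : ℝ} (h0 : 0 ≤ r) (h1 : r < 1) :
    HasSum (fun k : ℤ => r ^ k.natAbs) ((1 + r) / (1 - r)) := by
  have hgeom := hasSum_geometric_of_lt_one h0 h1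
  have hneg : HasSum (fun k : ℕ => r ^ (-(k + 1 : ℤ)).natAbs) (r * (1 - r)⁻¹) := by
    have hpow : ∀ k : ℕ, r ^ (-(k + 1 : ℤ)).natAbs = r * r ^ k := fun k => by
      rw [← pow_succ', Int.natAbs_neg]
      rfl
    simpa only [hpow] using hgeom.mul_left r
  rw [show (1 + r) / (1 - r) = (1 - r)⁻¹ + r * (1 - r)⁻¹ by ring]
  exact hgeom.of_nat_of_neg_add_one hneg

lemma isCodeLength_int {L : ℝ} (hL : Real.exp (-L) ≤ 1 / 2) :
    IsCodeLength fun k : ℤ => L * |(k : ℝ)| + 4 * Real.exp (-L) := by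
  intro s
  set r := Real.exp (-L) with hr
  have hr0 : 0 ≤ r := (Real.exp_pos _).le
  calc ∑ k ∈ s, Real.exp (-(L * |(k : ℝ)| + 4 * r))
      = Real.exp (-(4 * r)) * ∑ k ∈ s, r ^ k.natAbs := by
        rw [mul_sum]
        refine sum_congr rfl fun k _ => ?_
        rw [hr, ← Real.exp_nat_mul, ← Real.exp_add, Nat.cast_natAbs, Int.cast_abs]
        ring_nf
    _ ≤ Real.exp (-(4 * r)) * ((1 + r) / (1 - r)) := by
        gcongr
        exact sum_le_hasSum s (fun _ _ => by positivity) (hasSum_pow_natAbs hr0 (by linarith))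
    _ ≤ Real.exp (-(4 * r)) * (1 + 4 * r) := by
        gcongr
        rw [div_le_iff₀ (by linarith)]
        nlinarith
    _ ≤ Real.exp (-(4 * r)) * Real.exp (4 * r) := by
        gcongr
        linarith [Real.add_one_le_exp (4 * r)]
    _ = 1 := by rw [← Real.exp_add, neg_add_cancel, Real.exp_zero]

variable {α β : Type*} {Ω : Finset α}

lemma card_mul_exp_neg_le_sum_exp_neg {w : α → ℝ} {E : ℝ} (hE : ∑ x ∈ Ω, w x ≤ #Ω * E) :
    #Ω * Real.exp (-E) ≤ ∑ x ∈ Ω, Real.exp (-w x) := by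
  calc #Ω * Real.exp (-E) ≤ (∑ x ∈ Ω, (E - w x + 1)) * Real.exp (-E) := by
        gcongr
        simp only [sum_add_distrib, sum_sub_distrib, sum_const, nsmul_eq_mul]
        linarith
    _ ≤ ∑ x ∈ Ω, Real.exp (-w x) := by
        rw [sum_mul]
        refine sum_le_sum fun x _ => ?_
        calc (E - w x + 1) * Real.exp (-E) ≤ Real.exp (E - w x) * Real.exp (-E) := by
              gcongr
              exact Real.add_one_le_exp _
          _ = Real.exp (-w x) := by rw [← Real.exp_add]; ring_nf

lemma IsCodeLength.exists_large_fiber [DecidableEq β] {w : β → ℝ} (hw : IsCodeLength w)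
    (hΩ : Ω.Nonempty) (f : α → β) {E : ℝ} (hE : ∑ x ∈ Ω, w (f x) ≤ #Ω * E) :
    ∃ x ∈ Ω, #Ω * Real.exp (-E) ≤ #{y ∈ Ω | f y = f x} := by
  obtain ⟨x, hx, hmax⟩ := exists_max_image Ω (fun x => #{y ∈ Ω | f y = f x}) hΩ
  refine ⟨x, hx, ?_⟩
  calc #Ω * Real.exp (-E) ≤ ∑ x ∈ Ω, Real.exp (-w (f x)) := card_mul_exp_neg_le_sum_exp_neg hE
    _ = ∑ v ∈ Ω.image f, #{y ∈ Ω | f y = v} * Real.exp (-w v) := by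
        rw [sum_comp (fun v => Real.exp (-w v)) f]
        simp only [nsmul_eq_mul]
    _ ≤ ∑ v ∈ Ω.image f, #{y ∈ Ω | f y = f x} * Real.exp (-w v) := by
        refine sum_le_sum fun v hv => ?_
        obtain ⟨z, hz, rfl⟩ := mem_image.1 hv
        exact mul_le_mul_of_nonneg_right (by exact_mod_cast hmax z hz) (Real.exp_pos _).le
    _ ≤ #{y ∈ Ω | f y = f x} := by
        rw [← mul_sum]
        exact mul_le_of_le_one_right (Nat.cast_nonneg _) (hw _)

lemma exists_large_fiber_of_sum_abs_le {κ : Type*} [Fintype κ] (hΩ : Ω.Nonempty) (f : α → κ → ℤ)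
    {L m : ℝ} (hL0 : 0 ≤ L) (hL : Real.exp (-L) ≤ 1 / 2)
    (hm : ∀ i, ∑ x ∈ Ω, |(f x i : ℝ)| ≤ #Ω * m) :
    ∃ x ∈ Ω, #Ω * Real.exp (-(Fintype.card κ * (L * m + 4 * Real.exp (-L)))) ≤
      #{y ∈ Ω | f y = f x} := by
  refine (IsCodeLength.pi fun _ => isCodeLength_int hL).exists_large_fiber hΩ f ?_
  rw [sum_comm]
  calc ∑ i, ∑ x ∈ Ω, (L * |(f x i : ℝ)| + 4 * Real.exp (-L))
      = ∑ i, (L * ∑ x ∈ Ω, |(f x i : ℝ)| + #Ω * (4 * Real.exp (-L))) := by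
        refine sum_congr rfl fun i _ => ?_
        rw [sum_add_distrib, ← mul_sum, sum_const, nsmul_eq_mul]
    _ ≤ ∑ _i : κ, (L * (#Ω * m) + #Ω * (4 * Real.exp (-L))) := by
        gcongr with i
        exact hm i
    _ = #Ω * (Fintype.card κ * (L * m + 4 * Real.exp (-L))) := by
        rw [sum_const, card_univ, nsmul_eq_mul]
        ring

end CodeLength

lemma sum_powerset_pow_card_symmDiff {ι : Type*} [DecidableEq ι] {J S : Finset ι} (hS : S ⊆ J)
    (r : ℝ) : ∑ S' ∈ J.powerset, r ^ #(symmDiff S S') = (r + 1) ^ #J := by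
  have hmaps : ∀ U ∈ J.powerset, symmDiff S U ∈ J.powerset := fun U hU =>
    mem_powerset.2 (symmDiff_le_sup.trans (sup_le hS (mem_powerset.1 hU)))
  calc ∑ S' ∈ J.powerset, r ^ #(symmDiff S S') = ∑ U ∈ J.powerset, r ^ #U :=
        sum_nbij' (symmDiff S) (symmDiff S) hmaps hmaps
          (fun U _ => symmDiff_symmDiff_cancel_left S U)
          (fun U _ => symmDiff_symmDiff_cancel_left S U) fun _ _ => rfl
    _ = (r + 1) ^ #J := by simpa using sum_pow_mul_eq_add_pow r 1 J

lemma exists_large_symmDiff {ι : Type*} [DecidableEq ι] {J S : Finset ι} (hJ : J.Nonempty)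
    (hS : S ⊆ J) {𝒮 : Finset (Finset ι)} (h𝒮 : 𝒮 ⊆ J.powerset)
    (hcard : 2 ^ #J * Real.exp (-(#J / 8)) ≤ #𝒮) :
    ∃ S' ∈ 𝒮, (#J : ℝ) / 8 ≤ #(symmDiff S S') := by
  by_contra! hclose
  have hball : #𝒮 * Real.exp (-(#J / 8)) ≤ (Real.exp (-1) + 1) ^ #J := by
    calc #𝒮 * Real.exp (-(#J / 8)) = ∑ S' ∈ 𝒮, Real.exp (-(#J / 8)) := by
          rw [sum_const, nsmul_eq_mul]
      _ ≤ ∑ S' ∈ 𝒮, Real.exp (-1) ^ #(symmDiff S S') := by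
          refine sum_le_sum fun S' hS' => ?_
          rw [← Real.exp_nat_mul]
          gcongr
          linarith [hclose S' hS']
      _ ≤ ∑ S' ∈ J.powerset, Real.exp (-1) ^ #(symmDiff S S') :=
          sum_le_sum_of_subset_of_nonneg h𝒮 fun _ _ _ => by positivity
      _ = (Real.exp (-1) + 1) ^ #J := sum_powerset_pow_card_symmDiff hS _
  have hbase : Real.exp (-1) + 1 < 2 * Real.exp (-(1 / 4)) := by
    have hquarter := Real.add_one_lt_exp (x := -(1 / 4)) (by norm_num)
    linarith [Real.exp_neg_one_lt_half]
  have hlt : (Real.exp (-1) + 1) ^ #J < 2 ^ #J * Real.exp (-(#J / 8)) * Real.exp (-(#J / 8)) := by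
    calc (Real.exp (-1) + 1) ^ #J < (2 * Real.exp (-(1 / 4))) ^ #J :=
          pow_lt_pow_left₀ hbase (by positivity) hJ.card_pos.ne'
      _ = 2 ^ #J * Real.exp (-(#J / 8)) * Real.exp (-(#J / 8)) := by
          rw [mul_pow, ← Real.exp_nat_mul, mul_assoc, ← Real.exp_add]
          ring_nf
  have hmul : 2 ^ #J * Real.exp (-(#J / 8)) * Real.exp (-(#J / 8)) ≤ #𝒮 * Real.exp (-(#J / 8)) := by
    gcongr
  exact lt_irrefl _ (hlt.trans_le (hmul.trans hball))

-- `1 / (432 * r ^ 3)` bounds the mean absolute value of a rounded row sum, by the fourth moment.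
lemma exists_cost_parameter {r : ℝ} (hr : 1 ≤ r) :
    ∃ L, 0 ≤ L ∧ Real.exp (-L) ≤ 1 / 2 ∧
      r ^ 2 * (L * (1 / (432 * r ^ 3)) + 4 * Real.exp (-L)) ≤ 1 / 8 := by
  have hlog : Real.log (8 * r) ≤ 8 * r := Real.log_le_self (by positivity)
  have hexp : Real.exp (-(2 * Real.log (8 * r))) = 1 / (64 * r ^ 2) := by
    rw [Real.exp_neg, two_mul, Real.exp_add, Real.exp_log (by positivity), one_div]
    ring
  refine ⟨2 * Real.log (8 * r), ?_, ?_, ?_⟩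
  · have := Real.log_nonneg (x := 8 * r) (by linarith)
    positivity
  · rw [hexp]
    gcongr
    nlinarith
  · rw [hexp]
    calc r ^ 2 * (2 * Real.log (8 * r) * (1 / (432 * r ^ 3)) + 4 * (1 / (64 * r ^ 2)))
        ≤ r ^ 2 * (2 * (8 * r) * (1 / (432 * r ^ 3)) + 4 * (1 / (64 * r ^ 2))) := by gcongr
      _ = 43 / 432 := by field_simp; norm_num
      _ ≤ 1 / 8 := by norm_num

lemma rpow_one_eighth_le {x y : ℝ} (hx : 0 ≤ x) (hxy : x ≤ 7 / 8 * y) :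
    x ^ (1 / 8 : ℝ) ≤ 63 / 64 * y ^ (1 / 8 : ℝ) := by
  have hy : 0 ≤ y := by linarith
  refine le_of_pow_le_pow_left₀ (n := 8) (by norm_num) (by positivity) ?_
  rw [mul_pow, ← Real.rpow_mul_natCast hx, ← Real.rpow_mul_natCast hy]
  norm_num
  linarith

lemma mul_rpow_mul_rpow_pow_four (c : ℝ) {n p : ℝ} (hn : 0 ≤ n) (hp : 0 < p) :
    (c * n ^ (3 / 8 : ℝ) * p ^ (1 / 8 : ℝ)) ^ 4 = c ^ 4 * √(n / p) ^ 3 * p ^ 2 := by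
  have hn4 : (n ^ (3 / 8 : ℝ)) ^ 4 = √n ^ 3 := by
    rw [Real.sqrt_eq_rpow, ← Real.rpow_mul_natCast hn, ← Real.rpow_mul_natCast hn]
    norm_num
  have hp4 : (p ^ (1 / 8 : ℝ)) ^ 4 = √p := by
    rw [Real.sqrt_eq_rpow, ← Real.rpow_mul_natCast hp.le]
    norm_num
  have hpsq : p ^ 2 = √p ^ 4 := by
    rw [show √p ^ 4 = (√p ^ 2) ^ 2 by ring, Real.sq_sqrt hp.le]
  rw [mul_pow, mul_pow, hn4, hp4, hpsq, Real.sqrt_div hn]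
  field_simp

section Coloring

variable {κ ι : Type*}

lemma abs_sum_sub_sum_le_of_round_eq {a : ι → ℝ} {J S S' : Finset ι} {Δ : ℝ} (hΔ : 0 < Δ)
    (h : round (signedSum a J S / (2 * Δ)) = round (signedSum a J S' / (2 * Δ))) :
    |∑ j ∈ S, a j - ∑ j ∈ S', a j| ≤ Δ := by
  have hdiff : signedSum a J S / (2 * Δ) - signedSum a J S' / (2 * Δ) =
      (∑ j ∈ S, a j - ∑ j ∈ S', a j) / Δ := by
    rw [signedSum, signedSum]
    field_simp
    ring
  have := abs_sub_le_one_of_round_eq h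
  rwa [hdiff, abs_div, abs_of_pos hΔ, div_le_one hΔ] at this

variable [Fintype κ] {A : κ → ι → ℝ}

lemma exists_large_round_fiber (hA : ∀ i j, |A i j| ≤ 1) {J : Finset ι} {r Δ : ℝ} (hr : 1 ≤ r)
    (hcard : Fintype.card κ = r ^ 2 * #J) (hΔ0 : 0 < Δ) (hΔ : Δ ^ 4 = 6 ^ 4 * r ^ 3 * #J ^ 2) :
    ∃ S ⊆ J, 2 ^ #J * Real.exp (-(#J / 8)) ≤
      #{S' ∈ J.powerset | (fun i => round (signedSum (A i) J S' / (2 * Δ))) =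
        fun i => round (signedSum (A i) J S / (2 * Δ))} := by
  obtain ⟨L, hL0, hL, hcost⟩ := exists_cost_parameter hr
  have hJ0 : (#J : ℝ) ≠ 0 := by
    rintro h
    simp [h, hΔ0.ne'] at hΔ
  have hmean : ∀ i, ∑ S ∈ J.powerset, |(round (signedSum (A i) J S / (2 * Δ)) : ℝ)| ≤
      #J.powerset * (1 / (432 * r ^ 3)) := fun i => by
    have hsq : ∑ j ∈ J, A i j ^ 2 ≤ #J := by
      simpa using sum_le_sum fun j (_ : j ∈ J) => (sq_le_one_iff_abs_le_one _).2 (hA i j)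
    calc ∑ S ∈ J.powerset, |(round (signedSum (A i) J S / (2 * Δ)) : ℝ)|
        ≤ 2 ^ #J * (48 * (∑ j ∈ J, A i j ^ 2) ^ 2 / (2 * Δ) ^ 4) :=
          sum_powerset_abs_round_signedSum_le (A i) J (by positivity)
      _ ≤ 2 ^ #J * (48 * #J ^ 2 / (2 * Δ) ^ 4) := by gcongr
      _ = #J.powerset * (1 / (432 * r ^ 3)) := by
          rw [mul_pow, hΔ, card_powerset]
          push_cast
          field_simp
          norm_num
  obtain ⟨S, hS, hfib⟩ := exists_large_fiber_of_sum_abs_le (powerset_nonempty J)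
    (fun S i => round (signedSum (A i) J S / (2 * Δ))) hL0 hL hmean
  refine ⟨S, mem_powerset.1 hS, le_trans ?_ hfib⟩
  rw [card_powerset, Nat.cast_pow, Nat.cast_two, hcard]
  gcongr
  calc r ^ 2 * (#J : ℝ) * (L * (1 / (432 * r ^ 3)) + 4 * Real.exp (-L))
      = (#J : ℝ) * (r ^ 2 * (L * (1 / (432 * r ^ 3)) + 4 * Real.exp (-L))) := by ring
    _ ≤ (#J : ℝ) * (1 / 8) := by gcongr
    _ = (#J : ℝ) / 8 := by ring

lemma exists_partial_coloring [DecidableEq ι] (hA : ∀ i j, |A i j| ≤ 1) {J : Finset ι}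
    (hJ : J.Nonempty) (hJκ : #J ≤ Fintype.card κ) :
    ∃ S ⊆ J, ∃ S' ⊆ J, (#J : ℝ) / 8 ≤ #(symmDiff S S') ∧ ∀ i,
      |∑ j ∈ S, A i j - ∑ j ∈ S', A i j| ≤
        6 * (Fintype.card κ : ℝ) ^ (3 / 8 : ℝ) * (#J : ℝ) ^ (1 / 8 : ℝ) := by
  have hp0 : (0 : ℝ) < #J := Nat.cast_pos.2 hJ.card_pos
  have hpn : (#J : ℝ) ≤ Fintype.card κ := Nat.cast_le.2 hJκ
  have hn0 : (0 : ℝ) < Fintype.card κ := hp0.trans_le hpn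
  have hratio : (Fintype.card κ : ℝ) = √(Fintype.card κ / #J) ^ 2 * #J := by
    rw [Real.sq_sqrt (by positivity), div_mul_cancel₀ _ hp0.ne']
  have hΔ0 : 0 < 6 * (Fintype.card κ : ℝ) ^ (3 / 8 : ℝ) * (#J : ℝ) ^ (1 / 8 : ℝ) :=
    mul_pos (mul_pos (by norm_num) (Real.rpow_pos_of_pos hn0 _)) (Real.rpow_pos_of_pos hp0 _)
  obtain ⟨S, hS, hfib⟩ := exists_large_round_fiber hA
    (Real.one_le_sqrt.2 ((one_le_div hp0).2 hpn)) hratio hΔ0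
    (mul_rpow_mul_rpow_pow_four 6 hn0.le hp0)
  obtain ⟨S', hS', hfar⟩ := exists_large_symmDiff hJ hS (filter_subset _ _) hfib
  obtain ⟨hS'J, hround⟩ := mem_filter.1 hS'
  exact ⟨S, hS, S', mem_powerset.1 hS'J, hfar, fun i =>
    abs_sum_sub_sum_le_of_round_eq hΔ0 (congrFun hround i).symm⟩

lemma exists_coloring_of_card_le (hA : ∀ i j, |A i j| ≤ 1) (J : Finset ι)
    (hJκ : #J ≤ Fintype.card κ) :
    ∃ P ⊆ J, ∀ i, |signedSum (A i) J P| ≤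
      384 * (Fintype.card κ : ℝ) ^ (3 / 8 : ℝ) * (#J : ℝ) ^ (1 / 8 : ℝ) := by
  induction J using Finset.strongInduction with
  | H J ih =>
    rcases J.eq_empty_or_nonempty with rfl | hJ
    · exact ⟨∅, subset_rfl, fun i => by simp [signedSum]⟩
    obtain ⟨S, hS, S', hS', hfar, hsum⟩ := exists_partial_coloring hA hJ hJκ
    have hDJ : symmDiff S S' ⊆ J := symmDiff_le_sup.trans (sup_le hS hS')
    have hD : (symmDiff S S').Nonempty := by
      rw [← card_pos, ← Nat.cast_pos (α := ℝ)]
      have : (0 : ℝ) < #J := Nat.cast_pos.2 hJ.card_pos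
      linarith
    obtain ⟨P, hP, hPsum⟩ :=
      ih (J \ symmDiff S S') (sdiff_ssubset hDJ hD) ((card_le_card sdiff_subset).trans hJκ)
    have hshrink : (#(J \ symmDiff S S') : ℝ) ^ (1 / 8 : ℝ) ≤ 63 / 64 * (#J : ℝ) ^ (1 / 8 : ℝ) := by
      refine rpow_one_eighth_le (Nat.cast_nonneg _) ?_
      rw [card_sdiff_of_subset hDJ, Nat.cast_sub (card_le_card hDJ)]
      linarith
    refine ⟨P ∪ S \ S',
      union_subset (hP.trans sdiff_subset) (sdiff_subset.trans hS), fun i => ?_⟩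
    rw [signedSum_union_sdiff (A i) hS hS' hP]
    set a := (Fintype.card κ : ℝ) ^ (3 / 8 : ℝ)
    set b := (#J : ℝ) ^ (1 / 8 : ℝ)
    calc |signedSum (A i) (J \ symmDiff S S') P + (∑ j ∈ S, A i j - ∑ j ∈ S', A i j)|
        ≤ 384 * a * (#(J \ symmDiff S S') : ℝ) ^ (1 / 8 : ℝ) + 6 * a * b :=
          (abs_add_le _ _).trans (add_le_add (hPsum i) (hsum i))
      _ ≤ 384 * a * (63 / 64 * b) + 6 * a * b := by gcongr
      _ = 384 * a * b := by ring

lemma exists_coloring_le_sqrt (hA : ∀ i j, |A i j| ≤ 1) (J : Finset ι)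
    (hJκ : #J ≤ Fintype.card κ) :
    ∃ P ⊆ J, ∀ i, |signedSum (A i) J P| ≤ 384 * √(Fintype.card κ) := by
  obtain ⟨P, hP, hsum⟩ := exists_coloring_of_card_le hA J hJκ
  refine ⟨P, hP, fun i => (hsum i).trans ?_⟩
  set n := (Fintype.card κ : ℝ)
  calc 384 * n ^ (3 / 8 : ℝ) * (#J : ℝ) ^ (1 / 8 : ℝ)
      ≤ 384 * n ^ (3 / 8 : ℝ) * n ^ (1 / 8 : ℝ) := by
        gcongr
        exact Nat.cast_le.2 hJκ
    _ = 384 * √n := by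
        rw [mul_assoc, ← Real.rpow_add_of_nonneg (by positivity) (by norm_num) (by norm_num),
          Real.sqrt_eq_rpow]
        norm_num

end Coloring

section LinearDiscrepancy

variable {κ ι : Type*} {A : κ → ι → ℝ} {F : Finset ι} {D : ℝ}

-- Recolouring the symmetric difference of `Q` and `P` rounds the half-integral point `(Q + P) / 2`.
lemma sum_inter_union_eq [DecidableEq ι] (a : ι → ℝ) {Q P R : Finset ι} (hR : R ⊆ symmDiff Q P) :
    2 * ∑ j ∈ Q ∩ P ∪ R, a j =
      ∑ j ∈ Q, a j + ∑ j ∈ P, a j + signedSum a (symmDiff Q P) R := by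
  have hdisj : Disjoint (Q ∩ P) R :=
    disjoint_of_subset_right hR (disjoint_symmDiff_inf Q P).symm
  have hsplit : ∑ j ∈ symmDiff Q P, a j = ∑ j ∈ Q \ P, a j + ∑ j ∈ P \ Q, a j :=
    sum_union disjoint_sdiff_sdiff
  have hQ := sum_inter_add_sum_sdiff Q P a
  have hP := sum_inter_add_sum_sdiff P Q a
  rw [inter_comm] at hP
  rw [signedSum, sum_union hdisj]
  linarith

lemma exists_rounding_approx (hD : ∀ J ⊆ F, ∃ P ⊆ J, ∀ i, |signedSum (A i) J P| ≤ D) (k : ℕ)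
    {y : ι → ℝ} (hy : ∀ j ∈ F, y j ∈ Set.Icc (0 : ℝ) 1) :
    ∃ P ⊆ F, ∀ i, |∑ j ∈ F, A i j * y j - ∑ j ∈ P, A i j| ≤ D + (∑ j ∈ F, |A i j|) / 2 ^ k := by
  induction k generalizing y with
  | zero =>
    obtain ⟨P, -, hP⟩ := hD ∅ (empty_subset F)
    refine ⟨∅, empty_subset F, fun i => ?_⟩
    have hD0 : 0 ≤ D := (abs_nonneg _).trans (hP i)
    have htriv : |∑ j ∈ F, A i j * y j| ≤ ∑ j ∈ F, |A i j| :=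
      (abs_sum_le_sum_abs _ _).trans <| sum_le_sum fun j hj => by
        rw [abs_mul, abs_of_nonneg (hy j hj).1]
        exact mul_le_of_le_one_right (abs_nonneg _) (hy j hj).2
    rw [sum_empty, sub_zero, pow_zero, div_one]
    linarith
  | succ k ih =>
    -- `Q` collects the leading binary digits of `y`; the remaining digits are rounded first.
    set Q := {j ∈ F | 1 / 2 ≤ y j} with hQ
    obtain ⟨P, hPF, hP⟩ := ih (y := fun j => 2 * y j - if 1 / 2 ≤ y j then 1 else 0) fun j hj => by
      have := hy j hj
      rw [Set.mem_Icc] at this ⊢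
      split_ifs <;> constructor <;> linarith
    have hQF : Q ⊆ F := filter_subset _ _
    obtain ⟨R, hR, hsum⟩ := hD (symmDiff Q P) (symmDiff_le_sup.trans (sup_le hQF hPF))
    refine ⟨Q ∩ P ∪ R, union_subset (inter_subset_left.trans hQF)
      (hR.trans (symmDiff_le_sup.trans (sup_le hQF hPF))), fun i => ?_⟩
    have hdigits : ∑ j ∈ F, A i j * (2 * y j - if 1 / 2 ≤ y j then 1 else 0) =
        2 * ∑ j ∈ F, A i j * y j - ∑ j ∈ Q, A i j := by
      simp only [mul_sub, sum_sub_distrib, mul_ite, mul_one, mul_zero, hQ, sum_filter, mul_sum,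
        mul_left_comm]
    have hround := hP i
    rw [hdigits] at hround
    have hcombine : 2 * (∑ j ∈ F, A i j * y j - ∑ j ∈ Q ∩ P ∪ R, A i j) =
        (2 * ∑ j ∈ F, A i j * y j - ∑ j ∈ Q, A i j - ∑ j ∈ P, A i j) -
          signedSum (A i) (symmDiff Q P) R := by
      linarith [sum_inter_union_eq (A i) hR]
    have htwo := (abs_sub _ _).trans (add_le_add hround (hsum i))
    rw [← hcombine, abs_mul, abs_two] at htwo
    rw [pow_succ, ← div_div]
    linarith

-- Only finitely many vertices are available, so one of them attains the limiting bound.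
lemma exists_rounding (hD : ∀ J ⊆ F, ∃ P ⊆ J, ∀ i, |signedSum (A i) J P| ≤ D) {y : ι → ℝ}
    (hy : ∀ j ∈ F, y j ∈ Set.Icc (0 : ℝ) 1) :
    ∃ P ⊆ F, ∀ i, |∑ j ∈ F, A i j * y j - ∑ j ∈ P, A i j| ≤ D := by
  by_contra! hfail
  have hev : ∀ᶠ k : ℕ in Filter.atTop, ∀ P ∈ F.powerset, ∃ i,
      D + (∑ j ∈ F, |A i j|) / 2 ^ k < |∑ j ∈ F, A i j * y j - ∑ j ∈ P, A i j| := by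
    rw [Filter.eventually_all_finset]
    intro P hP
    obtain ⟨i, hi⟩ := hfail P (mem_powerset.1 hP)
    have hlim : Filter.Tendsto (fun k : ℕ => D + (∑ j ∈ F, |A i j|) / 2 ^ k) Filter.atTop
        (nhds D) := by
      simpa using (tendsto_const_nhds.div_atTop
        (tendsto_pow_atTop_atTop_of_one_lt (one_lt_two (α := ℝ)))).const_add D
    exact (hlim.eventually_lt_const hi).mono fun k hk => ⟨i, hk⟩
  obtain ⟨k, hk⟩ := hev.exists
  obtain ⟨P, hPF, hP⟩ := exists_rounding_approx hD k hy
  obtain ⟨i, hi⟩ := hk P (mem_powerset.2 hPF)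
  exact (hi.trans_le (hP i)).false

lemma exists_rounding_of_fractional [Fintype ι] {y : ι → ℝ} (hy : y ∈ Set.Icc 0 1)
    (hD : ∀ J ⊆ ({j | y j ≠ 0 ∧ y j ≠ 1} : Finset ι), ∃ P ⊆ J, ∀ i, |signedSum (A i) J P| ≤ D) :
    ∃ P : Finset ι, ∀ i, |∑ j, A i j * y j - ∑ j ∈ P, A i j| ≤ D := by
  obtain ⟨P, hPF, hP⟩ := exists_rounding hD fun j _ => ⟨hy.1 j, hy.2 j⟩
  have hdisj : Disjoint P ({j | y j = 1} : Finset ι) :=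
    disjoint_of_subset_left hPF (disjoint_filter.2 fun j _ hj => hj.2)
  refine ⟨P ∪ ({j | y j = 1} : Finset ι), fun i => ?_⟩
  have hsplit : ∑ j, A i j * y j =
      ∑ j with y j ≠ 0 ∧ y j ≠ 1, A i j * y j + ∑ j with y j = 1, A i j := by
    rw [sum_filter, sum_filter, ← sum_add_distrib]
    refine sum_congr rfl fun j _ => ?_
    by_cases h0 : y j = 0
    · simp [h0]
    · by_cases h1 : y j = 1 <;> simp [h0, h1]
  rw [hsplit, sum_union hdisj, add_sub_add_right_eq_sub]
  exact hP i

end LinearDiscrepancy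

section FewFractional

variable {ι : Type*}

lemma eventually_add_smul_mem_Icc [Finite ι] {y v : ι → ℝ} (hy : y ∈ Set.Icc 0 1)
    (hv : ∀ j, y j = 0 ∨ y j = 1 → v j = 0) :
    ∀ᶠ t in nhds (0 : ℝ), y + t • v ∈ Set.Icc 0 1 := by
  have hcoord : ∀ᶠ t in nhds (0 : ℝ), ∀ j, y j + t * v j ∈ Set.Icc (0 : ℝ) 1 := by
    refine Filter.eventually_all.2 fun j => ?_
    by_cases hj : y j = 0 ∨ y j = 1
    · refine Filter.Eventually.of_forall fun t => ?_
      rw [hv j hj, mul_zero, add_zero]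
      exact ⟨hy.1 j, hy.2 j⟩
    · rw [not_or] at hj
      have hlim : Filter.Tendsto (fun t : ℝ => y j + t * v j) (nhds 0) (nhds (y j)) :=
        Continuous.tendsto' (by fun_prop) _ _ (by simp)
      exact hlim.eventually (Icc_mem_nhds ((hy.1 j).lt_of_ne' hj.1) ((hy.2 j).lt_of_ne hj.2))
  exact hcoord.mono fun t ht => ⟨fun j => (ht j).1, fun j => (ht j).2⟩

variable {E : Type*} [AddCommGroup E] [Module ℝ E] [Module.Finite ℝ E]

lemma exists_ne_zero_map_eq_zero (f : (ι → ℝ) →ₗ[ℝ] E) {F : Finset ι}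
    (hF : Module.finrank ℝ E < #F) : ∃ v ≠ 0, f v = 0 ∧ ∀ j ∉ F, v j = 0 := by
  have hker := LinearMap.ker_ne_bot_of_finrank_lt
    (f := f ∘ₗ Function.ExtendByZero.linearMap ℝ ((↑) : F → ι)) (by simpa using hF)
  obtain ⟨u, hu, hu0⟩ := (Submodule.ne_bot_iff _).1 hker
  refine ⟨Function.extend ((↑) : F → ι) u 0, fun h => hu0 ?_, LinearMap.mem_ker.1 hu,
    fun j hj => ?_⟩
  · exact Function.extend_injective Subtype.val_injective (0 : ι → ℝ)
      (h.trans (Function.extend_zero _).symm)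
  · exact Function.extend_apply' _ _ _ fun ⟨k, hk⟩ => hj (hk ▸ k.2)

variable [Fintype ι]

lemma card_fractional_le_of_mem_extremePoints (f : (ι → ℝ) →ₗ[ℝ] E) {y y₀ : ι → ℝ}
    (hy : y ∈ (Set.Icc 0 1 ∩ {z | f z = f y₀}).extremePoints ℝ) :
    #{j | y j ≠ 0 ∧ y j ≠ 1} ≤ Module.finrank ℝ E := by
  obtain ⟨⟨hyI, hyf⟩, hext⟩ := hy
  by_contra! hcard
  obtain ⟨v, hv0, hfv, hv⟩ := exists_ne_zero_map_eq_zero f hcard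
  have hmem : ∀ᶠ t in nhds (0 : ℝ), y + t • v ∈ Set.Icc 0 1 ∩ {z | f z = f y₀} := by
    have hsupp : ∀ j, y j = 0 ∨ y j = 1 → v j = 0 := fun j hj =>
      hv j fun hjF => hj.elim (mem_filter.1 hjF).2.1 (mem_filter.1 hjF).2.2
    refine (eventually_add_smul_mem_Icc hyI hsupp).mono fun t ht => ⟨ht, ?_⟩
    rw [Set.mem_ofPred_eq, map_add, map_smul, hfv, smul_zero, add_zero]
    exact hyf
  have hreflect : Filter.Tendsto (fun t : ℝ => -t) (nhds 0) (nhds 0) :=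
    Continuous.tendsto' continuous_neg _ _ neg_zero
  obtain ⟨t, ⟨hpos, hneg⟩, ht0⟩ :=
    (((hmem.and (hreflect.eventually hmem)).filter_mono nhdsWithin_le_nhds).and
      (self_mem_nhdsWithin (s := Set.Ioi 0))).exists
  have hmid : y ∈ openSegment ℝ (y + t • v) (y + -t • v) :=
    ⟨1 / 2, 1 / 2, by norm_num, by norm_num, by norm_num, by module⟩
  have := hext hpos hneg hmid
  simp [hv0, ht0.ne'] at this

lemma exists_few_fractional (f : (ι → ℝ) →ₗ[ℝ] E) {y₀ : ι → ℝ} (hy₀ : y₀ ∈ Set.Icc 0 1) :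
    ∃ y ∈ Set.Icc (0 : ι → ℝ) 1, f y = f y₀ ∧
      #{j | y j ≠ 0 ∧ y j ≠ 1} ≤ Module.finrank ℝ E := by
  have hclosed : IsClosed {z | f z = f y₀} := by
    have hker := (LinearMap.ker f).closed_of_finiteDimensional.preimage
      (continuous_sub_right y₀)
    simpa [Set.preimage, LinearMap.sub_mem_ker_iff, sub_eq_zero] using hker
  obtain ⟨y, hy⟩ := (isCompact_Icc.inter_right hclosed).extremePoints_nonempty ⟨y₀, hy₀, rfl⟩
  exact ⟨y, hy.1.1, hy.1.2, card_fractional_le_of_mem_extremePoints f hy⟩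

end FewFractional

lemma sum_mul_sign_eq_signedSum {ι : Type*} [Fintype ι] (a : ι → ℝ) (P : Finset ι) :
    ∑ j, a j * (if j ∈ P then 1 else -1) = signedSum a univ P := by
  have hsign : ∀ j, a j * (if j ∈ P then 1 else -1) = 2 * (if j ∈ P then a j else 0) - a j :=
    fun j => by split_ifs <;> ring
  simp only [hsign, sum_sub_distrib, ← mul_sum, sum_ite_mem, univ_inter, signedSum]

theorem spencer_many_columns_general {κ ι : Type*} [Fintype κ] [Fintype ι] (A : Matrix κ ι ℝ)
    (hA : ∀ i j, A i j ∈ Set.Icc (-1 : ℝ) 1) :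
    ∃ x : ι → ℝ, (∀ j, x j = -1 ∨ x j = 1) ∧ ∀ i, |A.mulVec x i| ≤ 768 * √(Fintype.card κ) := by
  have hhalf : (fun _ : ι => (1 / 2 : ℝ)) ∈ Set.Icc 0 1 :=
    ⟨fun _ => by norm_num, fun _ => by norm_num⟩
  obtain ⟨y, hy, hAy, hfrac⟩ := exists_few_fractional A.mulVecLin hhalf
  rw [Module.finrank_fintype_fun_eq_card] at hfrac
  obtain ⟨P, hP⟩ := exists_rounding_of_fractional hy fun J hJ =>
    exists_coloring_le_sqrt (fun i j => abs_le.2 (hA i j)) J ((card_le_card hJ).trans hfrac)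
  refine ⟨fun j => if j ∈ P then 1 else -1, fun j => (ite_eq_or_eq _ _ _).symm, fun i => ?_⟩
  have hrow : ∑ j, A i j * y j = (∑ j, A i j) / 2 := by
    simpa [Matrix.mulVec, dotProduct, ← sum_mul, div_eq_mul_inv] using congrFun hAy i
  have hsum : A.mulVec (fun j => if j ∈ P then 1 else -1) i =
      -2 * (∑ j, A i j * y j - ∑ j ∈ P, A i j) := by
    rw [hrow, Matrix.mulVec, dotProduct, sum_mul_sign_eq_signedSum, signedSum]
    ring
  rw [hsum, abs_mul, abs_neg, abs_two]
  linarith [hP i]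

/-- Spencer's theorem in the regime `T > n`: for any `A ∈ [-1,1]^{n×T}` there is a sign
vector `x ∈ {-1,+1}^T` with `‖Ax‖_∞ ≤ C √n`. -/
theorem spencer_many_columns :
    ∃ C : ℝ, 0 < C ∧
      ∀ (n T : ℕ), 0 < n → n < T →
        ∀ A : Matrix (Fin n) (Fin T) ℝ, (∀ i j, A i j ∈ Set.Icc (-1 : ℝ) 1) →
          ∃ x : Fin T → ℝ, (∀ j, x j = -1 ∨ x j = 1) ∧
            ∀ i, |A.mulVec x i| ≤ C * Real.sqrt (n : ℝ) :=
  ⟨768, by norm_num, fun n T _ _ A hA => by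
    simpa only [Fintype.card_fin] using spencer_many_columns_general A hA⟩
end

section
/- There exist universal constants C, c₁, c₂ > 0 and an integer n₀ such that for every n ≥ n₀ and every integer T with ln n ≤ T ≤ n/C, there exists a matrix A ∈ {−1,+1}^{n×n} with the following two properties: (1) letting v ∈ ℝⁿ be the vector with all coordinates equal to 1/n, every coordinate of Av is at least −c₁/√n; (2) for every vector w ∈ ℝⁿ with ‖w‖₀ ≤ T and ‖w‖₁ = 1, it holds that min_{1≤i≤n} (Aw)_i ≤ −c₂·√(ln(n/T)/T). -/
open Finset
open scoped Classical

/-!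
The rows of `A` are chosen independently and uniformly among the sign vectors `ε` with
`∑ ε_j ≥ -√n`, which gives the first property. Fix a `T`-sparse `w` with `‖w‖₁ = 1`, and put
`L = ln(n/T)/16`. Choosing `l` such that `exp (-l⟨ε, w⟩)` has mean `exp L`, the Paley–Zygmund
inequality shows `⟨ε, w⟩ < -√(L/T)/4` with probability at least a constant times `exp (-2L)`; as
flipping the signs outside the support of `w` preserves `⟨ε, w⟩`, this survives the conditioning on
`∑ ε_j ≥ -√n`.

To handle all `w` at once, fix also a support of size at most `T` and a sign pattern; with these,
the `w` violating the second property form an intersection of `n` independent convex sets in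
dimension at most `T`. By Helly's theorem, if it is nonempty, then its point of least norm is also
the point of least norm for some `T + 1` of these sets. Given the corresponding rows, the point is
fixed, and each remaining row, being independent of it, fails to separate it with probability at
most `1 - exp (-2L)/16`. A union bound over supports, sign patterns and sets of `T + 1` rows
finishes the proof.
-/

section Rademacher

variable {ι : Type*}

/-- The real `±1` vector with sign pattern `ε`; for uniformly distributed `ε` this is a Rademacher
vector. -/
def signVec (ε : ι → ℤˣ) : ι → ℝ := fun j => ((ε j : ℤ) : ℝ)

theorem signVec_eq_neg_one_or_one (ε : ι → ℤˣ) (j : ι) : signVec ε j = -1 ∨ signVec ε j = 1 := by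
  rcases Int.units_eq_one_or (ε j) with h | h <;> simp [signVec, h]

variable [Fintype ι]

theorem sum_exp_signVec_dotProduct [DecidableEq ι] (u : ι → ℝ) :
    ∑ ε : ι → ℤˣ, Real.exp (signVec ε ⬝ᵥ u) = 2 ^ Fintype.card ι * ∏ j, Real.cosh (u j) := by
  calc ∑ ε : ι → ℤˣ, Real.exp (signVec ε ⬝ᵥ u)
      = ∑ ε : ι → ℤˣ, ∏ j, Real.exp (((ε j : ℤ) : ℝ) * u j) := by
        simp only [dotProduct, signVec, Real.exp_sum]
    _ = ∏ j, ∑ s : ℤˣ, Real.exp (((s : ℤ) : ℝ) * u j) :=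
        (Fintype.prod_sum fun j (s : ℤˣ) => Real.exp (((s : ℤ) : ℝ) * u j)).symm
    _ = ∏ j, 2 * Real.cosh (u j) := by
        simp [UnitsInt.univ, Real.cosh_eq, mul_div_cancel₀]
    _ = 2 ^ Fintype.card ι * ∏ j, Real.cosh (u j) := by
        rw [prod_mul_distrib, prod_const, card_univ]

/-- Hoeffding's inequality for Rademacher sums, in counting form. -/
theorem card_signVec_dotProduct_lt_le [DecidableEq ι] (u : ι → ℝ) {V r : ℝ} (hV : 0 < V)
    (hr : 0 ≤ r) (hu : ∑ j, u j ^ 2 ≤ V) :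
    (#{ε : ι → ℤˣ | signVec ε ⬝ᵥ u < -r} : ℝ) ≤
      2 ^ Fintype.card ι * Real.exp (-(r ^ 2 / (2 * V))) := by
  set l := r / V with hl
  have hl0 : 0 ≤ l := by positivity
  have hmgf : ∏ j, Real.cosh ((-l • u) j) ≤ Real.exp (l ^ 2 * V / 2) :=
    calc ∏ j, Real.cosh ((-l • u) j) ≤ ∏ j, Real.exp ((-l • u) j ^ 2 / 2) :=
          prod_le_prod (fun _ _ => (Real.cosh_pos _).le) fun _ _ => Real.cosh_le_exp_half_sq _
      _ = Real.exp (l ^ 2 * (∑ j, u j ^ 2) / 2) := by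
          simp [← Real.exp_sum, mul_sum, sum_div, mul_pow]
      _ ≤ Real.exp (l ^ 2 * V / 2) := by gcongr
  have hmarkov : (#{ε : ι → ℤˣ | signVec ε ⬝ᵥ u < -r} : ℝ) * Real.exp (l * r) ≤
      2 ^ Fintype.card ι * Real.exp (l ^ 2 * V / 2) :=
    calc (#{ε : ι → ℤˣ | signVec ε ⬝ᵥ u < -r} : ℝ) * Real.exp (l * r)
        ≤ ∑ ε : ι → ℤˣ with signVec ε ⬝ᵥ u < -r, Real.exp (signVec ε ⬝ᵥ (-l • u)) := by
          rw [← nsmul_eq_mul]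
          refine card_nsmul_le_sum _ _ _ fun ε hε => Real.exp_le_exp.2 ?_
          rw [dotProduct_smul, smul_eq_mul]
          nlinarith [(mem_filter.1 hε).2]
      _ ≤ ∑ ε : ι → ℤˣ, Real.exp (signVec ε ⬝ᵥ (-l • u)) :=
          sum_le_sum_of_subset_of_nonneg (subset_univ _) fun _ _ _ => (Real.exp_pos _).le
      _ ≤ 2 ^ Fintype.card ι * Real.exp (l ^ 2 * V / 2) := by
          rw [sum_exp_signVec_dotProduct]
          gcongr
  have hexp : -(r ^ 2 / (2 * V)) = l ^ 2 * V / 2 - l * r := by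
    rw [hl]
    field_simp
    ring
  rwa [hexp, Real.exp_sub, ← mul_div_assoc, le_div_iff₀ (Real.exp_pos _)]

/-- The Paley–Zygmund inequality, in counting form. -/
theorem sq_sum_sub_card_mul_le {Ω : Type*} {s : Finset Ω} {Z : Ω → ℝ} {c : ℝ} (hc : 0 ≤ c)
    (hcZ : #s * c ≤ ∑ a ∈ s, Z a) :
    (∑ a ∈ s, Z a - #s * c) ^ 2 ≤ #{a ∈ s | c < Z a} * ∑ a ∈ s, Z a ^ 2 := by
  have hsmall : ∑ a ∈ s with ¬ c < Z a, Z a ≤ #s * c :=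
    calc ∑ a ∈ s with ¬ c < Z a, Z a ≤ #{a ∈ s | ¬ c < Z a} * c := by
          rw [← nsmul_eq_mul]
          exact sum_le_card_nsmul _ _ _ fun a ha => not_lt.1 (mem_filter.1 ha).2
      _ ≤ #s * c := by
          gcongr
          exact filter_subset _ _
  have hlarge : ∑ a ∈ s, Z a - #s * c ≤ ∑ a ∈ s with c < Z a, Z a := by
    linarith [sum_filter_add_sum_filter_not s (fun a => c < Z a) Z]
  calc (∑ a ∈ s, Z a - #s * c) ^ 2 ≤ (∑ a ∈ s with c < Z a, Z a) ^ 2 := by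
        gcongr
    _ ≤ #{a ∈ s | c < Z a} * ∑ a ∈ s with c < Z a, Z a ^ 2 := sq_sum_le_card_mul_sum_sq
    _ ≤ #{a ∈ s | c < Z a} * ∑ a ∈ s, Z a ^ 2 := by
        gcongr
        exact filter_subset _ _

theorem cosh_two_mul_le_cosh_pow_four (x : ℝ) : Real.cosh (2 * x) ≤ Real.cosh x ^ 4 := by
  rw [Real.cosh_two_mul, Real.sinh_sq]
  nlinarith [sq_nonneg (Real.cosh x ^ 2 - 1)]

theorem le_card_half_prod_cosh_lt_exp [DecidableEq ι] (u : ι → ℝ) :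
    2 ^ Fintype.card ι / (4 * (∏ j, Real.cosh (u j)) ^ 2) ≤
      (#{ε : ι → ℤˣ | (∏ j, Real.cosh (u j)) / 2 < Real.exp (signVec ε ⬝ᵥ u)} : ℝ) := by
  set M := ∏ j, Real.cosh (u j) with hM
  set K : ℝ := 2 ^ Fintype.card ι with hK
  have hM0 : 0 < M := prod_pos fun j _ => Real.cosh_pos _
  have hK0 : 0 < K := by positivity
  have hcard : (#(univ : Finset (ι → ℤˣ)) : ℝ) = K := by simp [hK]
  have hfirst : ∑ ε : ι → ℤˣ, Real.exp (signVec ε ⬝ᵥ u) = K * M := sum_exp_signVec_dotProduct u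
  have hsecond : ∑ ε : ι → ℤˣ, Real.exp (signVec ε ⬝ᵥ u) ^ 2 ≤ K * M ^ 4 :=
    calc ∑ ε : ι → ℤˣ, Real.exp (signVec ε ⬝ᵥ u) ^ 2
        = ∑ ε : ι → ℤˣ, Real.exp (signVec ε ⬝ᵥ (2 : ℝ) • u) := by
          simp [← Real.exp_nat_mul]
      _ = K * ∏ j, Real.cosh (2 * u j) := sum_exp_signVec_dotProduct _
      _ ≤ K * ∏ j, Real.cosh (u j) ^ 4 := by
          gcongr
          exact cosh_two_mul_le_cosh_pow_four _
      _ = K * M ^ 4 := by rw [prod_pow]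
  have hpz := sq_sum_sub_card_mul_le (s := univ) (Z := fun ε : ι → ℤˣ => Real.exp (signVec ε ⬝ᵥ u))
    (c := M / 2) (by positivity) (by rw [hcard, hfirst]; nlinarith)
  rw [hcard, hfirst] at hpz
  rw [show K / (4 * M ^ 2) = (K * M - K * (M / 2)) ^ 2 / (K * M ^ 4) by field_simp; ring,
    div_le_iff₀ (by positivity)]
  exact hpz.trans (by gcongr)

theorem exp_mul_sub_sq_le_cosh {α : ℝ} (hα : |α| ≤ 1) (x : ℝ) :
    Real.exp (α * x - α ^ 2) ≤ Real.cosh x := by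
  obtain ⟨hα_neg, hα_pos⟩ := abs_le.1 hα
  -- Jensen's inequality for the mean `α * x - α ^ 2` of the points `±(x - α)`.
  have hconv := convexOn_exp.2 (Set.mem_univ (x - α)) (Set.mem_univ (-x + α))
    (by linarith : 0 ≤ (1 + α) / 2) (by linarith : 0 ≤ (1 - α) / 2) (by ring)
  have harg : ((1 + α) / 2) • (x - α) + ((1 - α) / 2) • (-x + α) = α * x - α ^ 2 := by
    simp only [smul_eq_mul]
    ring
  have hexp : ∀ b : ℝ, (1 + b) * Real.exp (-b) ≤ 1 := fun b => by
    rw [Real.exp_neg, ← div_eq_mul_inv, div_le_one (Real.exp_pos b), add_comm]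
    exact Real.add_one_le_exp b
  have hexp_neg : (1 - α) * Real.exp α ≤ 1 := by simpa [sub_eq_add_neg] using hexp (-α)
  rw [harg, sub_eq_add_neg x, Real.exp_add, Real.exp_add, smul_eq_mul, smul_eq_mul] at hconv
  rw [Real.cosh_eq]
  nlinarith [hexp α, Real.exp_pos x, Real.exp_pos (-x)]

theorem exp_le_prod_cosh {α : ℝ} (hα : |α| ≤ 1) (u : ι → ℝ) :
    Real.exp (α * ∑ j, |u j| - α ^ 2 * #{j | u j ≠ 0}) ≤ ∏ j, Real.cosh (u j) := by
  have hsum : α * ∑ j, |u j| - α ^ 2 * #{j | u j ≠ 0} =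
      ∑ j, (α * |u j| - if u j ≠ 0 then α ^ 2 else 0) := by
    rw [sum_sub_distrib, ← mul_sum, ← sum_filter, sum_const, nsmul_eq_mul, mul_comm (α ^ 2)]
  rw [hsum, Real.exp_sum]
  refine prod_le_prod (fun _ _ => (Real.exp_pos _).le) fun j _ => ?_
  by_cases hj : u j = 0
  · simp [hj]
  · rw [if_pos hj, ← Real.cosh_abs]
    exact exp_mul_sub_sq_le_cosh hα _

theorem exists_prod_cosh_mul_eq_exp {w : ι → ℝ} {T L : ℝ} (hw : ∑ j, |w j| = 1)
    (hwT : (#{j | w j ≠ 0} : ℝ) ≤ T) (hL : 0 < L) (hLT : L ≤ T) :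
    ∃ l, 0 < l ∧ l * √(L / T) ≤ 2 * L ∧ ∏ j, Real.cosh (l * w j) = Real.exp L := by
  have hT : 0 < T := hL.trans_le hLT
  set α := √(L / T) with hα
  have hα0 : 0 < α := by positivity
  have hα1 : |α| ≤ 1 := by
    rw [abs_of_pos hα0, hα, Real.sqrt_le_one]
    exact (div_le_one hT).2 hLT
  have hupper : Real.exp L ≤ ∏ j, Real.cosh (2 * L / α * w j) := by
    refine le_trans (Real.exp_le_exp.2 ?_) (exp_le_prod_cosh hα1 _)
    have hsupp : (#{j | 2 * L / α * w j ≠ 0} : ℝ) ≤ T := by simpa [hL.ne', hα0.ne'] using hwT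
    have hl1 : ∑ j, |2 * L / α * w j| = 2 * L / α := by
      simp only [abs_mul, ← mul_sum, hw, mul_one]
      exact abs_of_pos (by positivity)
    have hsq : α ^ 2 * T = L := by
      rw [hα, Real.sq_sqrt (by positivity), div_mul_cancel₀ _ hT.ne']
    have := mul_le_mul_of_nonneg_left hsupp (sq_nonneg α)
    rw [hl1, mul_div_cancel₀ _ hα0.ne']
    linarith
  obtain ⟨l, ⟨hl0, hl1⟩, hl⟩ := intermediate_value_Icc (f := fun l => ∏ j, Real.cosh (l * w j))
    (by positivity : 0 ≤ 2 * L / α) (by fun_prop) ⟨by simp [hL.le], hupper⟩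
  refine ⟨l, hl0.lt_of_ne' ?_, (le_div_iff₀ hα0).1 hl1, hl⟩
  rintro rfl
  exact hL.ne' (by simpa using hl.symm)

theorem le_card_signVec_dotProduct_lt [DecidableEq ι] {w : ι → ℝ} {T L : ℝ} (hw : ∑ j, |w j| = 1)
    (hwT : (#{j | w j ≠ 0} : ℝ) ≤ T) (hL : 2 * Real.log 2 ≤ L) (hLT : L ≤ T) :
    2 ^ Fintype.card ι * (Real.exp (-(2 * L)) / 4) ≤
      (#{ε : ι → ℤˣ | signVec ε ⬝ᵥ w < -(√(L / T) / 4)} : ℝ) := by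
  have hL0 : 0 < L := by linarith [Real.log_pos one_lt_two]
  obtain ⟨l, hl0, hl1, hl⟩ := exists_prod_cosh_mul_eq_exp hw hwT hL0 hLT
  have htilt := le_card_half_prod_cosh_lt_exp (-l • w)
  have hprod : ∏ j, Real.cosh ((-l • w) j) = Real.exp L := by simp [hl]
  have hpow : Real.exp (-(2 * L)) = (Real.exp L ^ 2)⁻¹ := by
    rw [Real.exp_neg, ← Real.exp_nat_mul, Nat.cast_ofNat]
  rw [hprod] at htilt
  calc 2 ^ Fintype.card ι * (Real.exp (-(2 * L)) / 4)
      = 2 ^ Fintype.card ι / (4 * Real.exp L ^ 2) := by rw [hpow]; field_simp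
    _ ≤ _ := htilt
    _ ≤ _ := by
        norm_cast
        refine card_le_card (monotone_filter_right _ fun ε _ hε => ?_)
        have hlog : L - Real.log 2 < -l * (signVec ε ⬝ᵥ w) := by
          rwa [← Real.exp_lt_exp, Real.exp_sub, Real.exp_log two_pos, ← smul_eq_mul (-l),
            ← dotProduct_smul]
        exact lt_of_mul_lt_mul_left (by linarith) hl0.le

end Rademacher

section Counting

theorem card_piFinset_filter_restrict_le {α κ : Type*} [Fintype κ] (R : Finset α) (I : Finset κ)
    (G : (I → α) → Finset α) {m : ℝ} (hG : ∀ g, #(G g) ≤ m) :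
    (#{f ∈ Fintype.piFinset fun _ : κ => R | ∀ i ∉ I, f i ∈ G (I.restrict f)} : ℝ) ≤
      m ^ (Fintype.card κ - #I) * #R ^ #I := by
  let pairs : Finset (Σ _ : I → α, {i // i ∉ I} → α) :=
    (Fintype.piFinset fun _ : I => R).sigma fun g => Fintype.piFinset fun _ => G g
  have hcompl : Fintype.card {i // i ∉ I} = Fintype.card κ - #I := by
    rw [Fintype.card_subtype_compl, Fintype.card_coe]
  have hinj :
      #{f ∈ Fintype.piFinset fun _ : κ => R | ∀ i ∉ I, f i ∈ G (I.restrict f)} ≤ #pairs := by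
    refine card_le_card_of_injOn (fun f => ⟨I.restrict f, fun i => f i⟩) (fun f hf => ?_)
      fun f _ f' _ h => funext fun i => ?_
    · simp_all [pairs]
    · obtain ⟨hI, hIc⟩ := Sigma.mk.inj h
      by_cases hi : i ∈ I
      · exact congrFun hI ⟨i, hi⟩
      · exact congrFun (eq_of_heq hIc) ⟨i, hi⟩
  calc (#{f ∈ Fintype.piFinset fun _ : κ => R | ∀ i ∉ I, f i ∈ G (I.restrict f)} : ℝ)
      ≤ #pairs := by exact_mod_cast hinj
    _ = ∑ g ∈ Fintype.piFinset fun _ : I => R, (#(G g) : ℝ) ^ (Fintype.card κ - #I) := by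
        simp [pairs, hcompl]
    _ ≤ ∑ _g ∈ Fintype.piFinset fun _ : I => R, m ^ (Fintype.card κ - #I) := by
        gcongr with g
        exact hG g
    _ = m ^ (Fintype.card κ - #I) * #R ^ #I := by simp [mul_comm]

theorem card_filter_card_le_le (ι : Type*) [Fintype ι] (k : ℕ) {x : ℝ} (hx : 1 ≤ x) :
    (#{s : Finset ι | #s ≤ k} : ℝ) ≤ x ^ k * Real.exp (Fintype.card ι / x) := by
  have : 0 < x := by positivity
  calc (#{s : Finset ι | #s ≤ k} : ℝ)
      ≤ ∑ s : Finset ι with #s ≤ k, x ^ k * x⁻¹ ^ #s := by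
        rw [← nsmul_one]
        refine card_nsmul_le_sum _ _ _ fun s hs => ?_
        rw [inv_pow, ← div_eq_mul_inv, one_le_div (by positivity)]
        exact pow_le_pow_right₀ hx (mem_filter.1 hs).2
    _ ≤ ∑ s : Finset ι, x ^ k * x⁻¹ ^ #s :=
        sum_le_sum_of_subset_of_nonneg (subset_univ _) fun _ _ _ => by positivity
    _ = x ^ k * (x⁻¹ + 1) ^ Fintype.card ι := by
        rw [← mul_sum, ← Fintype.sum_pow_mul_eq_add_pow]
        simp
    _ ≤ x ^ k * Real.exp x⁻¹ ^ Fintype.card ι := by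
        gcongr
        exact Real.add_one_le_exp _
    _ = x ^ k * Real.exp (Fintype.card ι / x) := by rw [← Real.exp_nat_mul, div_eq_mul_inv]

end Counting

section ConvexFamilies

variable {E κ : Type*}

theorem exists_card_le_isMinOn_biInter {𝕜 : Type*} [Field 𝕜] [LinearOrder 𝕜]
    [IsStrictOrderedRing 𝕜] [AddCommGroup E] [Module 𝕜 E] [FiniteDimensional 𝕜 E] [Finite κ]
    {F : κ → Set E} {g : E → 𝕜} {x : E} (hF : ∀ i, Convex 𝕜 (F i)) (hg : ConvexOn 𝕜 Set.univ g)
    (hx : IsMinOn g (⋂ i, F i) x) :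
    ∃ I : Finset κ, #I ≤ Module.finrank 𝕜 E + 1 ∧ IsMinOn g (⋂ i ∈ I, F i) x := by
  have := Fintype.ofFinite κ
  -- Otherwise Helly's theorem applies to the sets `F i` together with `{y | g y < g x}`.
  by_contra! hI
  let F' : Option κ → Set E := fun o => o.elim {y | g y < g x} F
  have hF' : ∀ o ∈ (univ : Finset (Option κ)), Convex 𝕜 (F' o) := by
    rintro (_ | i) -
    · simpa [F'] using hg.convex_lt (g x)
    · exact hF i
  obtain ⟨y, hy⟩ := Convex.helly_theorem' hF' fun J _ hJ => by
    obtain ⟨y, hy, hyx⟩ : ∃ y ∈ ⋂ i ∈ J.eraseNone, F i, g y < g x := by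
      simpa [isMinOn_iff] using hI J.eraseNone ((card_eraseNone_le J).trans hJ)
    refine ⟨y, Set.mem_iInter₂.2 ?_⟩
    rintro (_ | i) hi
    · exact hyx
    · exact Set.mem_iInter₂.1 hy i (by simpa using hi)
  have hmem : ∀ o, y ∈ F' o := fun o => Set.mem_iInter₂.1 hy o (mem_univ o)
  exact (hmem none).not_ge (hx (Set.mem_iInter.2 fun i => hmem (some i)))

theorem exists_mem_isMinOn_norm [NormedAddCommGroup E] [ProperSpace E] {K : Set E}
    (hK : IsClosed K) (hne : K.Nonempty) : ∃ x ∈ K, IsMinOn norm K x := by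
  obtain ⟨x, hxK, hx⟩ := hK.exists_infDist_eq_dist hne 0
  refine ⟨x, hxK, fun y hy => ?_⟩
  simpa [hx] using Metric.infDist_le_dist_of_mem (x := (0 : E)) hy

theorem eq_of_isMinOn_norm [NormedAddCommGroup E] [NormedSpace ℝ E] [StrictConvexSpace ℝ E]
    {K : Set E} {x y : E} (hK : Convex ℝ K) (hxK : x ∈ K) (hx : IsMinOn norm K x) (hyK : y ∈ K)
    (hy : IsMinOn norm K y) : x = y := by
  by_contra hne
  have hlt : ‖midpoint ℝ x y‖ < ‖x‖ := by
    simpa [midpoint_eq_smul_add] using (norm_midpoint_lt_iff (le_antisymm (hx hyK) (hy hxK))).2 hne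
  exact hlt.not_ge (hx (hK.midpoint_mem hxK hyK))

/-- The point of least norm of `K`, meaningful when `K` is a nonempty closed convex set in a
strictly convex finite-dimensional space; an arbitrary point if the minimum is not attained. -/
noncomputable def leastNormPoint [Norm E] [Nonempty E] (K : Set E) : E :=
  Classical.epsilon fun x => x ∈ K ∧ IsMinOn norm K x

theorem leastNormPoint_eq [NormedAddCommGroup E] [NormedSpace ℝ E] [StrictConvexSpace ℝ E]
    {K : Set E} {x : E} (hK : Convex ℝ K) (hxK : x ∈ K) (hx : IsMinOn norm K x) :
    leastNormPoint K = x :=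
  have hmin := Classical.epsilon_spec (p := fun y => y ∈ K ∧ IsMinOn norm K y) ⟨x, hxK, hx⟩
  eq_of_isMinOn_norm hK hmin.1 hmin.2 hxK hx

theorem exists_card_le_leastNormPoint_mem [NormedAddCommGroup E] [NormedSpace ℝ E]
    [StrictConvexSpace ℝ E] [FiniteDimensional ℝ E] [Finite κ] {F : κ → Set E}
    (hconv : ∀ i, Convex ℝ (F i)) (hclosed : ∀ i, IsClosed (F i)) (hne : (⋂ i, F i).Nonempty) :
    ∃ I : Finset κ, #I ≤ Module.finrank ℝ E + 1 ∧ ∀ i, leastNormPoint (⋂ i ∈ I, F i) ∈ F i := by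
  have := FiniteDimensional.proper_real E
  obtain ⟨x, hx, hmin⟩ := exists_mem_isMinOn_norm (isClosed_iInter hclosed) hne
  obtain ⟨I, hI, hminI⟩ := exists_card_le_isMinOn_biInter hconv convexOn_univ_norm hmin
  have hxF : ∀ i, x ∈ F i := Set.mem_iInter.1 hx
  rw [← leastNormPoint_eq (convex_iInter₂ fun i _ => hconv i)
    (Set.mem_iInter₂.2 fun i _ => hxF i) hminI] at hxF
  exact ⟨I, hI, hxF⟩

/-- A nonempty intersection of the `C (f i)` contains the least-norm point of the intersection of
some `d + 1` of them; given these, each of the other `C (f i)` independently contains that point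
with probability at most `q`. -/
theorem card_filter_nonempty_iInter_le {α : Type*} [NormedAddCommGroup E] [NormedSpace ℝ E]
    [StrictConvexSpace ℝ E] [FiniteDimensional ℝ E] [Fintype κ] {R : Finset α} {C : α → Set E}
    {d : ℕ} {q : ℝ} (hconv : ∀ a, Convex ℝ (C a)) (hclosed : ∀ a, IsClosed (C a))
    (hd : Module.finrank ℝ E ≤ d) (hq : q ∈ Set.Icc 0 1)
    (hC : ∀ x, (#{a ∈ R | x ∈ C a} : ℝ) ≤ q * #R) :
    (#{f ∈ Fintype.piFinset fun _ : κ => R | (⋂ i, C (f i)).Nonempty} : ℝ) ≤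
      #{I : Finset κ | #I ≤ d + 1} * (q ^ (Fintype.card κ - (d + 1)) * #R ^ Fintype.card κ) := by
  let G (I : Finset κ) (g : I → α) : Finset α := {a ∈ R | leastNormPoint (⋂ i, C (g i)) ∈ C a}
  let bad (I : Finset κ) : Finset (κ → α) :=
    {f ∈ Fintype.piFinset fun _ : κ => R | ∀ i ∉ I, f i ∈ G I (I.restrict f)}
  have hcover : ({f ∈ Fintype.piFinset fun _ : κ => R | (⋂ i, C (f i)).Nonempty} : Finset _) ⊆
      ({I : Finset κ | #I ≤ d + 1} : Finset _).biUnion bad := fun f hf => by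
    obtain ⟨hfR, hne⟩ := mem_filter.1 hf
    obtain ⟨I, hI, hleast⟩ := exists_card_le_leastNormPoint_mem (fun i => hconv (f i))
      (fun i => hclosed (f i)) hne
    refine mem_biUnion.2 ⟨I, by simpa using hI.trans (by lia), mem_filter.2 ⟨hfR, fun i _ => ?_⟩⟩
    refine mem_filter.2 ⟨Fintype.mem_piFinset.1 hfR i, ?_⟩
    simpa only [Finset.restrict, Set.iInter_subtype] using hleast i
  have hbad : ∀ I : Finset κ, #I ≤ d + 1 →
      (#(bad I) : ℝ) ≤ q ^ (Fintype.card κ - (d + 1)) * #R ^ Fintype.card κ := fun I hI =>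
    calc (#(bad I) : ℝ) ≤ (q * #R) ^ (Fintype.card κ - #I) * #R ^ #I :=
          card_piFinset_filter_restrict_le R I (G I) fun g => hC _
      _ = q ^ (Fintype.card κ - #I) * #R ^ Fintype.card κ := by
          rw [mul_pow, mul_assoc, pow_sub_mul_pow _ I.card_le_univ]
      _ ≤ q ^ (Fintype.card κ - (d + 1)) * #R ^ Fintype.card κ := by
          gcongr ?_ * _
          exact pow_le_pow_of_le_one hq.1 hq.2 (Nat.sub_le_sub_left hI _)
  calc (#{f ∈ Fintype.piFinset fun _ : κ => R | (⋂ i, C (f i)).Nonempty} : ℝ)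
      ≤ ∑ I : Finset κ with #I ≤ d + 1, (#(bad I) : ℝ) := by
        exact_mod_cast (card_le_card hcover).trans card_biUnion_le
    _ ≤ _ := by
        rw [← nsmul_eq_mul]
        exact sum_le_card_nsmul _ _ _ fun I hI => hbad I (mem_filter.1 hI).2

end ConvexFamilies

section SparseVectors

variable {α ι : Type*} [Fintype ι]

/-- The `T`-sparse vectors of unit `ℓ¹` norm. -/
def sparseUnitSphere (ι : Type*) [Fintype ι] (T : ℕ) : Set (ι → ℝ) :=
  {w | ∑ j, |w j| = 1 ∧ #{j | w j ≠ 0} ≤ T}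

/-- The vector supported in `S` with absolute values `u`, negative on `N` and positive elsewhere.
It is linear in `u`, and the vectors of `sparseUnitSphere ι T` are the values of these maps on
standard simplices; `u` lives in a Euclidean space because that norm is strictly convex. -/
noncomputable def signedExtension (S N : Finset ι) : EuclideanSpace ℝ S →ₗ[ℝ] (ι → ℝ) where
  toFun u j := if h : j ∈ S then (if j ∈ N then -1 else 1) * u ⟨j, h⟩ else 0
  map_add' u u' := by ext j; by_cases h : j ∈ S <;> simp [h, mul_add]
  map_smul' c u := by ext j; by_cases h : j ∈ S <;> simp [h, mul_left_comm]

theorem signedExtension_mem_sparseUnitSphere {S N : Finset ι} {T : ℕ} (hS : #S ≤ T)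
    {u : EuclideanSpace ℝ S} (hu : ⇑u ∈ stdSimplex ℝ S) :
    signedExtension S N u ∈ sparseUnitSphere ι T := by
  have habs : ∀ j, |signedExtension S N u j| = if h : j ∈ S then u ⟨j, h⟩ else 0 := fun j => by
    by_cases hS : j ∈ S <;> by_cases hN : j ∈ N <;>
      simp [signedExtension, hS, hN, abs_of_nonneg (hu.1 _)]
  have hsupp : ∀ j, signedExtension S N u j ≠ 0 → j ∈ S := fun j hj =>
    not_imp_comm.1 (fun h => by simp [signedExtension, h]) hj
  refine ⟨?_, (card_le_card fun j hj => hsupp j (mem_filter.1 hj).2).trans hS⟩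
  simp only [habs, ← hu.2]
  exact (sum_attach_eq_sum_dite S u).symm

theorem exists_signedExtension_eq {w : ι → ℝ} {T : ℕ} (hw : w ∈ sparseUnitSphere ι T) :
    ∃ S N : Finset ι, #S ≤ T ∧ #N ≤ T ∧
      ∃ u : EuclideanSpace ℝ S, ⇑u ∈ stdSimplex ℝ S ∧ signedExtension S N u = w := by
  refine ⟨({j | w j ≠ 0} : Finset ι), ({j | w j < 0} : Finset ι), hw.2,
    (card_le_card (monotone_filter_right _ fun j _ hj => hj.ne)).trans hw.2,
    WithLp.toLp 2 fun j => |w j|, ⟨fun j => abs_nonneg _, ?_⟩, funext fun j => ?_⟩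
  · rw [← hw.1, ← sum_subset (subset_univ {j | w j ≠ 0}) (by simp)]
    exact sum_coe_sort _ fun j => |w j|
  · rcases lt_trichotomy (w j) 0 with h | h | h
    · simp [signedExtension, h, h.ne, abs_of_neg h]
    · simp [signedExtension, h]
    · simp [signedExtension, h.ne', h.not_gt, abs_of_pos h]

/-- The parameters `u` of the unit vectors supported in `S`, with signs given by `N`, on which the
row `v` fails to attain a value below `-t`. -/
def feasibleSet (S N : Finset ι) (t : ℝ) (v : ι → ℝ) : Set (EuclideanSpace ℝ S) :=
  {u | ⇑u ∈ stdSimplex ℝ S ∧ -t ≤ v ⬝ᵥ signedExtension S N u}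

theorem convex_feasibleSet (S N : Finset ι) (t : ℝ) (v : ι → ℝ) :
    Convex ℝ (feasibleSet S N t v) :=
  ((convex_stdSimplex ℝ S).linear_preimage (WithLp.linearEquiv 2 ℝ (S → ℝ)).toLinearMap).inter
    ((convex_Ici (-t)).linear_preimage (dotProductBilin ℝ ℝ v ∘ₗ signedExtension S N))

theorem isClosed_feasibleSet (S N : Finset ι) (t : ℝ) (v : ι → ℝ) :
    IsClosed (feasibleSet S N t v) := by
  have hcont : Continuous (signedExtension S N) := LinearMap.continuous_of_finiteDimensional _
  exact ((isClosed_stdSimplex ℝ S).preimage (PiLp.continuous_ofLp 2 _)).inter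
    (isClosed_le continuous_const (continuous_const.dotProduct hcont))

theorem card_filter_nonempty_iInter_feasibleSet_le {κ : Type*} [Fintype κ] {R : Finset α}
    {v : α → ι → ℝ} {S N : Finset ι} {T : ℕ} {t p : ℝ} (hp : 0 ≤ p) (hS : #S ≤ T)
    (hv : ∀ w ∈ sparseUnitSphere ι T, p * #R ≤ #{a ∈ R | v a ⬝ᵥ w < -t}) :
    (#{f ∈ Fintype.piFinset fun _ : κ => R |
        (⋂ i, feasibleSet S N t (v (f i))).Nonempty} : ℝ) ≤
      #{I : Finset κ | #I ≤ T + 1} *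
        (Real.exp (-p) ^ (Fintype.card κ - (T + 1)) * #R ^ Fintype.card κ) := by
  refine card_filter_nonempty_iInter_le (C := fun a => feasibleSet S N t (v a))
    (fun a => convex_feasibleSet S N t (v a))
    (fun a => isClosed_feasibleSet S N t (v a)) (by simpa using hS)
    ⟨(Real.exp_pos _).le, Real.exp_le_one_iff.2 (neg_nonpos.2 hp)⟩ fun u => ?_
  by_cases hu : ⇑u ∈ stdSimplex ℝ S
  · have hlt := hv _ (signedExtension_mem_sparseUnitSphere (N := N) hS hu)
    have hsplit : (#{a ∈ R | u ∈ feasibleSet S N t (v a)} : ℝ) +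
        #{a ∈ R | v a ⬝ᵥ signedExtension S N u < -t} = #R := by
      rw [← card_filter_add_card_filter_not (s := R) fun a => u ∈ feasibleSet S N t (v a)]
      simp [feasibleSet, hu]
    nlinarith [Real.add_one_le_exp (-p), Nat.cast_nonneg (α := ℝ) #R]
  · have hempty : ({a ∈ R | u ∈ feasibleSet S N t (v a)} : Finset α) = ∅ :=
      filter_false_of_mem fun a _ h => hu h.1
    rw [hempty, card_empty, Nat.cast_zero]
    positivity

theorem exists_forall_sparse_dotProduct_lt (κ : Type*) [Fintype κ] {R : Finset α}
    {v : α → ι → ℝ} {T : ℕ} {t p : ℝ} (hR : R.Nonempty) (hp : 0 ≤ p)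
    (hv : ∀ w ∈ sparseUnitSphere ι T, p * #R ≤ #{a ∈ R | v a ⬝ᵥ w < -t})
    (hunion : (#{s : Finset ι | #s ≤ T} : ℝ) ^ 2 *
      (#{I : Finset κ | #I ≤ T + 1} * Real.exp (-p) ^ (Fintype.card κ - (T + 1))) < 1) :
    ∃ f : κ → α, (∀ i, f i ∈ R) ∧ ∀ w ∈ sparseUnitSphere ι T, ∃ i, v (f i) ⬝ᵥ w < -t := by
  let P : Finset (Finset ι) := {s | #s ≤ T}
  let bad (z : Finset ι × Finset ι) : Finset (κ → α) :=
    {f ∈ Fintype.piFinset fun _ : κ => R | (⋂ i, feasibleSet z.1 z.2 t (v (f i))).Nonempty}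
  have hcard : #((P ×ˢ P).biUnion bad) < #(Fintype.piFinset fun _ : κ => R) := by
    have hR0 : (0 : ℝ) < #R ^ Fintype.card κ := by
      have := hR.card_pos
      positivity
    have hbound : (#((P ×ˢ P).biUnion bad) : ℝ) < #R ^ Fintype.card κ :=
      calc (#((P ×ˢ P).biUnion bad) : ℝ) ≤ ∑ z ∈ P ×ˢ P, (#(bad z) : ℝ) := by
            exact_mod_cast card_biUnion_le
        _ ≤ #(P ×ˢ P) * (#{I : Finset κ | #I ≤ T + 1} *
              (Real.exp (-p) ^ (Fintype.card κ - (T + 1)) * #R ^ Fintype.card κ)) := by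
            rw [← nsmul_eq_mul]
            refine sum_le_card_nsmul _ _ _ fun z hz => ?_
            exact card_filter_nonempty_iInter_feasibleSet_le hp
              (mem_filter.1 (mem_product.1 hz).1).2 hv
        _ = #P ^ 2 * (#{I : Finset κ | #I ≤ T + 1} *
              Real.exp (-p) ^ (Fintype.card κ - (T + 1))) * #R ^ Fintype.card κ := by
            rw [card_product, Nat.cast_mul]
            ring
        _ < #R ^ Fintype.card κ := mul_lt_of_lt_one_left hR0 hunion
    rw [← Nat.cast_lt (α := ℝ)]
    simpa using hbound
  obtain ⟨f, hfR, hf⟩ := exists_mem_notMem_of_card_lt_card hcard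
  refine ⟨f, Fintype.mem_piFinset.1 hfR, fun w hw => ?_⟩
  by_contra! hge
  obtain ⟨S, N, hS, hN, u, hu, rfl⟩ := exists_signedExtension_eq hw
  refine hf (mem_biUnion.2 ⟨(S, N), mem_product.2 ⟨by simpa [P], by simpa [P]⟩, ?_⟩)
  exact mem_filter.2 ⟨hfR, u, Set.mem_iInter.2 fun i => ⟨hu, hge i⟩⟩

end SparseVectors

section BalancedSigns

variable {ι : Type*} [Fintype ι]

theorem exists_involutive_signVec_dotProduct_add_eq (S : Set ι) :
    ∃ flip : (ι → ℤˣ) → ι → ℤˣ, Function.Involutive flip ∧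
      ∀ ε v, signVec ε ⬝ᵥ v + signVec (flip ε) ⬝ᵥ v = 2 * (signVec ε ⬝ᵥ S.indicator v) := by
  refine ⟨fun ε j => if j ∈ S then ε j else -ε j, fun ε => ?_, fun ε v => ?_⟩
  · ext j
    by_cases hj : j ∈ S <;> simp [hj]
  · rw [dotProduct, dotProduct, dotProduct, ← sum_add_distrib, mul_sum]
    refine sum_congr rfl fun j _ => ?_
    by_cases hj : j ∈ S <;> simp [signVec, hj, two_mul]

/-- Flipping the signs outside the support of `w` preserves `⟨ε, w⟩`, and if both `ε` and its flip
have `⟨·, v⟩ < -r`, then so has the restriction of `v` to the support of `w`. -/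
theorem card_signVec_dotProduct_lt_le_two_mul [DecidableEq ι] (v w : ι → ℝ) (r τ : ℝ) :
    #{ε : ι → ℤˣ | signVec ε ⬝ᵥ w < τ} ≤
      2 * #{ε : ι → ℤˣ | -r ≤ signVec ε ⬝ᵥ v ∧ signVec ε ⬝ᵥ w < τ} +
        #{ε : ι → ℤˣ | signVec ε ⬝ᵥ (Function.support w).indicator v < -r} := by
  obtain ⟨flip, hinv, hflip⟩ := exists_involutive_signVec_dotProduct_add_eq (Function.support w)
  set E : Finset (ι → ℤˣ) := {ε | -r ≤ signVec ε ⬝ᵥ v ∧ signVec ε ⬝ᵥ w < τ} with hE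
  set tail : Finset (ι → ℤˣ) := {ε | signVec ε ⬝ᵥ (Function.support w).indicator v < -r}
  have hsub : ({ε | signVec ε ⬝ᵥ w < τ} : Finset (ι → ℤˣ)) ⊆ (E ∪ E.image flip) ∪ tail := by
    intro ε hε
    have hw : signVec (flip ε) ⬝ᵥ w = signVec ε ⬝ᵥ w := by
      have := hflip ε w
      rw [Set.indicator_support] at this
      linarith
    have hετ : signVec ε ⬝ᵥ w < τ := (mem_filter.1 hε).2
    by_cases hεE : ε ∈ E
    · simp [hεE]
    by_cases hflipE : flip ε ∈ E
    · exact mem_union_left _ (mem_union_right _ (mem_image.2 ⟨flip ε, hflipE, hinv ε⟩))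
    have hε_lt : signVec ε ⬝ᵥ v < -r := by simpa [hE, hετ] using hεE
    have hflip_lt : signVec (flip ε) ⬝ᵥ v < -r := by simpa [hE, hw, hετ] using hflipE
    have : ε ∈ tail := mem_filter.2 ⟨mem_univ _, by linarith [hflip ε v]⟩
    exact mem_union_right _ this
  have himage : #(E.image flip) ≤ #E := card_image_le
  calc #{ε : ι → ℤˣ | signVec ε ⬝ᵥ w < τ} ≤ #((E ∪ E.image flip) ∪ tail) := card_le_card hsub
    _ ≤ #E + #(E.image flip) + #tail :=
        (card_union_le _ _).trans (Nat.add_le_add_right (card_union_le _ _) _)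
    _ ≤ 2 * #E + #tail := by lia

/-- The sign patterns whose sum is at least `-√n`, where `n` is the number of coordinates. -/
noncomputable def balancedSigns (ι : Type*) [Fintype ι] [DecidableEq ι] : Finset (ι → ℤˣ) :=
  {ε | -√(Fintype.card ι) ≤ signVec ε ⬝ᵥ 1}

theorem balancedSigns_nonempty [DecidableEq ι] : (balancedSigns ι).Nonempty := by
  refine ⟨1, mem_filter.2 ⟨mem_univ _, (neg_nonpos.2 (Real.sqrt_nonneg _)).trans ?_⟩⟩
  simp [signVec, dotProduct]

theorem le_card_balancedSigns_dotProduct_lt [DecidableEq ι] {w : ι → ℝ} {T : ℕ} {L : ℝ}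
    (hw : w ∈ sparseUnitSphere ι T) (hL : 2 * Real.log 2 ≤ L) (hLT : L ≤ T)
    (hcard : Fintype.card ι = T * Real.exp (16 * L)) :
    Real.exp (-(2 * L)) / 16 * #(balancedSigns ι) ≤
      #{ε ∈ balancedSigns ι | signVec ε ⬝ᵥ w < -(√(L / T) / 4)} := by
  have hlog2 := Real.log_pos one_lt_two
  have hT : (0 : ℝ) < T := by linarith
  have hwT : (#{j | w j ≠ 0} : ℝ) ≤ T := by exact_mod_cast hw.2
  have hlower := le_card_signVec_dotProduct_lt hw.1 hwT hL hLT
  have htail := card_signVec_dotProduct_lt_le ((Function.support w).indicator 1) hT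
    (Real.sqrt_nonneg (Fintype.card ι)) (by simpa [Set.indicator_apply, card_filter] using hwT)
  have hflip : (#{ε : ι → ℤˣ | signVec ε ⬝ᵥ w < -(√(L / T) / 4)} : ℝ) ≤
      2 * #{ε ∈ balancedSigns ι | signVec ε ⬝ᵥ w < -(√(L / T) / 4)} +
        #{ε : ι → ℤˣ | signVec ε ⬝ᵥ (Function.support w).indicator 1 < -√(Fintype.card ι)} := by
    rw [balancedSigns, filter_filter]
    exact_mod_cast card_signVec_dotProduct_lt_le_two_mul 1 w (√(Fintype.card ι)) _
  have hexp : Real.exp (-(√(Fintype.card ι) ^ 2 / (2 * T))) ≤ Real.exp (-(2 * L)) / 8 := by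
    have hlog8 : (8 : ℝ) = Real.exp (3 * Real.log 2) := by
      rw [mul_comm, Real.exp_mul, Real.exp_log two_pos]
      norm_num
    have hdiv : √(Fintype.card ι) ^ 2 / (2 * T) = Real.exp (16 * L) / 2 := by
      rw [Real.sq_sqrt (Nat.cast_nonneg _), hcard]
      field_simp
    rw [hdiv, hlog8, ← Real.exp_sub, Real.exp_le_exp]
    linarith [Real.add_one_le_exp (16 * L)]
  have hbalanced : (#(balancedSigns ι) : ℝ) ≤ 2 ^ Fintype.card ι := by
    exact_mod_cast (card_le_univ (balancedSigns ι)).trans_eq (by simp)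
  have htail_exp := mul_le_mul_of_nonneg_left hexp (by positivity : (0 : ℝ) ≤ 2 ^ Fintype.card ι)
  have hbal_exp := mul_le_mul_of_nonneg_left hbalanced
    (by positivity : (0 : ℝ) ≤ Real.exp (-(2 * L)) / 16)
  linarith

theorem card_filter_card_le_le_exp {k : ℕ} {T x : ℝ} (hx : 0 ≤ x)
    (hcard : Fintype.card ι = T * Real.exp x) :
    (#{s : Finset ι | #s ≤ k} : ℝ) ≤ Real.exp (k * x + T) := by
  have h := card_filter_card_le_le ι k (Real.one_le_exp hx)
  rwa [hcard, mul_div_cancel_right₀ _ (Real.exp_pos _).ne', ← Real.exp_nat_mul, ← Real.exp_add] at h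

theorem four_mul_add_one_lt_exp_sub_two_mul_exp {L : ℝ} (hL : 2 * Real.log 2 ≤ L) :
    4 * (16 * L + 1) < (Real.exp (16 * L) - 2) * (Real.exp (-(2 * L)) / 16) := by
  set y := Real.exp (2 * L) with hy
  have hy16 : 16 ≤ y := by
    rw [hy, ← Real.log_le_iff_le_exp (by norm_num), show (16 : ℝ) = 2 ^ 4 by norm_num, Real.log_pow]
    push_cast
    linarith
  have hy8 : Real.exp (16 * L) = y ^ 8 := by
    rw [hy, ← Real.exp_nat_mul]
    push_cast
    ring_nf
  have hy6 : 16 ^ 6 * y ^ 2 ≤ y ^ 6 * y ^ 2 := by gcongr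
  have hLy : 16 * L + 1 ≤ 8 * y := by linarith [Real.add_one_le_exp (2 * L)]
  rw [Real.exp_neg, ← hy, hy8, inv_eq_one_div, div_div, ← div_eq_mul_one_div,
    lt_div_iff₀ (by positivity)]
  calc 4 * (16 * L + 1) * (y * 16) ≤ 4 * (8 * y) * (y * 16) := by gcongr
    _ < y ^ 8 - 2 := by nlinarith

theorem sq_card_mul_card_mul_exp_pow_lt_one {T : ℕ} {L : ℝ} (hT : 0 < T) (hL : 2 * Real.log 2 ≤ L)
    (hcard : Fintype.card ι = T * Real.exp (16 * L)) :
    (#{s : Finset ι | #s ≤ T} : ℝ) ^ 2 * (#{I : Finset ι | #I ≤ T + 1} *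
      Real.exp (-(Real.exp (-(2 * L)) / 16)) ^ (Fintype.card ι - (T + 1))) < 1 := by
  have hL0 : 0 ≤ L := by linarith [Real.log_pos one_lt_two]
  have hT1 : (1 : ℝ) ≤ T := by exact_mod_cast hT
  set p := Real.exp (-(2 * L)) / 16 with hp
  have hsub : (Fintype.card ι : ℝ) - 2 * T ≤ (Fintype.card ι - (T + 1) : ℕ) := by
    have : Fintype.card ι ≤ (Fintype.card ι - (T + 1)) + 2 * T := by lia
    rw [sub_le_iff_le_add]
    exact_mod_cast this
  have hexponent : T * (4 * (16 * L + 1)) < (Fintype.card ι - 2 * T) * p :=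
    calc T * (4 * (16 * L + 1)) < T * ((Real.exp (16 * L) - 2) * p) :=
          mul_lt_mul_of_pos_left (four_mul_add_one_lt_exp_sub_two_mul_exp hL) (by positivity)
      _ = (Fintype.card ι - 2 * T) * p := by rw [hcard]; ring
  calc _ ≤ Real.exp (T * (16 * L) + T) ^ 2 * (Real.exp (((T + 1 : ℕ) : ℝ) * (16 * L) + T) *
        Real.exp (-p) ^ (Fintype.card ι - (T + 1))) := by
        gcongr
        · exact card_filter_card_le_le_exp (by positivity) hcard
        · exact card_filter_card_le_le_exp (by positivity) hcard
    _ < 1 := by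
        have hp_sub := mul_le_mul_of_nonneg_right hsub (by positivity : 0 ≤ p)
        rw [← Real.exp_nat_mul, ← Real.exp_nat_mul, ← Real.exp_add, ← Real.exp_add,
          Real.exp_lt_one_iff]
        have hT_mul := mul_le_mul_of_nonneg_right hT1 hL0
        push_cast
        linarith

theorem exists_balancedSigns_forall_sparse_dotProduct_lt [DecidableEq ι] {T : ℕ} (hT : 0 < T)
    (hlog : Real.log (Fintype.card ι) ≤ T) (hcard : 2 ^ 32 * (T : ℝ) ≤ Fintype.card ι) :
    ∃ f : ι → ι → ℤˣ, (∀ i, f i ∈ balancedSigns ι) ∧ ∀ w ∈ sparseUnitSphere ι T,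
      ∃ i, signVec (f i) ⬝ᵥ w < -(√(Real.log (Fintype.card ι / T) / T) / 16) := by
  have hT1 : (1 : ℝ) ≤ T := by exact_mod_cast hT
  have hcard0 : (0 : ℝ) < Fintype.card ι := by linarith
  set L := Real.log (Fintype.card ι / T) / 16 with hL
  have hL_lower : 2 * Real.log 2 ≤ L := by
    have : Real.log (2 ^ 32) ≤ Real.log (Fintype.card ι / T) := by
      gcongr
      rwa [le_div_iff₀ (by positivity)]
    rw [Real.log_pow] at this
    push_cast at this
    linarith
  have hL_upper : L ≤ T := by
    have : Real.log (Fintype.card ι / T) ≤ Real.log (Fintype.card ι) := by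
      gcongr
      exact div_le_self hcard0.le hT1
    linarith
  have hcard_eq : Fintype.card ι = T * Real.exp (16 * L) := by
    rw [hL, mul_div_cancel₀ _ (by norm_num), Real.exp_log (by positivity),
      mul_div_cancel₀ _ (by positivity)]
  have hsqrt : √(Real.log (Fintype.card ι / T) / T) / 16 = √(L / T) / 4 := by
    rw [hL, div_right_comm, show (16 : ℝ) = 4 ^ 2 by norm_num,
      Real.sqrt_div' (Real.log (Fintype.card ι / T) / T) (by norm_num), Real.sqrt_sq (by norm_num)]
    ring
  rw [hsqrt]
  exact exists_forall_sparse_dotProduct_lt ι balancedSigns_nonempty (by positivity)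
    (fun w hw => le_card_balancedSigns_dotProduct_lt hw hL_lower hL_upper hcard_eq)
    (sq_card_mul_card_mul_exp_pow_lt_one hT hL_lower hcard_eq)

end BalancedSigns

/-- Lower-bound matrix: for `ln n ≤ T ≤ n/C` there exists `A ∈ {-1,+1}^{n×n}` such that
the uniform combination has all coordinates of `Av` at least `-c₁/√n`, while every
`T`-sparse unit-`ℓ₁` vector `w` has `min_i (Aw)_i ≤ -c₂ √(ln(n/T)/T)`. -/
theorem lower_bound_matrix :
    ∃ C c₁ c₂ : ℝ, 0 < C ∧ 0 < c₁ ∧ 0 < c₂ ∧ ∃ n₀ : ℕ,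
      ∀ n : ℕ, n₀ ≤ n → ∀ T : ℕ,
        Real.log n ≤ (T : ℝ) → (T : ℝ) ≤ (n : ℝ) / C →
          ∃ A : Matrix (Fin n) (Fin n) ℝ, (∀ i j, A i j = -1 ∨ A i j = 1) ∧
            (∀ i, -(c₁ / Real.sqrt n) ≤ A.mulVec (fun _ => 1 / (n : ℝ)) i) ∧
            (∀ w : Fin n → ℝ, (Finset.univ.filter (fun j => w j ≠ 0)).card ≤ T →
              (∑ j, |w j|) = 1 →
              (⨅ i, A.mulVec w i) ≤ -(c₂ * Real.sqrt (Real.log ((n : ℝ) / (T : ℝ)) / (T : ℝ)))) := by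
  refine ⟨2 ^ 32, 1, 1 / 16, by norm_num, one_pos, by norm_num, 2, fun n hn T hlog hTn => ?_⟩
  have hT : 0 < T :=
    (Nat.cast_pos (α := ℝ)).1 ((Real.log_pos (by exact_mod_cast hn)).trans_le hlog)
  have hcard : 2 ^ 32 * (T : ℝ) ≤ Fintype.card (Fin n) := by
    rwa [Fintype.card_fin, mul_comm, ← le_div_iff₀ (by norm_num)]
  obtain ⟨f, hf, hsparse⟩ := exists_balancedSigns_forall_sparse_dotProduct_lt hT
    (by rwa [Fintype.card_fin]) hcard
  simp only [Fintype.card_fin] at hsparse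
  refine ⟨fun i => signVec (f i), fun i => signVec_eq_neg_one_or_one (f i), fun i => ?_,
    fun w hwT hw => ?_⟩
  · have hbalanced : -√n ≤ signVec (f i) ⬝ᵥ 1 := by simpa [balancedSigns] using hf i
    calc -(1 / √n) = 1 / n * -√n := by rw [← Real.sqrt_div_self']; ring
      _ ≤ 1 / n * (signVec (f i) ⬝ᵥ 1) := by gcongr
      _ = signVec (f i) ⬝ᵥ fun _ => 1 / (n : ℝ) := by
        simp [dotProduct, sum_mul, mul_comm (n : ℝ)⁻¹]
  · obtain ⟨i, hi⟩ := hsparse w ⟨hw, hwT⟩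
    refine (ciInf_le (Set.finite_range _).bddBelow i).trans (hi.le.trans_eq ?_)
    ring
end

section
/- There exist universal constants C, c > 0 and an integer n₀ such that for every n ≥ n₀ and every integer T with ln n ≤ T ≤ n/C, there exists a matrix A ∈ {−1,+1}^{n×n} such that for every vector w ∈ ℝⁿ with ‖w‖₀ ≤ T and ‖w‖₁ = 1, it holds that min_{1≤i≤n} (Aw)_i ≤ −c·√(ln(n/T)/T). -/
open Finset
open scoped Classical

/-!
Choose the signs at random. By Paley–Zygmund and symmetry, `∑ sᵢuᵢ` exceeds half its standard
deviation with probability at least `1/16`. Splitting the support of a `T`-sparse `u` into `m`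
balanced blocks and asking for this in every block gives `∑ sᵢuᵢ ≥ √(min (m/T) 1 / 8) ‖u‖₁` with
probability at least `16⁻ᵐ`. For `m` a small multiple of `ln (n/T)`, about `n/16ᵐ` rows of a random
matrix are thus good for `u`, and the Chernoff bound for this number beats the entropy of the net of
`T`-sparse integer vectors of `ℓ₁` norm at most `2·16ᵐT`, so one matrix serves the whole net.

Given `w`, round `16ᵐT·w` to the net greedily, choosing the direction in which each coordinate is
rounded so that the `ℓ₂` norm of the error after applying `A` is no larger than it would be for
orthogonal columns. By Chebyshev's inequality that error is large in fewer rows than are good for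
the rounded vector, and a good row with small error is a large coordinate of `Aw`. Replacing `w` by
`-w` turns this into a small coordinate.
-/

open scoped BigOperators

section Signs

variable {ι : Type*} [DecidableEq ι]

lemma sum_flip_smul {E : Type*} [AddCommGroup E] {J : Finset ι} {j : ι} (hj : j ∉ J) (u : ι → E)
    (s : ι → ℤˣ) :
    ∑ i ∈ J, (Pi.mulSingle j (-1) * s : ι → ℤˣ) i • u i = ∑ i ∈ J, s i • u i :=
  sum_congr rfl fun i hi => by
    rw [Pi.mul_apply, Pi.mulSingle_eq_of_ne (ne_of_mem_of_not_mem hi hj), one_mul]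

variable [Fintype ι]

lemma expect_smul_eq_zero_of_flip_invariant (j : ι) {g : (ι → ℤˣ) → ℝ}
    (hg : ∀ s, g (Pi.mulSingle j (-1) * s) = g s) : 𝔼 s, s j • g s = 0 := by
  have hflip : 𝔼 s, s j • g s = 𝔼 s, -(s j • g s) :=
    Fintype.expect_equiv (Equiv.mulLeft (Pi.mulSingle j (-1))) _ _ fun s => by
      simp [hg, Units.neg_smul]
  rw [expect_neg_distrib] at hflip
  linarith

theorem expect_sum_smul_sq (u : ι → ℝ) (J : Finset ι) :
    𝔼 s : ι → ℤˣ, (∑ i ∈ J, s i • u i) ^ 2 = ∑ i ∈ J, u i ^ 2 := by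
  induction J using Finset.induction_on with
  | empty => simp
  | insert j J hj ih =>
    have hodd : 𝔼 s : ι → ℤˣ, s j • (2 * u j * ∑ i ∈ J, s i • u i) = 0 :=
      expect_smul_eq_zero_of_flip_invariant j fun s => by rw [sum_flip_smul hj]
    have hexpand (s : ι → ℤˣ) : (∑ i ∈ insert j J, s i • u i) ^ 2 =
        u j ^ 2 + s j • (2 * u j * ∑ i ∈ J, s i • u i) + (∑ i ∈ J, s i • u i) ^ 2 := by
      rw [sum_insert hj]
      rcases Int.units_eq_one_or (s j) with h | h <;>
        simp only [h, one_smul, Units.neg_smul] <;> ring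
    simp only [hexpand]
    simp only [expect_add_distrib, hodd, ih, Fintype.expect_const, sum_insert hj, add_zero]

theorem expect_sum_smul_pow_four_le (u : ι → ℝ) (J : Finset ι) :
    𝔼 s : ι → ℤˣ, (∑ i ∈ J, s i • u i) ^ 4 ≤ 3 * (∑ i ∈ J, u i ^ 2) ^ 2 := by
  induction J using Finset.induction_on with
  | empty => simp
  | insert j J hj ih =>
    have hodd : 𝔼 s : ι → ℤˣ, s j • (4 * u j * (∑ i ∈ J, s i • u i) ^ 3
        + 4 * u j ^ 3 * ∑ i ∈ J, s i • u i) = 0 :=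
      expect_smul_eq_zero_of_flip_invariant j fun s => by rw [sum_flip_smul hj]
    have hexpand (s : ι → ℤˣ) : (∑ i ∈ insert j J, s i • u i) ^ 4 =
        u j ^ 4 + s j • (4 * u j * (∑ i ∈ J, s i • u i) ^ 3 + 4 * u j ^ 3 * ∑ i ∈ J, s i • u i)
          + 6 * u j ^ 2 * (∑ i ∈ J, s i • u i) ^ 2 + (∑ i ∈ J, s i • u i) ^ 4 := by
      rw [sum_insert hj]
      rcases Int.units_eq_one_or (s j) with h | h <;>
        simp only [h, one_smul, Units.neg_smul] <;> ring
    simp only [hexpand]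
    simp only [expect_add_distrib, hodd, ← mul_expect, expect_sum_smul_sq,
      Fintype.expect_const, sum_insert hj]
    linarith [pow_nonneg (sq_nonneg (u j)) 2]

theorem paley_zygmund {Ω : Type*} [Fintype Ω] [Nonempty Ω] {Z : Ω → ℝ} {θ : ℝ}
    (hZ : 0 ≤ 𝔼 ω, Z ω) (hθ₀ : 0 ≤ θ) (hθ₁ : θ ≤ 1) :
    ((1 - θ) * 𝔼 ω, Z ω) ^ 2 ≤ dens {ω | θ * 𝔼 ω', Z ω' ≤ Z ω} * 𝔼 ω, Z ω ^ 2 := by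
  set G : Finset Ω := {ω | θ * 𝔼 ω', Z ω' ≤ Z ω} with hG
  let χ : Ω → ℝ := Set.indicator G 1
  have hmean : 𝔼 ω, Z ω ≤ θ * (𝔼 ω, Z ω) + 𝔼 ω, χ ω * Z ω := by
    rw [← Fintype.expect_const (ι := Ω) (θ * 𝔼 ω, Z ω), ← expect_add_distrib]
    refine expect_le_expect fun ω _ => ?_
    by_cases hω : ω ∈ G
    · simpa [χ, hω] using mul_nonneg hθ₀ hZ
    · simpa [χ, hω] using (not_le.1 (by simpa [hG] using hω)).le
  have hχ : 𝔼 ω, χ ω ^ 2 = dens G := by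
    rw [← expect_indicator_one]
    refine expect_congr rfl fun ω _ => ?_
    by_cases hω : ω ∈ G <;> simp [χ, hω]
  calc ((1 - θ) * 𝔼 ω, Z ω) ^ 2 ≤ (𝔼 ω, χ ω * Z ω) ^ 2 :=
        pow_le_pow_left₀ (mul_nonneg (sub_nonneg.2 hθ₁) hZ) (by linarith) 2
    _ ≤ (𝔼 ω, χ ω ^ 2) * 𝔼 ω, Z ω ^ 2 := expect_mul_sq_le_sq_mul_sq _ _ _
    _ = dens G * 𝔼 ω, Z ω ^ 2 := by rw [hχ]

theorem three_div_sixteen_le_dens_abs_sum_smul (u : ι → ℝ) :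
    (3 / 16 : ℝ) ≤ dens {s : ι → ℤˣ | √(∑ i, u i ^ 2) / 2 ≤ |∑ i, s i • u i|} := by
  rcases (sum_nonneg fun i (_ : i ∈ univ) => sq_nonneg (u i)).eq_or_lt with hV | hV
  · norm_num [← hV]
  · have hPZ := paley_zygmund (Z := fun s : ι → ℤˣ => (∑ i, s i • u i) ^ 2) (θ := 1 / 4)
      (by rw [expect_sum_smul_sq]; exact hV.le) (by norm_num) (by norm_num)
    simp only [expect_sum_smul_sq, ← pow_mul] at hPZ
    have hset (s : ι → ℤˣ) : √(∑ i, u i ^ 2) / 2 ≤ |∑ i, s i • u i| ↔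
        1 / 4 * ∑ i, u i ^ 2 ≤ (∑ i, s i • u i) ^ 2 := by
      rw [← sq_abs (∑ i, _), ← sq_le_sq₀ (by positivity) (abs_nonneg _), div_pow,
        Real.sq_sqrt hV.le]
      ring_nf
    simp only [hset]
    have hfour := mul_le_mul_of_nonneg_left (expect_sum_smul_pow_four_le u univ)
      (dens {s : ι → ℤˣ | 1 / 4 * ∑ i, u i ^ 2 ≤ (∑ i, s i • u i) ^ 2}).cast_nonneg
    refine le_of_mul_le_mul_right ?_ (by positivity : 0 < 3 * (∑ i, u i ^ 2) ^ 2)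
    linarith

theorem one_div_sixteen_le_dens_sum_smul (u : ι → ℝ) :
    (1 / 16 : ℝ) ≤ dens {s : ι → ℤˣ | √(∑ i, u i ^ 2) / 2 ≤ ∑ i, s i • u i} := by
  set G : Finset (ι → ℤˣ) := {s | √(∑ i, u i ^ 2) / 2 ≤ ∑ i, s i • u i} with hG
  have hsub : ({s | √(∑ i, u i ^ 2) / 2 ≤ |∑ i, s i • u i|} : Finset (ι → ℤˣ)) ⊆
      G ∪ G.map (Equiv.neg _).toEmbedding := fun s hs => by
    simpa [hG, Units.neg_smul, le_abs] using hs
  have habs := three_div_sixteen_le_dens_abs_sum_smul u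
  have hunion : (dens {s : ι → ℤˣ | √(∑ i, u i ^ 2) / 2 ≤ |∑ i, s i • u i|} : ℝ) ≤
      dens G + dens G := by
    have h := (dens_le_dens hsub).trans (dens_union_le _ _)
    rw [dens_map_equiv] at h
    exact_mod_cast h
  linarith

end Signs

lemma exists_balanced_coloring {ι : Type*} (S : Finset ι) {m : ℕ} (hm : 0 < m) :
    ∃ f : ι → Fin m, ∀ b, #{i ∈ S | f i = b} ≤ #S / m + 1 := by
  let g : ι → ℕ := fun i => if h : i ∈ S then S.equivFin ⟨i, h⟩ else 0
  have hg (i : ι) (h : i ∈ S) : g i = S.equivFin ⟨i, h⟩ := dif_pos h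
  refine ⟨fun i => ⟨g i % m, Nat.mod_lt _ hm⟩, fun b => ?_⟩
  calc #{i ∈ S | (⟨g i % m, Nat.mod_lt _ hm⟩ : Fin m) = b}
      ≤ #{k ∈ range #S | k ≡ b [MOD m]} := by
        refine card_le_card_of_injOn g (fun i hi => ?_) fun i hi j hj hij => ?_
        · obtain ⟨hiS, rfl⟩ := mem_filter.1 hi
          exact mem_filter.2 ⟨mem_range.2 (hg i hiS ▸ Fin.is_lt _), (Nat.mod_modEq _ _).symm⟩
        · have hiS := (mem_filter.1 hi).1
          have hjS := (mem_filter.1 hj).1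
          rw [hg i hiS, hg j hjS] at hij
          exact congrArg Subtype.val (S.equivFin.injective (Fin.ext hij))
    _ = #S / m + if b % m < #S % m then 1 else 0 := by
        rw [← Nat.count_eq_card_filter_range, Nat.count_modEq_card _ hm]
    _ ≤ #S / m + 1 := by gcongr; split_ifs <;> simp

lemma sum_abs_le_sqrt_card_support_mul {ι : Type*} [Fintype ι] (u : ι → ℝ) :
    ∑ i, |u i| ≤ √(#{i | u i ≠ 0}) * √(∑ i, u i ^ 2) := by
  rw [← Real.sqrt_mul (Nat.cast_nonneg _)]
  refine Real.le_sqrt_of_sq_le ?_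
  have h₁ : ∑ i with u i ≠ 0, |u i| = ∑ i, |u i| := sum_filter_of_ne (by simp)
  have h₂ : ∑ i with u i ≠ 0, |u i| ^ 2 = ∑ i, u i ^ 2 := by
    simp only [sq_abs]
    exact sum_filter_of_ne (by simp)
  rw [← h₁, ← h₂]
  exact sq_sum_le_card_mul_sum_sq

lemma sqrt_min_div_mul_sqrt_le_one (m T : ℕ) :
    √(min (m / T : ℝ) 1 / 8) * (2 * √(T / m + 1 : ℕ)) ≤ 1 := by
  have hfloor : ((T / m : ℕ) : ℝ) * min (m / T : ℝ) 1 ≤ 1 :=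
    calc ((T / m : ℕ) : ℝ) * min (m / T : ℝ) 1 ≤ T / m * (m / T) := by
          gcongr
          exacts [Nat.cast_div_le, min_le_left _ _]
      _ ≤ 1 := by
          rw [← inv_div (T : ℝ)]
          exact mul_inv_le_one
  have hone : min (m / T : ℝ) 1 ≤ 1 := min_le_right _ _
  rw [← sq_le_one_iff₀ (by positivity), mul_pow, mul_pow, Real.sq_sqrt (by positivity),
    Real.sq_sqrt (by positivity)]
  push_cast
  linarith

section Blocks

variable {ι κ : Type*} [Fintype ι] [DecidableEq ι] [Fintype κ] [DecidableEq κ]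

lemma dens_forall_restrict_fiber_mem {α : Type*} [Fintype α] [DecidableEq α] (f : ι → κ)
    (G : ∀ b, Finset ({i // f i = b} → α)) :
    dens {s : ι → α | ∀ b, (fun i : {i // f i = b} => s i) ∈ G b} = ∏ b, dens (G b) := by
  let e : (ι → α) ≃ ∀ b, {i // f i = b} → α := Equiv.piCongrFiberwise fun _ => Equiv.refl _
  have hmap : ({s | ∀ b, (fun i : {i // f i = b} => s i) ∈ G b} : Finset (ι → α)).map
      e.toEmbedding = Fintype.piFinset G := by
    ext t
    have hblock (b : κ) : (fun i : {i // f i = b} => e.symm t i) = t b :=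
      funext fun ⟨i, hi⟩ => by subst hi; rfl
    simp only [mem_map_equiv, mem_filter_univ, Fintype.mem_piFinset, hblock]
  rw [← dens_map_equiv e, hmap]
  simp only [dens_eq_card_div_card, Fintype.card_piFinset, Fintype.card_pi, Nat.cast_prod,
    prod_div_distrib]

theorem one_div_sixteen_pow_le_dens_of_coloring (u : ι → ℝ) (f : ι → κ) {L : ℕ}
    (hf : ∀ b, #{i | u i ≠ 0 ∧ f i = b} ≤ L) :
    (1 / 16 : ℝ) ^ Fintype.card κ ≤
      dens {s : ι → ℤˣ | ∑ i, |u i| ≤ 2 * √L * ∑ i, s i • u i} := by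
  let good (b : κ) : Finset ({i // f i = b} → ℤˣ) :=
    {t | √(∑ i : {i // f i = b}, u i ^ 2) / 2 ≤ ∑ i, t i • u i}
  have hblock (b : κ) (t : {i // f i = b} → ℤˣ) (ht : t ∈ good b) :
      ∑ i : {i // f i = b}, |u i| ≤ 2 * √L * ∑ i, t i • u i := by
    have hcard : #{i : {i // f i = b} | u i ≠ 0} ≤ L :=
      (card_le_card_of_injOn Subtype.val (fun i hi => by
        simpa [i.2] using hi) Subtype.val_injective.injOn).trans (hf b)
    calc ∑ i : {i // f i = b}, |u i|
        ≤ √(#{i : {i // f i = b} | u i ≠ 0}) * √(∑ i : {i // f i = b}, u i ^ 2) :=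
          sum_abs_le_sqrt_card_support_mul fun i : {i // f i = b} => u i
      _ ≤ √L * (2 * ∑ i, t i • u i) := by
          gcongr
          have := (mem_filter.1 ht).2
          linarith
      _ = 2 * √L * ∑ i, t i • u i := by ring
  have hglue : ({s | ∀ b, (fun i : {i // f i = b} => s i) ∈ good b} : Finset (ι → ℤˣ)) ⊆
      ({s | ∑ i, |u i| ≤ 2 * √L * ∑ i, s i • u i} : Finset (ι → ℤˣ)) := fun s hs => by
    refine mem_filter.2 ⟨mem_univ s, ?_⟩
    rw [← Fintype.sum_fiberwise f, ← Fintype.sum_fiberwise f (fun i => s i • u i), mul_sum]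
    exact sum_le_sum fun b _ => hblock b _ ((mem_filter.1 hs).2 b)
  calc (1 / 16 : ℝ) ^ Fintype.card κ = ∏ _b : κ, (1 / 16 : ℝ) := by simp
    _ ≤ ∏ b, (dens (good b) : ℝ) := prod_le_prod (fun _ _ => by norm_num) fun b _ =>
        one_div_sixteen_le_dens_sum_smul fun i : {i // f i = b} => u i
    _ = dens {s : ι → ℤˣ | ∀ b, (fun i : {i // f i = b} => s i) ∈ good b} := by
        rw [dens_forall_restrict_fiber_mem, NNRat.cast_prod]
    _ ≤ dens {s : ι → ℤˣ | ∑ i, |u i| ≤ 2 * √L * ∑ i, s i • u i} := by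
        exact_mod_cast dens_le_dens hglue

theorem one_div_sixteen_pow_le_dens_of_sparse {u : ι → ℝ} {m T : ℕ} (hm : 0 < m)
    (hu : #{i | u i ≠ 0} ≤ T) :
    (1 / 16 : ℝ) ^ m ≤
      dens {s : ι → ℤˣ | √(min (m / T : ℝ) 1 / 8) * ∑ i, |u i| ≤ ∑ i, s i • u i} := by
  obtain ⟨f, hf⟩ := exists_balanced_coloring {i | u i ≠ 0} hm
  have hblock (b : Fin m) : #{i | u i ≠ 0 ∧ f i = b} ≤ T / m + 1 := by
    rw [← filter_filter]
    exact (hf b).trans (by gcongr)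
  have hdens := one_div_sixteen_pow_le_dens_of_coloring u f hblock
  rw [Fintype.card_fin] at hdens
  refine hdens.trans (NNRat.cast_le.2 (dens_le_dens fun s hs => ?_))
  simp only [mem_filter_univ] at hs ⊢
  have hnonneg : 0 ≤ ∑ i, s i • u i := by
    have habs : 0 ≤ ∑ i, |u i| := sum_nonneg fun i _ => abs_nonneg (u i)
    exact nonneg_of_mul_nonneg_right (habs.trans hs) (by positivity)
  calc √(min (m / T : ℝ) 1 / 8) * ∑ i, |u i|
      ≤ √(min (m / T : ℝ) 1 / 8) * (2 * √(T / m + 1 : ℕ) * ∑ i, s i • u i) := by gcongr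
    _ = √(min (m / T : ℝ) 1 / 8) * (2 * √(T / m + 1 : ℕ)) * ∑ i, s i • u i := by ring
    _ ≤ ∑ i, s i • u i :=
        mul_le_of_le_one_left hnonneg (sqrt_min_div_mul_sqrt_le_one m T)

end Blocks

lemma card_mul_le_sum_of_subset {α R : Type*} [Semiring R] [PartialOrder R] [IsOrderedRing R]
    {s t : Finset α} (hst : s ⊆ t) {f : α → R} {c : R} (hf : ∀ a ∈ t, 0 ≤ f a)
    (hc : ∀ a ∈ s, c ≤ f a) : #s * c ≤ ∑ a ∈ t, f a :=
  calc #s * c = #s • c := (nsmul_eq_mul _ _).symm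
    _ ≤ ∑ a ∈ s, f a := card_nsmul_le_sum _ _ _ hc
    _ ≤ ∑ a ∈ t, f a := sum_le_sum_of_subset_of_nonneg hst fun a ha _ => hf a ha

section Counting

lemma sum_Icc_ite_mul_half_pow_natAbs (y : ℝ) (N : ℕ) :
    ∑ v ∈ Icc (-N : ℤ) N, (if v ≠ 0 then y else 1) * (1 / 2 : ℝ) ^ v.natAbs =
      1 + 2 * y - 2 * y * (1 / 2) ^ N := by
  induction N with
  | zero => simp
  | succ N ih =>
    have hne : (N + 1 : ℤ) ≠ 0 := by omega
    rw [Nat.cast_succ, sum_Icc_succ_eq_add_endpoints, ih]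
    simp only [neg_ne_zero.2 hne, hne, Int.natAbs_neg, ne_eq, not_false_eq_true, if_true]
    rw [show ((N + 1 : ℤ)).natAbs = N + 1 by omega, pow_succ]
    ring

variable {ι : Type*} [Fintype ι] [DecidableEq ι]

variable (ι) in
/-- The integer vectors with at most `T` nonzero entries and `ℓ₁` norm at most `N`; these form the
net over which the union bound is taken. -/
noncomputable def sparseIntVectors (T N : ℕ) : Finset (ι → ℤ) :=
  {u ∈ Fintype.piFinset fun _ => Icc (-N : ℤ) N | #{i | u i ≠ 0} ≤ T ∧ ∑ i, (u i).natAbs ≤ N}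

lemma mem_sparseIntVectors {T N : ℕ} {u : ι → ℤ} :
    u ∈ sparseIntVectors ι T N ↔ #{i | u i ≠ 0} ≤ T ∧ ∑ i, (u i).natAbs ≤ N := by
  simp only [sparseIntVectors, mem_filter, Fintype.mem_piFinset, mem_Icc, and_iff_right_iff_imp]
  rintro ⟨-, hN⟩ i
  have := (single_le_sum (f := fun i => (u i).natAbs) (fun _ _ => Nat.zero_le _)
    (mem_univ i)).trans hN
  omega

lemma card_sparseIntVectors_mul_le (T N : ℕ) {y : ℝ} (hy₀ : 0 ≤ y) (hy₁ : y ≤ 1) :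
    #(sparseIntVectors ι T N) * (y ^ T * (1 / 2) ^ N) ≤ (1 + 2 * y) ^ Fintype.card ι := by
  let g (v : ℤ) : ℝ := (if v ≠ 0 then y else 1) * (1 / 2) ^ v.natAbs
  have hg (v : ℤ) : 0 ≤ g v := by
    simp only [g]
    split_ifs <;> positivity
  have hweight : ∀ u ∈ sparseIntVectors ι T N, y ^ T * (1 / 2) ^ N ≤ ∏ i, g (u i) := fun u hu => by
    obtain ⟨hT, hN⟩ := mem_sparseIntVectors.1 hu
    simp only [g, prod_mul_distrib, prod_pow_eq_pow_sum]
    rw [← prod_filter, prod_const]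
    exact mul_le_mul (pow_le_pow_of_le_one hy₀ hy₁ hT)
      (pow_le_pow_of_le_one (by norm_num) (by norm_num) hN) (by positivity) (by positivity)
  calc #(sparseIntVectors ι T N) * (y ^ T * (1 / 2) ^ N)
      ≤ ∑ u ∈ Fintype.piFinset fun _ : ι => Icc (-N : ℤ) N, ∏ i, g (u i) :=
        card_mul_le_sum_of_subset (filter_subset _ _) (fun u _ => prod_nonneg fun i _ => hg (u i))
          hweight
    _ = ∏ _i : ι, ∑ v ∈ Icc (-N : ℤ) N, g v :=
        (prod_univ_sum (fun _ => Icc (-N : ℤ) N) fun _ v => g v).symm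
    _ = (1 + 2 * y - 2 * y * (1 / 2) ^ N) ^ Fintype.card ι := by
        rw [sum_Icc_ite_mul_half_pow_natAbs, prod_const, card_univ]
    _ ≤ (1 + 2 * y) ^ Fintype.card ι := by
        have hpow : (1 / 2 : ℝ) ^ N ≤ 1 := pow_le_one₀ (by norm_num) (by norm_num)
        have := mul_le_of_le_one_right (mul_nonneg zero_le_two hy₀) hpow
        have : 0 ≤ 2 * y * (1 / 2 : ℝ) ^ N := by positivity
        exact pow_le_pow_left₀ (by linarith) (by linarith) _

theorem card_sparseIntVectors_le {T n : ℕ} (N : ℕ) (hT : 0 < T) (hTn : T ≤ n)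
    (hn : Fintype.card ι ≤ n) :
    (#(sparseIntVectors ι T N) : ℝ) ≤ Real.exp (N + T * Real.log (n / T) + 2 * T) := by
  have : (0 : ℝ) < T := Nat.cast_pos.2 hT
  have hn' : (0 : ℝ) < n := Nat.cast_pos.2 (hT.trans_le hTn)
  have hcount := card_sparseIntVectors_mul_le (ι := ι) T N (y := T / n) (by positivity)
    (div_le_one_of_le₀ (Nat.cast_le.2 hTn) hn'.le)
  have hscale : (T / n : ℝ) ^ T = Real.exp (-(T * Real.log (n / T))) := by
    rw [← mul_neg, ← Real.log_inv, inv_div, Real.exp_nat_mul, Real.exp_log (by positivity)]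
  have hhalf : Real.exp (-N) ≤ (1 / 2 : ℝ) ^ N := by
    rw [← mul_neg_one, Real.exp_nat_mul]
    exact pow_le_pow_left₀ (Real.exp_pos _).le (by linarith [Real.exp_neg_one_lt_d9]) N
  have htotal : (1 + 2 * (T / n : ℝ)) ^ Fintype.card ι ≤ Real.exp (2 * T) :=
    calc (1 + 2 * (T / n : ℝ)) ^ Fintype.card ι ≤ (1 + 2 * (T / n : ℝ)) ^ n :=
          pow_le_pow_right₀ (le_add_of_nonneg_right (by positivity)) hn
      _ ≤ Real.exp (2 * (T / n)) ^ n := by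
          gcongr
          linarith [Real.add_one_le_exp (2 * (T / n : ℝ))]
      _ = Real.exp (2 * T) := by
          rw [← Real.exp_nat_mul]
          congr 1
          field_simp
  refine le_of_mul_le_mul_right ?_ (Real.exp_pos (-(T * Real.log (n / T)) + -N))
  calc #(sparseIntVectors ι T N) * Real.exp (-(T * Real.log (n / T)) + -N)
      ≤ #(sparseIntVectors ι T N) * ((T / n : ℝ) ^ T * (1 / 2) ^ N) := by
        rw [Real.exp_add, hscale]
        gcongr
    _ ≤ Real.exp (2 * T) := hcount.trans htotal
    _ = _ := by
        rw [← Real.exp_add]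
        congr 1
        ring

end Counting

section IndependentRows

variable {κ Ω : Type*} [Fintype κ] [Fintype Ω]

lemma expect_prod_apply [DecidableEq κ] (h : Ω → ℝ) :
    𝔼 a : κ → Ω, ∏ i, h (a i) = (𝔼 ω, h ω) ^ Fintype.card κ := by
  have hprod : ∏ _i : κ, ∑ ω, h ω = ∑ a : κ → Ω, ∏ i, h (a i) := by
    rw [prod_univ_sum, Fintype.piFinset_univ]
  rw [Fintype.expect_eq_sum_div_card, Fintype.expect_eq_sum_div_card, ← hprod, prod_const,
    card_univ, div_pow, Fintype.card_fun, Nat.cast_pow]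

variable [DecidableEq Ω] [Nonempty Ω]

theorem dens_card_mem_le [DecidableEq κ] (G : Finset Ω) (b : ℝ) :
    (dens {a : κ → Ω | (#{i | a i ∈ G} : ℝ) ≤ b} : ℝ) ≤
      Real.exp (b - dens G / 2 * Fintype.card κ) := by
  let h (ω : Ω) : ℝ := if ω ∈ G then Real.exp (-1) else 1
  have hh (ω : Ω) : 0 ≤ h ω := by
    simp only [h]
    split_ifs <;> positivity
  have hprod (a : κ → Ω) : ∏ i, h (a i) = Real.exp (-#{i | a i ∈ G}) := by
    simp only [h]
    rw [← prod_filter, prod_const, ← Real.exp_nat_mul, mul_neg_one]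
  have hmarkov : dens {a : κ → Ω | (#{i | a i ∈ G} : ℝ) ≤ b} * Real.exp (-b) ≤
      𝔼 a : κ → Ω, ∏ i, h (a i) := by
    rw [Fintype.expect_eq_sum_div_card, nnratCast_dens, div_mul_eq_mul_div]
    gcongr
    refine card_mul_le_sum_of_subset (subset_univ _) (fun a _ => prod_nonneg fun i _ => hh (a i))
      fun a ha => ?_
    rw [hprod, Real.exp_le_exp, neg_le_neg_iff]
    exact (mem_filter.1 ha).2
  have hmean : 𝔼 ω, h ω ≤ Real.exp (-(dens G / 2)) := by
    have hlin (ω : Ω) : h ω = 1 - (1 - Real.exp (-1)) * Set.indicator G 1 ω := by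
      by_cases hω : ω ∈ G <;> simp [h, hω]
    have hdens : (0 : ℝ) ≤ dens G := NNRat.cast_nonneg _
    simp only [hlin, expect_sub_distrib, ← mul_expect, Fintype.expect_const, expect_indicator_one]
    nlinarith [Real.add_one_le_exp (-(dens G / 2 : ℝ)), Real.exp_neg_one_lt_d9]
  rw [expect_prod_apply] at hmarkov
  refine le_of_mul_le_mul_right ?_ (Real.exp_pos (-b))
  calc dens {a : κ → Ω | (#{i | a i ∈ G} : ℝ) ≤ b} * Real.exp (-b)
      ≤ (𝔼 ω, h ω) ^ Fintype.card κ := hmarkov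
    _ ≤ Real.exp (-(dens G / 2)) ^ Fintype.card κ := by
        gcongr
    _ = Real.exp (b - dens G / 2 * Fintype.card κ) * Real.exp (-b) := by
        rw [← Real.exp_nat_mul, ← Real.exp_add]
        congr 1
        ring

theorem exists_forall_lt_card_mem {α : Type*} (U : Finset α) (good : α → Finset Ω) {p : ℝ}
    (hp : ∀ u ∈ U, p ≤ dens (good u)) (hU : #U < Real.exp (p * Fintype.card κ / 4)) :
    ∃ a : κ → Ω, ∀ u ∈ U, p * Fintype.card κ / 4 < #{i | a i ∈ good u} := by
  let bad (u : α) : Finset (κ → Ω) := {a | (#{i | a i ∈ good u} : ℝ) ≤ p * Fintype.card κ / 4}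
  have hbad : ∀ u ∈ U, (dens (bad u) : ℝ) ≤ Real.exp (-(p * Fintype.card κ / 4)) := fun u hu => by
    refine (dens_card_mem_le _ _).trans (Real.exp_le_exp.2 ?_)
    have := mul_le_mul_of_nonneg_right (hp u hu) (Nat.cast_nonneg (α := ℝ) (Fintype.card κ))
    linarith
  have hunion : (dens (U.biUnion bad) : ℝ) < 1 :=
    calc (dens (U.biUnion bad) : ℝ) ≤ ∑ u ∈ U, (dens (bad u) : ℝ) := by
          exact_mod_cast dens_biUnion_le
      _ ≤ #U * Real.exp (-(p * Fintype.card κ / 4)) := by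
          rw [← nsmul_eq_mul]
          exact sum_le_card_nsmul _ _ _ hbad
      _ < Real.exp (p * Fintype.card κ / 4) * Real.exp (-(p * Fintype.card κ / 4)) := by gcongr
      _ = 1 := by rw [← Real.exp_add, add_neg_cancel, Real.exp_zero]
  obtain ⟨a, ha⟩ : ∃ a, a ∉ U.biUnion bad := by
    by_contra! hall
    rw [eq_univ_of_forall hall, dens_univ, NNRat.cast_one] at hunion
    exact hunion.false
  exact ⟨a, fun u hu => not_le.1 fun hle => ha (mem_biUnion.2 ⟨u, hu, by simpa [bad] using hle⟩)⟩

end IndependentRows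

section Rounding

lemma exists_int_abs_sub_le_one_mul_nonpos {R : Type*} [Field R] [LinearOrder R]
    [IsStrictOrderedRing R] [FloorRing R] (x c : R) :
    ∃ k : ℤ, |x - k| ≤ 1 ∧ (x - k) * c ≤ 0 := by
  rcases le_total c 0 with hc | hc
  · refine ⟨⌊x⌋, ?_, mul_nonpos_of_nonneg_of_nonpos (Int.fract_nonneg x) hc⟩
    exact (abs_of_nonneg (Int.fract_nonneg x)).trans_le (Int.fract_lt_one x).le
  · refine ⟨⌈x⌉, ?_, mul_nonpos_of_nonpos_of_nonneg (sub_nonpos.2 (Int.le_ceil x)) hc⟩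
    rw [abs_le]
    constructor <;> linarith [Int.le_ceil x, Int.ceil_lt_add_one x]

variable {ι E : Type*} [NormedAddCommGroup E] [InnerProductSpace ℝ E]

theorem exists_int_rounding (v : ι → E) {D : ℝ} (hv : ∀ j, ‖v j‖ ^ 2 ≤ D) (x : ι → ℝ)
    (S : Finset ι) :
    ∃ u : ι → ℤ, (∀ j ∉ S, u j = 0) ∧ (∀ j ∈ S, |x j - u j| ≤ 1) ∧
      ‖∑ j ∈ S, (x j - u j) • v j‖ ^ 2 ≤ #S * D := by
  induction S using Finset.induction_on with
  | empty => exact ⟨0, by simp⟩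
  | insert k S hk ih =>
    obtain ⟨u, huS, hu, hsum⟩ := ih
    -- The coordinate `k` is rounded towards a nonpositive inner product with the error so far.
    set X := ∑ j ∈ S, (x j - u j) • v j
    obtain ⟨e, he, hcross⟩ := exists_int_abs_sub_le_one_mul_nonpos (x k) (inner ℝ (v k) X)
    have hX : ∑ j ∈ S, (x j - Function.update u k e j) • v j = X :=
      sum_congr rfl fun j hj => by rw [Function.update_of_ne (ne_of_mem_of_not_mem hj hk)]
    refine ⟨Function.update u k e, fun j hj => ?_, fun j hj => ?_, ?_⟩
    · rw [mem_insert, not_or] at hj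
      rw [Function.update_of_ne hj.1, huS j hj.2]
    · rcases eq_or_ne j k with rfl | hjk
      · rwa [Function.update_self]
      · rw [Function.update_of_ne hjk]
        exact hu j (mem_of_mem_insert_of_ne hj hjk)
    · have hterm : ‖(x k - e) • v k‖ ^ 2 ≤ D := by
        rw [norm_smul, mul_pow, Real.norm_eq_abs]
        exact (mul_le_of_le_one_left (sq_nonneg _) (pow_le_one₀ (abs_nonneg _) he)).trans (hv k)
      rw [sum_insert hk, Function.update_self, hX, norm_add_sq_real, real_inner_smul_left,
        card_insert_of_notMem hk]
      push_cast
      linarith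

end Rounding

section Coordinates

variable {κ ι : Type*} [Fintype κ] [Fintype ι]

theorem exists_sparse_int_rounding_of_signs (A : κ → ι → ℤˣ) (x : ι → ℝ) :
    ∃ u : ι → ℤ, (∀ j, x j = 0 → u j = 0) ∧ ∑ j, |x j - u j| ≤ #{j | x j ≠ 0} ∧
      ∑ i, (∑ j, A i j • (x j - u j)) ^ 2 ≤ #{j | x j ≠ 0} * Fintype.card κ := by
  let column (j : ι) : EuclideanSpace ℝ κ := WithLp.toLp 2 fun i => A i j • 1
  have hcolumn (j : ι) : ‖column j‖ ^ 2 ≤ Fintype.card κ := by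
    have hsign (i : κ) : ‖A i j • (1 : ℝ)‖ = 1 := by
      rcases Int.units_eq_one_or (A i j) with h | h <;> simp [h, Units.neg_smul]
    simp [column, EuclideanSpace.norm_sq_eq, hsign]
  obtain ⟨u, hu₀, hu₁, hround⟩ := exists_int_rounding column hcolumn x {j | x j ≠ 0}
  have hzero : ∀ j, x j = 0 → u j = 0 := fun j hj => hu₀ j (by simpa using hj)
  have hdiff : ∀ j, x j = 0 → x j - u j = 0 := fun j hj => by rw [hzero j hj, hj]; simp
  refine ⟨u, hzero, ?_, ?_⟩
  · calc ∑ j, |x j - u j| = ∑ j with x j ≠ 0, |x j - u j| :=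
          (sum_filter_of_ne fun j _ => mt fun hj => by rw [hdiff j hj, abs_zero]).symm
      _ ≤ #{j | x j ≠ 0} • (1 : ℝ) := sum_le_card_nsmul _ _ _ hu₁
      _ = #{j | x j ≠ 0} := nsmul_one _
  · rw [sum_filter_of_ne fun j _ => mt fun hj => by rw [hdiff j hj, zero_smul],
      EuclideanSpace.norm_sq_eq] at hround
    simpa [column, mul_smul_comm] using hround

lemma abs_sum_abs_sub_sum_abs_le {R : Type*} [AddCommGroup R] [LinearOrder R]
    [IsOrderedAddMonoid R] (x y : ι → R) : abs (∑ j, |x j| - ∑ j, |y j|) ≤ ∑ j, |x j - y j| := by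
  rw [← sum_sub_distrib]
  exact (abs_sum_le_sum_abs _ _).trans (sum_le_sum fun j _ => abs_abs_sub_abs_le _ _)

theorem exists_large_coordinate_of_approx {A : κ → ι → ℤˣ} {x y : ι → ℝ} {γ B : ℝ} (hγ : 0 ≤ γ)
    (hxy : ∑ j, |x j - y j| ≤ (∑ j, |x j|) / 2)
    (herr : ∑ i, (∑ j, A i j • (x j - y j)) ^ 2 ≤ B)
    (hrows : 16 * B <
      #{i | γ * ∑ j, |y j| ≤ ∑ j, A i j • y j} * (γ * ∑ j, |x j|) ^ 2) :
    ∃ i, γ / 4 * ∑ j, |x j| ≤ ∑ j, A i j • x j := by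
  by_contra! hsmall
  have hnorm : γ * ((∑ j, |x j|) / 2) ≤ γ * ∑ j, |y j| := by
    gcongr
    linarith [(abs_le.1 (abs_sum_abs_sub_sum_abs_le x y)).2]
  have hx : 0 ≤ γ * ∑ j, |x j| := mul_nonneg hγ (sum_nonneg fun j _ => abs_nonneg _)
  have hcheb := card_mul_le_sum_of_subset (c := (γ / 4 * ∑ j, |x j|) ^ 2)
    (subset_univ {i | γ * ∑ j, |y j| ≤ ∑ j, A i j • y j})
    (fun i _ => sq_nonneg (∑ j, A i j • (x j - y j))) fun i hi => by
      have hgood := (mem_filter.1 hi).2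
      have hi := hsmall i
      simp only [smul_sub, sum_sub_distrib]
      nlinarith
  linarith

variable [DecidableEq ι]

lemma mem_sparseIntVectors_of_sum_abs_sub_le {T N : ℕ} {x : ι → ℝ} {u : ι → ℤ}
    (hu : ∀ j, x j = 0 → u j = 0) (hx : #{j | x j ≠ 0} ≤ T)
    (hN : ∑ j, |x j| + ∑ j, |x j - u j| ≤ N) : u ∈ sparseIntVectors ι T N := by
  refine mem_sparseIntVectors.2 ⟨(card_le_card fun j => ?_).trans hx, ?_⟩
  · simp only [mem_filter_univ]
    exact mt (hu j)
  · suffices hsum : ((∑ j, (u j).natAbs : ℕ) : ℝ) ≤ N from Nat.cast_le.1 hsum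
    push_cast [Nat.cast_natAbs]
    linarith [(abs_le.1 (abs_sum_abs_sub_sum_abs_le x fun j => (u j : ℝ))).1]

theorem exists_large_coordinate_of_sparse {q T : ℕ} {γ : ℝ} (hq : 2 ≤ q) (hT : 0 < T) (hγ : 0 ≤ γ)
    (hγqT : 64 ≤ γ ^ 2 * q * T) {A : κ → ι → ℤˣ}
    (hA : ∀ u ∈ sparseIntVectors ι T (2 * q * T), (Fintype.card κ / (4 * q) : ℝ) <
      #{i | γ * ∑ j, |(u j : ℝ)| ≤ ∑ j, A i j • (u j : ℝ)})
    {w : ι → ℝ} (hw₀ : #{j | w j ≠ 0} ≤ T) (hw₁ : ∑ j, |w j| = 1) :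
    ∃ i, γ / 4 ≤ ∑ j, A i j • w j := by
  have hq' : (2 : ℝ) ≤ q := by exact_mod_cast hq
  have : (0 : ℝ) < T := Nat.cast_pos.2 hT
  have hM : (0 : ℝ) < q * T := by positivity
  let x (j : ι) : ℝ := q * T * w j
  have hsupp (j : ι) : x j ≠ 0 ↔ w j ≠ 0 := (mul_ne_zero_iff_left hM.ne')
  have hnorm : ∑ j, |x j| = q * T := by
    simp only [x, abs_mul, ← mul_sum, hw₁, Nat.abs_cast, mul_one]
  have hw₀' : (#{j | w j ≠ 0} : ℝ) ≤ T := Nat.cast_le.2 hw₀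
  obtain ⟨u, hu₀, hu₁, herr⟩ := exists_sparse_int_rounding_of_signs A x
  simp only [hsupp] at hu₁ herr
  have hclose : ∑ j, |x j - u j| ≤ (∑ j, |x j|) / 2 := by
    rw [hnorm]
    nlinarith
  have hu : u ∈ sparseIntVectors ι T (2 * q * T) := by
    refine mem_sparseIntVectors_of_sum_abs_sub_le hu₀ (by simpa only [hsupp] using hw₀) ?_
    push_cast
    linarith
  let rows : Finset κ := {i | γ * ∑ j, |(u j : ℝ)| ≤ ∑ j, A i j • (u j : ℝ)}
  have hrows : 16 * (T * Fintype.card κ) < #rows * (γ * ∑ j, |x j|) ^ 2 :=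
    calc 16 * (T * Fintype.card κ : ℝ) < 16 * (T * (#rows * (4 * q))) := by
          gcongr
          exact (div_lt_iff₀ (by positivity)).1 (hA u hu)
      _ = 64 * (#rows * (q * T)) := by ring
      _ ≤ γ ^ 2 * q * T * (#rows * (q * T)) := by gcongr
      _ = #rows * (γ * ∑ j, |x j|) ^ 2 := by rw [hnorm]; ring
  obtain ⟨i, hi⟩ := exists_large_coordinate_of_approx hγ hclose
    (herr.trans (mul_le_mul_of_nonneg_right hw₀' (Nat.cast_nonneg _))) hrows
  refine ⟨i, le_of_mul_le_mul_left ?_ hM⟩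
  calc q * T * (γ / 4) = γ / 4 * ∑ j, |x j| := by rw [hnorm, mul_comm]
    _ ≤ ∑ j, A i j • x j := hi
    _ = q * T * ∑ j, A i j • w j := by simp only [x, mul_sum, mul_smul_comm]

end Coordinates

section SignMatrices

lemma two_mul_add_log_add_two_lt {q R : ℝ} (hq : 4096 ≤ q) (hR : q ^ 4 ≤ R) :
    2 * q + Real.log R + 2 < R / (4 * q) := by
  have hR₀ : 0 ≤ R := le_trans (by positivity) hR
  have hsq : √R ^ 2 = R := Real.sq_sqrt hR₀
  have hqR : q ^ 2 ≤ √R := Real.le_sqrt_of_sq_le (by rwa [← pow_mul])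
  have hR_pos : 0 < √R := lt_of_lt_of_le (by positivity) hqR
  have hlog : Real.log R ≤ 2 * (√R - 1) := by
    rw [← hsq, Real.log_pow, Nat.cast_ofNat, Real.sqrt_sq hR_pos.le]
    gcongr
    exact Real.log_le_sub_one_of_pos hR_pos
  have hq_le : q ≤ √R := (le_self_pow₀ (by linarith) two_ne_zero).trans hqR
  rw [lt_div_iff₀ (by positivity)]
  calc (2 * q + Real.log R + 2) * (4 * q) ≤ 4 * √R * (4 * q) := by
        gcongr
        linarith
    _ = √R * (16 * q) := by ring
    _ < √R * q ^ 2 := by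
        gcongr
        nlinarith
    _ ≤ √R * √R := by gcongr
    _ = R := Real.mul_self_sqrt hR₀

theorem exists_signs_forall_sparseIntVectors {κ ι : Type*} [Fintype κ] [Fintype ι] [DecidableEq ι]
    {m T : ℕ} (hm : 3 ≤ m) (hT : 0 < T)
    (hικ : Fintype.card ι ≤ Fintype.card κ) (hκ : (16 ^ m) ^ 4 * T ≤ Fintype.card κ) :
    ∃ A : κ → ι → ℤˣ, ∀ u ∈ sparseIntVectors ι T (2 * 16 ^ m * T),
      (Fintype.card κ / (4 * (16 ^ m : ℕ)) : ℝ) <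
        #{i | √(min (m / T : ℝ) 1 / 8) * ∑ j, |(u j : ℝ)| ≤ ∑ j, A i j • (u j : ℝ)} := by
  set n := Fintype.card κ
  have hT' : (0 : ℝ) < T := Nat.cast_pos.2 hT
  have hq : (4096 : ℝ) ≤ 16 ^ m :=
    calc (4096 : ℝ) = 16 ^ 3 := by norm_num
      _ ≤ 16 ^ m := pow_le_pow_right₀ (by norm_num) hm
  have hratio : ((16 : ℝ) ^ m) ^ 4 ≤ n / T := (le_div_iff₀ hT').2 (by exact_mod_cast hκ)
  have hnet : (#(sparseIntVectors ι T (2 * 16 ^ m * T)) : ℝ) <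
      Real.exp ((1 / 16 : ℝ) ^ m * n / 4) := by
    refine (card_sparseIntVectors_le _ hT
      ((Nat.le_mul_of_pos_left _ (by positivity)).trans hκ) hικ).trans_lt (Real.exp_lt_exp.2 ?_)
    push_cast
    calc 2 * 16 ^ m * T + T * Real.log (n / T) + 2 * T
        = (2 * 16 ^ m + Real.log (n / T) + 2) * T := by ring
      _ < n / T / (4 * 16 ^ m) * T :=
          mul_lt_mul_of_pos_right (two_mul_add_log_add_two_lt hq hratio) hT'
      _ = (1 / 16 : ℝ) ^ m * n / 4 := by
          rw [one_div, inv_pow]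
          field_simp
  obtain ⟨A, hA⟩ := exists_forall_lt_card_mem (sparseIntVectors ι T (2 * 16 ^ m * T))
    (fun u => {s : ι → ℤˣ | √(min (m / T : ℝ) 1 / 8) * ∑ j, |(u j : ℝ)| ≤ ∑ j, s j • (u j : ℝ)})
    (fun u hu => one_div_sixteen_pow_le_dens_of_sparse (u := fun j => (u j : ℝ)) (by omega)
      (by simpa using (mem_sparseIntVectors.1 hu).1)) hnet
  refine ⟨A, fun u hu => ?_⟩
  simpa [mul_comm, div_eq_mul_inv, mul_assoc, mul_left_comm] using hA u hu

lemma exists_pow_mul_le_and_log_le {n T : ℕ} (hT : 0 < T) (hn : 2 ^ 48 * T ≤ n) :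
    ∃ m : ℕ, 3 ≤ m ∧ (16 ^ m) ^ 4 * T ≤ n ∧ Real.log (n / T) ≤ 32 * m := by
  have hdiv : 2 ^ 48 ≤ n / T := (Nat.le_div_iff_mul_le hT).2 hn
  have hm : 3 ≤ Nat.log (2 ^ 16) (n / T) := Nat.le_log_of_pow_le (by norm_num) (by simpa using hdiv)
  refine ⟨Nat.log (2 ^ 16) (n / T), hm, ?_, ?_⟩
  · rw [← pow_mul, mul_comm _ 4, pow_mul]
    exact (Nat.le_div_iff_mul_le hT).1 (Nat.pow_log_le_self (2 ^ 16) (by omega))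
  · set m := Nat.log (2 ^ 16) (n / T)
    have hT' : (0 : ℝ) < T := Nat.cast_pos.2 hT
    have hn' : (0 : ℝ) < n := Nat.cast_pos.2 (lt_of_lt_of_le (by positivity) hn)
    have hlt : (n / T : ℝ) ≤ 2 ^ (16 * (m + 1)) := by
      rw [div_le_iff₀ hT', pow_mul]
      exact_mod_cast ((Nat.div_lt_iff_lt_mul hT).1
        (Nat.lt_pow_succ_log_self (by norm_num) (n / T))).le
    have hm' : (3 : ℝ) ≤ m := by exact_mod_cast hm
    calc Real.log (n / T) ≤ 16 * (m + 1) * Real.log 2 := by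
          have h := Real.log_le_log (by positivity) hlt
          rw [Real.log_pow] at h
          exact_mod_cast h
      _ ≤ 16 * (m + 1) * 1 := by
          gcongr
          linarith [Real.log_two_lt_d9]
      _ ≤ 32 * m := by linarith

lemma sixtyFour_le_sq_sqrt_min_mul {m T : ℕ} (hm : 3 ≤ m) (hT : 0 < T) :
    64 ≤ √(min (m / T : ℝ) 1 / 8) ^ 2 * (16 ^ m : ℕ) * T := by
  have hT' : (0 : ℝ) < T := Nat.cast_pos.2 hT
  have hmin : 1 ≤ min (m / T : ℝ) 1 * T := by
    rw [min_mul_of_nonneg _ _ hT'.le, div_mul_cancel₀ _ hT'.ne', one_mul]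
    exact le_min (by exact_mod_cast (by omega : 1 ≤ m)) (Nat.one_le_cast.2 hT)
  rw [Real.sq_sqrt (by positivity)]
  calc (64 : ℝ) ≤ 1 / 8 * 16 ^ 3 := by norm_num
    _ ≤ min (m / T : ℝ) 1 * T / 8 * 16 ^ m := by
        gcongr
        norm_num
    _ = min (m / T : ℝ) 1 / 8 * (16 ^ m : ℕ) * T := by
        push_cast
        ring

lemma sqrt_min_div_le {x y T : ℝ} (hT : 0 ≤ T) (hyx : y ≤ 32 * x) :
    √(min (y / T) 1) ≤ 16 * √(min (x / T) 1 / 8) := by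
  rw [show (16 : ℝ) = √(16 ^ 2) from (Real.sqrt_sq (by norm_num)).symm,
    ← Real.sqrt_mul (by norm_num)]
  refine Real.sqrt_le_sqrt ?_
  calc min (y / T) 1 ≤ min (32 * (x / T)) (32 * 1) := by
        rw [← mul_div_assoc]
        gcongr
        norm_num
    _ = 16 ^ 2 * (min (x / T) 1 / 8) := by
        rw [← mul_min_of_nonneg _ _ (by norm_num)]
        ring

end SignMatrices

theorem small_coordinate_matrix_general {κ ι : Type*} [Fintype κ] [Fintype ι] {T : ℕ}
    (hT : 0 < T) (hικ : Fintype.card ι ≤ Fintype.card κ)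
    (hTκ : 2 ^ 48 * T ≤ Fintype.card κ) :
    ∃ A : Matrix κ ι ℝ, (∀ i j, A i j = -1 ∨ A i j = 1) ∧
      ∀ w : ι → ℝ, #{j | w j ≠ 0} ≤ T → ∑ j, |w j| = 1 →
        (⨅ i, A.mulVec w i) ≤
          -(1 / 64 * √(min (Real.log (Fintype.card κ / T) / T) 1)) := by
  obtain ⟨m, hm, hmκ, hlog⟩ := exists_pow_mul_le_and_log_le hT hTκ
  obtain ⟨A, hA⟩ := exists_signs_forall_sparseIntVectors hm hT hικ hmκ
  set γ := √(min (m / T : ℝ) 1 / 8)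
  have hγT : 64 ≤ γ ^ 2 * (16 ^ m : ℕ) * T := sixtyFour_le_sq_sqrt_min_mul hm hT
  have hγlog : 1 / 64 * √(min (Real.log (Fintype.card κ / T) / T) 1) ≤ γ / 4 := by
    linarith [sqrt_min_div_le (Nat.cast_nonneg T) hlog]
  have hq : 2 ≤ 16 ^ m := le_trans (by norm_num) (Nat.le_self_pow (by omega) 16)
  refine ⟨Matrix.of fun i j => A i j • 1, fun i j => ?_, fun w hw₀ hw₁ => ?_⟩
  · rcases Int.units_eq_one_or (A i j) with h | h <;> simp [h, Units.neg_smul]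
  · obtain ⟨i, hi⟩ := exists_large_coordinate_of_sparse hq hT (Real.sqrt_nonneg _) hγT hA
      (w := -w) (by simpa using hw₀) (by simpa using hw₁)
    calc (⨅ i, (Matrix.of fun i j => A i j • (1 : ℝ)).mulVec w i)
        ≤ (Matrix.of fun i j => A i j • (1 : ℝ)).mulVec w i :=
          ciInf_le (Set.finite_range _).bddBelow i
      _ = -∑ j, A i j • (-w) j := by simp [Matrix.mulVec, dotProduct, smul_mul_assoc]
      _ ≤ _ := neg_le_neg (hγlog.trans hi)

/-- For `ln n ≤ T ≤ n/C` there exists `A ∈ {-1,+1}^{n×n}` such that every `T`-sparse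
unit-`ℓ₁` vector `w` has `min_i (Aw)_i ≤ -c √(ln(n/T)/T)`. -/
theorem small_coordinate_matrix :
    ∃ C c : ℝ, 0 < C ∧ 0 < c ∧ ∃ n₀ : ℕ,
      ∀ n : ℕ, n₀ ≤ n → ∀ T : ℕ,
        Real.log n ≤ (T : ℝ) → (T : ℝ) ≤ (n : ℝ) / C →
          ∃ A : Matrix (Fin n) (Fin n) ℝ, (∀ i j, A i j = -1 ∨ A i j = 1) ∧
            ∀ w : Fin n → ℝ, (Finset.univ.filter (fun j => w j ≠ 0)).card ≤ T →
              (∑ j, |w j|) = 1 →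
              (⨅ i, A.mulVec w i) ≤ -(c * Real.sqrt (Real.log ((n : ℝ) / (T : ℝ)) / (T : ℝ))) := by
  refine ⟨2 ^ 48, 1 / 64, by norm_num, by norm_num, 2, fun n hn T hlog hTn => ?_⟩
  have hn₁ : (1 : ℝ) < n := by exact_mod_cast hn
  have hT' : (0 : ℝ) < T := (Real.log_pos hn₁).trans_le hlog
  have hT : 0 < T := Nat.cast_pos.1 hT'
  have hTn' : 2 ^ 48 * T ≤ n := by
    rw [le_div_iff₀ (by norm_num), mul_comm] at hTn
    exact_mod_cast hTn
  have hmin : Real.log (n / T) / T ≤ 1 := by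
    refine div_le_one_of_le₀ (le_trans ?_ hlog) hT'.le
    gcongr
    exact div_le_self (by positivity) (Nat.one_le_cast.2 hT)
  simpa [min_eq_left hmin] using
    small_coordinate_matrix_general (κ := Fin n) (ι := Fin n) hT le_rfl (by simpa using hTn')
end

section
/- There exist universal constants C, c > 0 and an integer n₀ such that for every n ≥ n₀ and every integer T with ln n ≤ T ≤ n/C, there exists a matrix A ∈ {−1,+1}^{n×n} such that, setting ρ* = sup over all w ∈ ℝⁿ with ‖w‖₁ = 1 of min_{1≤i≤n} (Aw)_i, every vector w ∈ ℝⁿ with ‖w‖₀ ≤ T and ‖w‖₁ = 1 satisfies ρ* − min_{1≤i≤n} (Aw)_i ≥ c·√(ln(n/T)/T). -/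
open Finset
open scoped Classical

/-
Take random sign rows on `m = 2kb` coordinates, conditioned on the coordinate sum being at least
`k√b / 4` (heavy rows). Uniform weights then have margin at least `k√b / (4m) = 1 / (8√b)`. For a
set `S` of `kb` coordinates, negating a row on `S` keeps it heavy with probability at least a
constant times `12⁻ᵏ`, because the part of the row off `S` makes up for the part on `S`. Each such
row is therefore, seen from `S`, as likely to be a vector as its negative, and in the spirit of
Wendel's theorem the event that all the rows restricted to `S` lie in an open half-space, i.e. that
some weights supported on `S` have positive margin, has probability at most `2^|S| exp(-pn / 4)`
with `p` of order `12⁻ᵏ`. The symmetrisation is bounded by counting shattered sets (Pajor).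
With `k` of order `log (n / T)` and `kb` of order `T`, a union bound over `S` leaves a choice of `n`
rows for which every `T`-sparse combination has margin at most `0`, while `1 / √b` is of order
`√(log (n / T) / T)`. Repeating columns changes neither fact, and makes the matrix square.
-/

/- The Paley–Zygmund inequality for the uniform measure, cleared of denominators. -/
lemma sq_sum_sub_le_card_mul_sum_sq {ι : Type*} [Fintype ι] (f : ι → ℝ) {c : ℝ} (hc : 0 ≤ c)
    (hf : Fintype.card ι * c ≤ ∑ i, f i) :
    (∑ i, f i - Fintype.card ι * c) ^ 2 ≤ #{i | c ≤ f i} * ∑ i, f i ^ 2 := by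
  have small : ∑ i with ¬ c ≤ f i, f i ≤ Fintype.card ι * c :=
    calc ∑ i with ¬ c ≤ f i, f i ≤ #{i | ¬ c ≤ f i} • c :=
          sum_le_card_nsmul _ _ _ fun i hi => (not_le.1 (mem_filter.1 hi).2).le
      _ ≤ Fintype.card ι * c := by
          rw [nsmul_eq_mul]
          gcongr
          exact card_le_univ _
  have split := sum_filter_add_sum_filter_not univ (fun i => c ≤ f i) f
  calc (∑ i, f i - Fintype.card ι * c) ^ 2 ≤ (∑ i with c ≤ f i, f i) ^ 2 :=
        pow_le_pow_left₀ (by linarith) (by linarith) 2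
    _ ≤ #{i | c ≤ f i} * ∑ i with c ≤ f i, f i ^ 2 := sq_sum_le_card_mul_sum_sq
    _ ≤ #{i | c ≤ f i} * ∑ i, f i ^ 2 := by
        gcongr
        exact filter_subset _ _

section SignSums

variable {ι κ : Type*} [Fintype ι] [Fintype κ]

/-- The sum of a vector of signs, as a real number. Signs are encoded as units of `ℤ`. -/
def signSum (x : ι → ℤˣ) : ℝ := ∑ i, ((x i : ℤ) : ℝ)

lemma signSum_neg (x : ι → ℤˣ) : signSum (-x) = -signSum x := by simp [signSum]

lemma signSum_comp_equiv (e : ι ≃ κ) (x : κ → ℤˣ) : signSum (x ∘ e) = signSum x :=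
  e.sum_comp fun k => ((x k : ℤ) : ℝ)

variable [DecidableEq ι] [DecidableEq κ]

lemma sum_comp_signSum_congr (e : ι ≃ κ) (F : ℝ → ℝ) :
    ∑ x : ι → ℤˣ, F (signSum x) = ∑ x : κ → ℤˣ, F (signSum x) := by
  rw [← (e.symm.arrowCongr (Equiv.refl ℤˣ)).sum_comp]
  exact sum_congr rfl fun x _ => congrArg F (signSum_comp_equiv e x)

lemma sum_comp_signSum_fin_succ (b : ℕ) (F : ℝ → ℝ) :
    ∑ x : Fin (b + 1) → ℤˣ, F (signSum x) =
      ∑ x : Fin b → ℤˣ, (F (1 + signSum x) + F (-1 + signSum x)) := by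
  rw [← (Fin.consEquiv fun _ => ℤˣ).sum_comp, Fintype.sum_prod_type, UnitsInt.univ,
    sum_pair (by decide), ← sum_add_distrib]
  simp [signSum, Fin.consEquiv, Fin.sum_univ_succ]

lemma sum_signSum_sq :
    ∑ x : ι → ℤˣ, signSum x ^ 2 = 2 ^ Fintype.card ι * (Fintype.card ι : ℝ) := by
  rw [sum_comp_signSum_congr (Fintype.equivFin ι) (· ^ 2)]
  induction Fintype.card ι with
  | zero => simp [signSum]
  | succ b ih =>
    have expand (x : Fin b → ℤˣ) :
        (1 + signSum x) ^ 2 + (-1 + signSum x) ^ 2 = 2 * signSum x ^ 2 + 2 := by ring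
    simp only [sum_comp_signSum_fin_succ b fun s => s ^ 2, expand, sum_add_distrib, ← mul_sum, ih,
      sum_const, card_univ, Fintype.card_fun, Fintype.card_units_int,
      Fintype.card_fin, nsmul_eq_mul]
    push_cast
    ring

lemma sum_signSum_pow_four :
    ∑ x : ι → ℤˣ, signSum x ^ 4 =
      2 ^ Fintype.card ι * (3 * (Fintype.card ι : ℝ) ^ 2 - 2 * Fintype.card ι) := by
  rw [sum_comp_signSum_congr (Fintype.equivFin ι) (· ^ 4)]
  induction Fintype.card ι with
  | zero => simp [signSum]
  | succ b ih =>
    have expand (x : Fin b → ℤˣ) : (1 + signSum x) ^ 4 + (-1 + signSum x) ^ 4 =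
        2 * signSum x ^ 4 + 12 * signSum x ^ 2 + 2 := by ring
    simp only [sum_comp_signSum_fin_succ b fun s => s ^ 4, expand, sum_add_distrib, ← mul_sum, ih,
      sum_signSum_sq, sum_const, card_univ, Fintype.card_fun, Fintype.card_units_int,
      Fintype.card_fin, nsmul_eq_mul]
    push_cast
    ring

lemma card_le_abs_signSum_le_two_mul (s : ℝ) :
    #{x : ι → ℤˣ | s ≤ |signSum x|} ≤ 2 * #{x : ι → ℤˣ | s ≤ signSum x} := by
  have symmetric : #{x : ι → ℤˣ | s ≤ -signSum x} = #{x : ι → ℤˣ | s ≤ signSum x} :=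
    card_equiv (Equiv.neg _) fun x => by simp [signSum_neg]
  calc #{x : ι → ℤˣ | s ≤ |signSum x|}
      = #(({x | s ≤ signSum x} : Finset (ι → ℤˣ)) ∪ ({x | s ≤ -signSum x} : Finset _)) := by
        simp_rw [le_abs, filter_or]
    _ ≤ #{x : ι → ℤˣ | s ≤ signSum x} + #{x : ι → ℤˣ | s ≤ -signSum x} := card_union_le _ _
    _ = 2 * #{x : ι → ℤˣ | s ≤ signSum x} := by rw [symmetric, two_mul]

lemma two_pow_card_div_le_card_sqrt_le_signSum [Nonempty ι] :
    (2 : ℝ) ^ Fintype.card ι / 12 ≤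
      #{x : ι → ℤˣ | √(Fintype.card ι) / 2 ≤ signSum x} := by
  set b : ℝ := (Fintype.card ι : ℝ) with hb
  set N : ℝ := 2 ^ Fintype.card ι with hN
  have hb0 : 0 < b := Nat.cast_pos.2 Fintype.card_pos
  have card_signs : (Fintype.card (ι → ℤˣ) : ℝ) = N := by simp [hN]
  have square (x : ι → ℤˣ) : b / 4 ≤ signSum x ^ 2 ↔ √b / 2 ≤ |signSum x| := by
    rw [← sq_le_sq₀ (b := |signSum x|) (by positivity) (abs_nonneg _), sq_abs, div_pow,
      Real.sq_sqrt hb0.le]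
    norm_num
  have paley_zygmund := sq_sum_sub_le_card_mul_sum_sq (fun x : ι → ℤˣ => signSum x ^ 2)
    (c := b / 4) (by positivity) (by
      rw [sum_signSum_sq, card_signs, ← hN, ← hb]
      nlinarith [show 0 < N by positivity])
  simp only [square, ← pow_mul, Nat.reduceMul, sum_signSum_sq, sum_signSum_pow_four,
    card_signs, ← hN, ← hb] at paley_zygmund
  have symmetric : (#{x : ι → ℤˣ | √b / 2 ≤ |signSum x|} : ℝ) ≤
      2 * #{x : ι → ℤˣ | √b / 2 ≤ signSum x} := by
    exact_mod_cast card_le_abs_signSum_le_two_mul (ι := ι) (√b / 2)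
  set P : ℝ := (#{x : ι → ℤˣ | √b / 2 ≤ |signSum x|} : ℝ)
  have : N * b ^ 2 * N * (9 / 16) ≤ N * b ^ 2 * (3 * P) := by
    calc N * b ^ 2 * N * (9 / 16) = (N * b - N * (b / 4)) ^ 2 := by ring
      _ ≤ P * (N * (3 * b ^ 2 - 2 * b)) := paley_zygmund
      _ ≤ P * (N * (3 * b ^ 2)) := by
          gcongr
          linarith
      _ = N * b ^ 2 * (3 * P) := by ring
  have := le_of_mul_le_mul_left ((mul_assoc _ _ _).symm.trans_le this) (by positivity)
  have : 0 < N := by positivity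
  linarith

lemma pow_le_card_mul_sqrt_le_signSum {k b : ℕ} (hb : 0 < b) (hι : Fintype.card ι = k * b) :
    ((2 : ℝ) ^ b / 12) ^ k ≤ #{x : ι → ℤˣ | k * (√b / 2) ≤ signSum x} := by
  have : Nonempty (Fin b) := ⟨⟨0, hb⟩⟩
  let e : ι ≃ Fin k × Fin b := Fintype.equivOfCardEq (by simp [hι])
  let glue (f : Fin k → Fin b → ℤˣ) : ι → ℤˣ := Function.uncurry f ∘ e
  have glue_injective : Function.Injective glue :=
    e.surjective.injective_comp_right.comp (Equiv.curry _ _ _).symm.injective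
  have signSum_glue (f : Fin k → Fin b → ℤˣ) : signSum (glue f) = ∑ i, signSum (f i) := by
    rw [signSum_comp_equiv, signSum, Fintype.sum_prod_type]
    rfl
  set G : Finset (Fin b → ℤˣ) := {x | √b / 2 ≤ signSum x} with hG
  have glue_mem {f : Fin k → Fin b → ℤˣ} (hf : ∀ i, √b / 2 ≤ signSum (f i)) :
      k * (√b / 2) ≤ signSum (glue f) := by
    simpa [signSum_glue] using card_nsmul_le_sum univ (fun i => signSum (f i)) _ fun i _ => hf i
  have card_blocks : #(Fintype.piFinset fun _ : Fin k => G) ≤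
      #{x : ι → ℤˣ | k * (√b / 2) ≤ signSum x} :=
    card_le_card_of_injOn glue (fun f hf => by simpa using glue_mem (by simpa [hG] using hf))
      glue_injective.injOn
  rw [Fintype.card_piFinset_const] at card_blocks
  calc ((2 : ℝ) ^ b / 12) ^ k ≤ (#G : ℝ) ^ k := by
        gcongr
        simpa [hG] using two_pow_card_div_le_card_sqrt_le_signSum (ι := Fin b)
    _ ≤ _ := by exact_mod_cast card_blocks

lemma sq_mul_card_lt_abs_signSum_le {s : ℝ} (hs : 0 ≤ s) :
    s ^ 2 * #{x : ι → ℤˣ | s < |signSum x|} ≤ 2 ^ Fintype.card ι * (Fintype.card ι : ℝ) := by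
  calc s ^ 2 * #{x : ι → ℤˣ | s < |signSum x|}
      = #{x : ι → ℤˣ | s < |signSum x|} • s ^ 2 := by rw [nsmul_eq_mul, mul_comm]
    _ ≤ ∑ x : ι → ℤˣ with s < |signSum x|, signSum x ^ 2 :=
        card_nsmul_le_sum _ _ _ fun x hx =>
          (pow_le_pow_left₀ hs (mem_filter.1 hx).2.le 2).trans_eq (sq_abs _)
    _ ≤ ∑ x : ι → ℤˣ, signSum x ^ 2 :=
        sum_le_sum_of_subset_of_nonneg (filter_subset _ _) fun _ _ _ => sq_nonneg _
    _ = _ := sum_signSum_sq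

lemma two_pow_card_div_two_le_card_abs_signSum_le {s : ℝ} (hs : 0 < s)
    (h : 2 * (Fintype.card ι : ℝ) ≤ s ^ 2) :
    (2 : ℝ) ^ Fintype.card ι / 2 ≤ #{x : ι → ℤˣ | |signSum x| ≤ s} := by
  have chebyshev := sq_mul_card_lt_abs_signSum_le (ι := ι) hs.le
  have partition : (#{x : ι → ℤˣ | |signSum x| ≤ s} + #{x : ι → ℤˣ | s < |signSum x|} : ℝ) =
      2 ^ Fintype.card ι := by
    simp_rw [← not_le]
    exact_mod_cast (card_filter_add_card_filter_not (s := univ) _).trans (by simp)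
  have : s ^ 2 * #{x : ι → ℤˣ | s < |signSum x|} ≤ s ^ 2 * (2 ^ Fintype.card ι / 2) := by
    nlinarith [show (0 : ℝ) < 2 ^ Fintype.card ι by positivity]
  linarith [le_of_mul_le_mul_left this (by positivity)]

end SignSums

section HalfSpaces

lemma linearIndependent_of_forall_exists_dual_sign {R V ι : Type*} [Field R] [LinearOrder R]
    [IsStrictOrderedRing R] [AddCommGroup V] [Module R V] {v : ι → V}
    (h : ∀ s : Set ι, ∃ φ : Module.Dual R V, (∀ i ∈ s, φ (v i) < 0) ∧ ∀ i ∉ s, 0 < φ (v i)) :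
    LinearIndependent R v := by
  refine linearIndependent_iff'.2 fun t c hc i hi => ?_
  obtain ⟨φ, hneg, hpos⟩ := h {j | c j < 0}
  have term_nonneg (j : ι) : 0 ≤ c j * φ (v j) := by
    by_cases hj : c j < 0
    · exact (mul_pos_of_neg_of_neg hj (hneg j hj)).le
    · exact mul_nonneg (not_lt.1 hj) (hpos j hj).le
  have sum_zero : ∑ j ∈ t, c j * φ (v j) = 0 := by
    simpa only [map_sum, map_smul, smul_eq_mul, map_zero] using congrArg φ hc
  have term_zero := (sum_eq_zero_iff_of_nonneg fun j _ => term_nonneg j).1 sum_zero i hi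
  refine (mul_eq_zero.1 term_zero).resolve_right ?_
  by_cases hi : c i < 0
  exacts [(hneg i hi).ne, (hpos i hi).ne']

variable {ι V X : Type*} [AddCommGroup V] [Module ℝ V]

/-- The vectors `v i` all lie in one open half-space whose boundary passes through the origin. -/
def InOpenHalfSpace (v : ι → V) : Prop := ∃ φ : Module.Dual ℝ V, ∀ i, 0 < φ (v i)

variable [Fintype ι] [DecidableEq ι]

lemma card_inOpenHalfSpace_comp_perm [Fintype X] (v : X → V) (σ : Equiv.Perm X) (ε : Finset ι) :
    #{a : ι → X | InOpenHalfSpace (ε.piecewise (v ∘ σ ∘ a) (v ∘ a))} =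
      #{a : ι → X | InOpenHalfSpace (v ∘ a)} := by
  refine card_equiv (Equiv.piCongrRight fun i => if i ∈ ε then σ else Equiv.refl X) fun a => ?_
  have rows : ε.piecewise (v ∘ σ ∘ a) (v ∘ a) =
      v ∘ Equiv.piCongrRight (fun i => if i ∈ ε then σ else Equiv.refl X) a := by
    ext i
    by_cases hi : i ∈ ε <;> simp [hi]
  simp only [mem_filter_univ, rows]

variable [Module.Finite ℝ V]

lemma card_le_finrank_of_shatters_inOpenHalfSpace {u u' : ι → V} {J : Finset ι}
    (hJ : ∀ i ∈ J, u' i = -u i)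
    (hsh : Shatters ({ε | InOpenHalfSpace (ε.piecewise u' u)} : Finset (Finset ι)) J) :
    #J ≤ Module.finrank ℝ V := by
  have independent : LinearIndependent ℝ fun i : J => u i := by
    refine linearIndependent_of_forall_exists_dual_sign fun s => ?_
    obtain ⟨ε, hε, hεJ⟩ := hsh (t := {i ∈ J | ∃ h : i ∈ J, ⟨i, h⟩ ∈ s}) (filter_subset _ _)
    obtain ⟨φ, hφ⟩ := (mem_filter.1 hε).2
    have mem_iff (i : J) : (i : ι) ∈ ε ↔ i ∈ s := by simpa using Finset.ext_iff.1 hεJ i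
    refine ⟨φ, fun i hi => ?_, fun i hi => ?_⟩
    · simpa [(mem_iff i).2 hi, hJ] using hφ i
    · simpa [mt (mem_iff i).1 hi] using hφ i
  simpa using independent.fintype_card_le_finrank

variable [DecidableEq V]

/- By Pajor's inequality it is enough to count the shattered sets. Each of them contains at most
`finrank ℝ V` of the indices with `u' i = -u i`, so weighting these indices by `1 / 2` costs a
factor `2 ^ finrank ℝ V`, and the sum of the weights over all sets factors as a product. -/
lemma card_inOpenHalfSpace_piecewise_le (u u' : ι → V) :
    (#{ε : Finset ι | InOpenHalfSpace (ε.piecewise u' u)} : ℝ) ≤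
      2 ^ Module.finrank ℝ V * ∏ i, (1 + if u' i = -u i then (1 / 2 : ℝ) else 1) := by
  set 𝒜 : Finset (Finset ι) := {ε | InOpenHalfSpace (ε.piecewise u' u)}
  have prod_weights (J : Finset ι) :
      ∏ i ∈ J, (if u' i = -u i then (1 / 2 : ℝ) else 1) = (1 / 2) ^ #{i ∈ J | u' i = -u i} := by
    rw [← prod_filter, prod_const]
  have one_le_weight {J : Finset ι} (hJ : J ∈ 𝒜.shatterer) : (1 : ℝ) ≤
      2 ^ Module.finrank ℝ V * ∏ i ∈ J, (if u' i = -u i then (1 / 2 : ℝ) else 1) := by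
    have card_le : #{i ∈ J | u' i = -u i} ≤ Module.finrank ℝ V :=
      card_le_finrank_of_shatters_inOpenHalfSpace (fun i hi => (mem_filter.1 hi).2)
        ((mem_shatterer.1 hJ).mono_right (filter_subset _ _))
    calc (1 : ℝ) = 2 ^ Module.finrank ℝ V * (1 / 2) ^ Module.finrank ℝ V := by
          rw [← mul_pow]
          norm_num
      _ ≤ 2 ^ Module.finrank ℝ V * (1 / 2) ^ #{i ∈ J | u' i = -u i} :=
          mul_le_mul_of_nonneg_left
            (pow_le_pow_of_le_one (by norm_num) (by norm_num) card_le) (by positivity)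
      _ = _ := by rw [prod_weights]
  calc (#𝒜 : ℝ) ≤ #𝒜.shatterer := by exact_mod_cast card_le_card_shatterer 𝒜
    _ = ∑ _J ∈ 𝒜.shatterer, (1 : ℝ) := by simp
    _ ≤ ∑ J ∈ 𝒜.shatterer, 2 ^ Module.finrank ℝ V *
          ∏ i ∈ J, (if u' i = -u i then (1 / 2 : ℝ) else 1) := sum_le_sum fun _ => one_le_weight
    _ ≤ ∑ J : Finset ι, 2 ^ Module.finrank ℝ V *
          ∏ i ∈ J, (if u' i = -u i then (1 / 2 : ℝ) else 1) := by
        refine sum_le_sum_of_subset_of_nonneg (subset_univ _) fun J _ _ => ?_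
        rw [prod_weights]
        positivity
    _ = _ := by rw [← mul_sum, prod_one_add, powerset_univ]

variable [Fintype X]

lemma card_inOpenHalfSpace_le (v : X → V) (σ : Equiv.Perm X) :
    (#{a : ι → X | InOpenHalfSpace (v ∘ a)} : ℝ) ≤ 2 ^ Module.finrank ℝ V *
      (Fintype.card X - #{x | v (σ x) = -v x} / 4 : ℝ) ^ Fintype.card ι := by
  have row_weights : ∑ x, (1 + if v (σ x) = -v x then (1 / 2 : ℝ) else 1) =
      2 * (Fintype.card X - #{x | v (σ x) = -v x} / 4 : ℝ) := by
    have weight (x : X) : (1 + if v (σ x) = -v x then (1 / 2 : ℝ) else 1) =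
        2 - (if v (σ x) = -v x then 1 else 0) / 2 := by
      split_ifs <;> norm_num
    simp only [weight, sum_sub_distrib, ← sum_div, sum_boole, sum_const, card_univ, nsmul_eq_mul]
    ring
  refine le_of_mul_le_mul_left ?_ (show (0 : ℝ) < 2 ^ Fintype.card ι by positivity)
  calc (2 : ℝ) ^ Fintype.card ι * #{a : ι → X | InOpenHalfSpace (v ∘ a)}
      = ∑ ε : Finset ι,
          (#{a : ι → X | InOpenHalfSpace (ε.piecewise (v ∘ σ ∘ a) (v ∘ a))} : ℝ) := by
        simp [card_inOpenHalfSpace_comp_perm]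
    _ = ∑ a : ι → X,
          (#{ε : Finset ι | InOpenHalfSpace (ε.piecewise (v ∘ σ ∘ a) (v ∘ a))} : ℝ) := by
        simp_rw [← sum_boole]
        exact sum_comm
    _ ≤ ∑ a : ι → X, 2 ^ Module.finrank ℝ V *
          ∏ i, (1 + if v (σ (a i)) = -v (a i) then (1 / 2 : ℝ) else 1) :=
        sum_le_sum fun a _ => card_inOpenHalfSpace_piecewise_le _ _
    _ = 2 ^ Module.finrank ℝ V *
          (∑ x, (1 + if v (σ x) = -v x then (1 / 2 : ℝ) else 1)) ^ Fintype.card ι := by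
        rw [← mul_sum, ← card_univ, ← prod_const, Fintype.prod_sum]
    _ = _ := by
        rw [row_weights, mul_pow]
        ring

lemma card_inOpenHalfSpace_le_exp (v : X → V) (σ : Equiv.Perm X) {p : ℝ}
    (hp : p * Fintype.card X ≤ #{x | v (σ x) = -v x}) :
    (#{a : ι → X | InOpenHalfSpace (v ∘ a)} : ℝ) ≤ 2 ^ Module.finrank ℝ V *
      (Fintype.card X ^ Fintype.card ι * Real.exp (-(p / 4 * Fintype.card ι))) := by
  have card_le : (#{x | v (σ x) = -v x} : ℝ) ≤ Fintype.card X := by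
    exact_mod_cast card_le_univ _
  have base_le : (Fintype.card X - #{x | v (σ x) = -v x} / 4 : ℝ) ≤
      Fintype.card X * Real.exp (-(p / 4)) := by
    calc (Fintype.card X - #{x | v (σ x) = -v x} / 4 : ℝ) ≤ Fintype.card X * (-(p / 4) + 1) := by
          linarith
      _ ≤ _ := by
          gcongr
          exact Real.add_one_le_exp _
  calc (#{a : ι → X | InOpenHalfSpace (v ∘ a)} : ℝ) ≤ 2 ^ Module.finrank ℝ V *
        (Fintype.card X - #{x | v (σ x) = -v x} / 4 : ℝ) ^ Fintype.card ι :=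
        card_inOpenHalfSpace_le v σ
    _ ≤ 2 ^ Module.finrank ℝ V * (Fintype.card X * Real.exp (-(p / 4))) ^ Fintype.card ι := by
        gcongr
        linarith [(Nat.cast_nonneg _ : (0 : ℝ) ≤ Fintype.card X)]
    _ = _ := by
        rw [mul_pow, ← Real.exp_nat_mul]
        ring_nf

end HalfSpaces

lemma two_pow_mul_exp_neg_lt_one {m : ℕ} {x : ℝ} (h : m < x) : 2 ^ m * Real.exp (-x) < 1 := by
  calc 2 ^ m * Real.exp (-x) ≤ Real.exp 1 ^ m * Real.exp (-x) := by
        gcongr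
        linarith [Real.add_one_le_exp 1]
    _ = Real.exp (m - x) := by
        rw [← Real.exp_nat_mul, ← Real.exp_add, mul_one, sub_eq_add_neg]
    _ < 1 := Real.exp_lt_one_iff.2 (sub_neg.2 h)

section NegOn

variable {α : Type*}

/-- The sign vector obtained from `x` by changing the signs at the coordinates in `S`. -/
noncomputable def negOn (S : Finset α) (x : α → ℤˣ) : α → ℤˣ := S.piecewise (-x) x

lemma negOn_negOn (S : Finset α) (x : α → ℤˣ) : negOn S (negOn S x) = x := by
  ext k
  by_cases hk : k ∈ S <;> simp [negOn, hk]

/-- The restriction of a sign vector to the coordinates in `S`, as a real vector. A weight vector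
supported on `S` is a linear form on `S → ℝ`, and its margin on the example `x` is the value of that
form at `signRestrict S x`. -/
def signRestrict (S : Finset α) (x : α → ℤˣ) : S → ℝ := fun k => ((x k : ℤ) : ℝ)

lemma signRestrict_negOn (S : Finset α) (x : α → ℤˣ) :
    signRestrict S (negOn S x) = -signRestrict S x := by
  ext k
  simp [signRestrict, negOn]

variable [Fintype α]

/-- The sign vectors with sum at least `s`. -/
abbrev HeavySigns (α : Type*) [Fintype α] (s : ℝ) : Type _ := {x : α → ℤˣ // s ≤ signSum x}

/-- `negOn S` as an involution of `HeavySigns α s`: the vectors whose negation on `S` is no longer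
heavy are left fixed. -/
noncomputable def negOnHeavy (s : ℝ) (S : Finset α) (x : HeavySigns α s) : HeavySigns α s :=
  if h : s ≤ signSum (negOn S x) then ⟨negOn S x, h⟩ else x

lemma negOnHeavy_involutive (s : ℝ) (S : Finset α) : Function.Involutive (negOnHeavy s S) := by
  intro x
  by_cases h : s ≤ signSum (negOn S x)
  · simp [negOnHeavy, h, negOn_negOn, x.2]
  · simp [negOnHeavy, h]

variable [DecidableEq α]

lemma signSum_mem_add_signSum_notMem (S : Finset α) (x : α → ℤˣ) :
    signSum (fun k : {k // k ∈ S} => x k) + signSum (fun k : {k // k ∉ S} => x k) = signSum x := by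
  rw [signSum, signSum, signSum, ← sum_subtype Sᶜ (fun _ => mem_compl) fun k => ((x k : ℤ) : ℝ),
    sum_coe_sort S fun k => ((x k : ℤ) : ℝ), sum_add_sum_compl]

lemma signSum_negOn (S : Finset α) (x : α → ℤˣ) :
    signSum (negOn S x) =
      -signSum (fun k : {k // k ∈ S} => x k) + signSum (fun k : {k // k ∉ S} => x k) := by
  rw [← signSum_mem_add_signSum_notMem S, ← signSum_neg]
  congr 2
  · ext k
    simp [negOn]
  · ext k
    simp [negOn, k.2]

lemma card_mul_card_le_card_heavySigns (s : ℝ) (S : Finset α) :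
    #{y : {k // k ∈ S} → ℤˣ | |signSum y| ≤ s} * #{z : {k // k ∉ S} → ℤˣ | 2 * s ≤ signSum z} ≤
      #{x : HeavySigns α s | s ≤ signSum (negOn S x)} := by
  let E : Finset (α → ℤˣ) := {x | |signSum fun k : {k // k ∈ S} => x k| ≤ s ∧
    2 * s ≤ signSum fun k : {k // k ∉ S} => x k}
  have heavy {x : α → ℤˣ} (hx : x ∈ E) : s ≤ signSum x ∧ s ≤ signSum (negOn S x) := by
    obtain ⟨h_abs, h_compl⟩ := (mem_filter.1 hx).2
    rw [signSum_negOn, ← signSum_mem_add_signSum_notMem S x]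
    constructor <;> linarith [abs_le.1 h_abs]
  rw [← card_product, ← filter_product, univ_product_univ]
  calc _ = #E := (card_equiv (Equiv.piEquivPiSubtypeProd (· ∈ S) fun _ => ℤˣ) fun x => by
        simp only [E, mem_filter_univ, Equiv.piEquivPiSubtypeProd_apply]).symm
    _ = #(E.subtype (s ≤ signSum ·)) := by
        rw [card_subtype, filter_true_of_mem fun x hx => (heavy hx).1]
    _ ≤ _ := card_le_card fun x hx => by simpa using (heavy (mem_subtype.1 hx)).2

lemma le_card_heavySigns_le_signSum_negOn {k b : ℕ} (hk : 32 ≤ k) (hb : 0 < b) {S : Finset α}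
    (hS : #S = k * b) (hα : Fintype.card α = 2 * (k * b)) :
    (1 / 12 : ℝ) ^ k / 2 * 2 ^ Fintype.card α ≤
      #{x : HeavySigns α (k * √b / 4) | k * √b / 4 ≤ signSum (negOn S x)} := by
  set s : ℝ := k * √b / 4
  have hk' : (32 : ℝ) ≤ k := by exact_mod_cast hk
  have hb' : (0 : ℝ) < b := by exact_mod_cast hb
  have card_S : Fintype.card {k // k ∈ S} = k * b := by rw [Fintype.card_coe, hS]
  have card_not_S : Fintype.card {k // k ∉ S} = k * b := by
    rw [Fintype.card_subtype_compl, hα, card_S]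
    lia
  have variance_le : 2 * (Fintype.card {k // k ∈ S} : ℝ) ≤ s ^ 2 := by
    calc 2 * (Fintype.card {k // k ∈ S} : ℝ) = 32 * (k * b) / 16 := by
          rw [card_S]
          push_cast
          ring
      _ ≤ k * (k * b) / 16 := by gcongr
      _ = s ^ 2 := by
          rw [div_pow, mul_pow, Real.sq_sqrt hb'.le]
          ring
  have central : (2 : ℝ) ^ (k * b) / 2 ≤ #{y : {k // k ∈ S} → ℤˣ | |signSum y| ≤ s} := by
    rw [← card_S]
    exact two_pow_card_div_two_le_card_abs_signSum_le (by positivity) variance_le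
  have tail : ((2 : ℝ) ^ b / 12) ^ k ≤ #{z : {k // k ∉ S} → ℤˣ | 2 * s ≤ signSum z} := by
    rw [show 2 * s = k * (√b / 2) by ring]
    exact pow_le_card_mul_sqrt_le_signSum hb card_not_S
  calc (1 / 12 : ℝ) ^ k / 2 * 2 ^ Fintype.card α
      = (2 : ℝ) ^ (k * b) / 2 * (2 ^ b / 12) ^ k := by
        rw [hα, two_mul, pow_add, div_pow (2 ^ b : ℝ), ← pow_mul, mul_comm b k, one_div_pow]
        ring
    _ ≤ #{y : {k // k ∈ S} → ℤˣ | |signSum y| ≤ s} *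
          #{z : {k // k ∉ S} → ℤˣ | 2 * s ≤ signSum z} := by gcongr
    _ ≤ _ := by exact_mod_cast card_mul_card_le_card_heavySigns s S

lemma card_inOpenHalfSpace_signRestrict_le {ι : Type*} [Fintype ι] [DecidableEq ι] {p s : ℝ}
    {S : Finset α} (hp : p * Fintype.card (HeavySigns α s) ≤
      #{x : HeavySigns α s | s ≤ signSum (negOn S x)}) :
    (#{a : ι → HeavySigns α s | InOpenHalfSpace fun i => signRestrict S (a i)} : ℝ) ≤
      2 ^ #S * (Fintype.card (HeavySigns α s) ^ Fintype.card ι *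
        Real.exp (-(p / 4 * Fintype.card ι))) := by
  let v (x : HeavySigns α s) : S → ℝ := signRestrict S x
  let σ : Equiv.Perm (HeavySigns α s) := (negOnHeavy_involutive s S).toPerm
  have negated (x : HeavySigns α s) (hx : s ≤ signSum (negOn S x)) : v (σ x) = -v x := by
    simp [v, σ, negOnHeavy, hx, signRestrict_negOn]
  simpa [v, Function.comp_def] using card_inOpenHalfSpace_le_exp (ι := ι) v σ
    (hp.trans (by exact_mod_cast card_le_card (monotone_filter_right _ fun x _ => negated x)))

lemma exists_forall_not_inOpenHalfSpace_signRestrict {ι : Type*} [Fintype ι] {p s : ℝ} {t : ℕ}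
    [Nonempty (HeavySigns α s)]
    (hp : ∀ S : Finset α, #S = t → p * Fintype.card (HeavySigns α s) ≤
      #{x : HeavySigns α s | s ≤ signSum (negOn S x)})
    (hι : Fintype.card α + t < p / 4 * Fintype.card ι) :
    ∃ a : ι → HeavySigns α s, ∀ S : Finset α, #S = t →
      ¬ InOpenHalfSpace fun i => signRestrict S (a i) := by
  set H : ℝ := Fintype.card (HeavySigns α s) ^ Fintype.card ι with hH
  have H_pos : 0 < H := by positivity
  let bad (S : Finset α) : Finset (ι → HeavySigns α s) :=
    {a | InOpenHalfSpace fun i => signRestrict S (a i)}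
  have union_lt : (#((powersetCard t univ).biUnion bad) : ℝ) <
      #(univ : Finset (ι → HeavySigns α s)) := by
    calc (#((powersetCard t univ).biUnion bad) : ℝ)
        ≤ ∑ S ∈ powersetCard t univ, (#(bad S) : ℝ) := by exact_mod_cast card_biUnion_le
      _ ≤ ∑ S ∈ powersetCard t (univ : Finset α),
            2 ^ t * (H * Real.exp (-(p / 4 * Fintype.card ι))) := by
          refine sum_le_sum fun S hS => ?_
          have card_S := (mem_powersetCard.1 hS).2
          rw [← card_S]
          exact card_inOpenHalfSpace_signRestrict_le (hp S card_S)
      _ = (Fintype.card α).choose t * (2 ^ t * (H * Real.exp (-(p / 4 * Fintype.card ι)))) := by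
          rw [sum_const, card_powersetCard, card_univ, nsmul_eq_mul]
      _ ≤ 2 ^ Fintype.card α * (2 ^ t * (H * Real.exp (-(p / 4 * Fintype.card ι)))) := by
          gcongr
          exact_mod_cast Nat.choose_le_two_pow _ _
      _ = H * (2 ^ (Fintype.card α + t) * Real.exp (-(p / 4 * Fintype.card ι))) := by ring
      _ < H := mul_lt_of_lt_one_right H_pos
          (two_pow_mul_exp_neg_lt_one (by exact_mod_cast hι))
      _ = _ := by simp [hH]
  obtain ⟨a, -, ha⟩ := exists_mem_notMem_of_card_lt_card (Nat.cast_lt.1 union_lt)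
  refine ⟨a, fun S hS hsep => ha ?_⟩
  exact mem_biUnion.2 ⟨S, mem_powersetCard.2 ⟨subset_univ S, hS⟩, mem_filter.2 ⟨mem_univ a, hsep⟩⟩

end NegOn

lemma exists_heavySigns_forall_not_inOpenHalfSpace {α ι : Type*} [Fintype α] [Fintype ι]
    {k b : ℕ} (hk : 32 ≤ k) (hb : 0 < b) (hα : Fintype.card α = 2 * (k * b))
    (hι : 24 * 12 ^ k * (k * b : ℝ) < Fintype.card ι) :
    ∃ a : ι → HeavySigns α (k * √b / 4), ∀ S : Finset α, #S = k * b →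
      ¬ InOpenHalfSpace fun i => signRestrict S (a i) := by
  have flippable {S : Finset α} (hS : #S = k * b) :=
    le_card_heavySigns_le_signSum_negOn hk hb hS hα
  have : Nonempty (HeavySigns α (k * √b / 4)) := by
    obtain ⟨S, -, hS⟩ := exists_subset_card_eq (s := (univ : Finset α)) (n := k * b)
      (by rw [card_univ, hα]; lia)
    have : 0 < #{x : HeavySigns α (k * √b / 4) | k * √b / 4 ≤ signSum (negOn S x)} :=
      Nat.cast_pos.1 ((by positivity : (0 : ℝ) < _).trans_le (flippable hS))
    exact ⟨(card_pos.1 this).choose⟩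
  refine exists_forall_not_inOpenHalfSpace_signRestrict (p := (1 / 12) ^ k / 2)
    (fun S hS => le_trans ?_ (flippable hS)) ?_
  · gcongr
    exact_mod_cast (Fintype.card_subtype_le _).trans (by simp)
  · rw [hα]
    push_cast
    rw [one_div_pow]
    field_simp
    linarith

section Margins

variable {ι κ α : Type*} [Fintype κ] [Fintype α]

lemma mulVec_extend_zero {R : Type*} [NonUnitalNonAssocSemiring R] (A : Matrix ι κ R) {g : α → κ}
    (hg : Function.Injective g) (w : α → R) :
    A.mulVec (Function.extend g w 0) = (A.submatrix id g).mulVec w := by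
  ext i
  refine (Fintype.sum_of_injective g hg _ _ (fun j hj => ?_) fun k => ?_).symm
  · rw [Function.extend_apply' _ _ _ hj, Pi.zero_apply, mul_zero]
  · simp only [Matrix.submatrix_apply, id, hg.extend_apply]

lemma submatrix_id_mulVec {R : Type*} [NonUnitalNonAssocSemiring R] [DecidableEq α]
    (B : Matrix ι α R) (f : κ → α) (w : κ → R) :
    (B.submatrix id f).mulVec w = B.mulVec fun k => ∑ j with f j = k, w j := by
  ext i
  simp_rw [Matrix.mulVec, dotProduct, mul_sum]
  rw [← sum_fiberwise univ f]
  refine sum_congr rfl fun k _ => sum_congr rfl fun j hj => ?_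
  rw [Matrix.submatrix_apply, id, (mem_filter.1 hj).2]

/-- The minimal margin over the examples `ι` of the combination of the hypotheses `κ` with
weights `w`; the entry `A i j` is positive when hypothesis `j` is right about example `i`. -/
noncomputable def margin (A : Matrix ι κ ℝ) (w : κ → ℝ) : ℝ := ⨅ i, A.mulVec w i

/-- The optimal minimal margin `ρ*`, over all weights of `ℓ₁` norm one. -/
noncomputable def optimalMargin (A : Matrix ι κ ℝ) : ℝ :=
  ⨆ u : {u : κ → ℝ // (∑ j, |u j|) = 1}, margin A u.1

variable [Finite ι]

lemma margin_le_sum_abs [Nonempty ι] {A : Matrix ι κ ℝ} (hA : ∀ i j, |A i j| ≤ 1) (w : κ → ℝ) :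
    margin A w ≤ ∑ j, |w j| := by
  have i : ι := Classical.arbitrary ι
  refine (ciInf_le (Finite.bddBelow_range _) i).trans (sum_le_sum fun j _ => ?_)
  calc A i j * w j ≤ |A i j| * |w j| := (le_abs_self _).trans_eq (abs_mul _ _)
    _ ≤ |w j| := mul_le_of_le_one_left (abs_nonneg _) (hA i j)

lemma margin_le_optimalMargin [Nonempty ι] {A : Matrix ι κ ℝ} (hA : ∀ i j, |A i j| ≤ 1)
    {w : κ → ℝ} (hw : ∑ j, |w j| = 1) : margin A w ≤ optimalMargin A :=
  le_ciSup (f := fun u : {u : κ → ℝ // (∑ j, |u j|) = 1} => margin A u.1)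
    ⟨1, Set.forall_mem_range.2 fun u => (margin_le_sum_abs hA u.1).trans_eq u.2⟩ ⟨w, hw⟩

lemma div_card_le_optimalMargin [Nonempty ι] [Nonempty α] {A : Matrix ι κ ℝ}
    (hA : ∀ i j, |A i j| ≤ 1) {g : α → κ} (hg : Function.Injective g) {θ : ℝ}
    (hθ : ∀ i, θ ≤ ∑ k, A i (g k)) : θ / Fintype.card α ≤ optimalMargin A := by
  let u : α → ℝ := fun _ => 1 / Fintype.card α
  have card_ne_zero : (Fintype.card α : ℝ) ≠ 0 := Nat.cast_ne_zero.2 Fintype.card_ne_zero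
  have norm_extend : ∑ j, |Function.extend g u 0 j| = 1 := by
    rw [← Fintype.sum_of_injective g hg (fun k => |u k|)]
    · simp [u, card_ne_zero]
    · intro j hj
      rw [Function.extend_apply' _ _ _ hj, Pi.zero_apply, abs_zero]
    · intro k
      rw [hg.extend_apply]
  refine le_trans (le_ciInf fun i => ?_) (margin_le_optimalMargin hA norm_extend)
  calc θ / Fintype.card α ≤ (∑ k, A i (g k)) / Fintype.card α := by
        gcongr
        exact hθ i
    _ = A.mulVec (Function.extend g u 0) i := by
        rw [mulVec_extend_zero A hg, sum_div]
        simp only [Matrix.mulVec, dotProduct, Matrix.submatrix_apply, id, u, mul_one_div]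

lemma margin_nonpos_of_not_inOpenHalfSpace {B : Matrix ι α ℝ} {S : Finset α}
    (hB : ¬ InOpenHalfSpace fun i => fun k : S => B i k) {w : α → ℝ} (hw : ∀ k ∉ S, w k = 0) :
    margin B w ≤ 0 := by
  by_contra! hpos
  refine hB ⟨Fintype.linearCombination ℝ fun k : S => w k, fun i => ?_⟩
  calc 0 < B.mulVec w i := hpos.trans_le (ciInf_le (Finite.bddBelow_range _) i)
    _ = ∑ k ∈ S, B i k * w k :=
        (sum_subset (subset_univ S) fun k _ hk => by rw [hw k hk, mul_zero]).symm
    _ = _ := by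
        rw [← sum_coe_sort, Fintype.linearCombination_apply]
        rfl

lemma margin_submatrix_id_nonpos {B : Matrix ι α ℝ} {t : ℕ} (ht : t ≤ Fintype.card α)
    (hB : ∀ S : Finset α, #S = t → ¬ InOpenHalfSpace fun i => fun k : S => B i k)
    (f : κ → α) {w : κ → ℝ} (hw : #{j | w j ≠ 0} ≤ t) : margin (B.submatrix id f) w ≤ 0 := by
  obtain ⟨S, support_subset, card_S⟩ := exists_superset_card_eq
    (s := ({j | w j ≠ 0} : Finset κ).image f) (card_image_le.trans hw) ht
  rw [margin, submatrix_id_mulVec]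
  refine margin_nonpos_of_not_inOpenHalfSpace (hB S card_S) fun k hk => sum_eq_zero fun j hj => ?_
  by_contra hne
  exact hk (support_subset (mem_image.2 ⟨j, by simpa using hne, (mem_filter.1 hj).2⟩))

lemma exists_matrix_div_card_le_optimalMargin_sub_margin [Nonempty ι] [Nonempty α]
    (hακ : Fintype.card α ≤ Fintype.card κ) {θ : ℝ} {t : ℕ} (ht : t ≤ Fintype.card α)
    (a : ι → HeavySigns α θ)
    (ha : ∀ S : Finset α, #S = t → ¬ InOpenHalfSpace fun i => signRestrict S (a i)) :
    ∃ A : Matrix ι κ ℝ, (∀ i j, A i j = -1 ∨ A i j = 1) ∧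
      ∀ w : κ → ℝ, #{j | w j ≠ 0} ≤ t →
        θ / Fintype.card α ≤ optimalMargin A - margin A w := by
  obtain ⟨g⟩ := Function.Embedding.nonempty_of_card_le hακ
  let B : Matrix ι α ℝ := Matrix.of fun i k => (((a i).1 k : ℤ) : ℝ)
  let A : Matrix ι κ ℝ := B.submatrix id (Function.invFun g)
  have signs (i : ι) (j : κ) : A i j = -1 ∨ A i j = 1 := by
    rcases Int.units_eq_one_or ((a i).1 (Function.invFun g j)) with h | h <;> simp [A, B, h]
  have abs_le (i : ι) (j : κ) : |A i j| ≤ 1 := by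
    rcases signs i j with h | h <;> simp [h]
  refine ⟨A, signs, fun w hw => ?_⟩
  have optimal : θ / Fintype.card α ≤ optimalMargin A :=
    div_card_le_optimalMargin abs_le g.injective fun i => by
      simpa [A, B, Function.leftInverse_invFun g.injective _, signSum] using (a i).2
  have sparse : margin A w ≤ 0 := margin_submatrix_id_nonpos ht ha _ hw
  linarith

end Margins

lemma exists_block_sizes {L : ℝ} {T : ℕ} (hL : 128 ≤ L) (hLT : L ≤ T) :
    ∃ k b : ℕ, 32 ≤ k ∧ k ≤ L / 4 ∧ 0 < b ∧ T ≤ k * b ∧ k * b ≤ 2 * T ∧ b * L ≤ 16 * T := by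
  set k := ⌊L / 4⌋₊
  have k_le : (k : ℝ) ≤ L / 4 := Nat.floor_le (by linarith)
  have lt_k : L / 4 < k + 1 := Nat.lt_floor_add_one _
  have k_ge : 32 ≤ k := Nat.le_floor (by push_cast; linarith)
  have k_le_T : k ≤ T := Nat.cast_le.1 (by linarith : (k : ℝ) ≤ T)
  have div_add_mod := Nat.div_add_mod T k
  have mod_lt := Nat.mod_lt T (show 0 < k by lia)
  have : k * (T / k + 1) = k * (T / k) + k := Nat.mul_succ _ _
  have kb_le : k * (T / k + 1) ≤ 2 * T := by lia
  refine ⟨k, T / k + 1, k_ge, k_le, Nat.succ_pos _, by lia, kb_le, ?_⟩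
  have L_le : L ≤ 8 * k := by linarith
  calc ((T / k + 1 : ℕ) : ℝ) * L ≤ (T / k + 1 : ℕ) * (8 * k) := by gcongr
    _ = 8 * (k * (T / k + 1) : ℕ) := by
        push_cast
        ring
    _ ≤ 8 * (2 * T : ℕ) := by gcongr
    _ = 16 * T := by
        push_cast
        ring

lemma mul_twelve_pow_lt_exp {k : ℕ} (hk : 32 ≤ k) {L : ℝ} (hL : k ≤ L / 4) :
    48 * (12 : ℝ) ^ k < Real.exp L := by
  calc 48 * (12 : ℝ) ^ k < 4 ^ k * 12 ^ k := by
        gcongr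
        exact (by norm_num : (48 : ℝ) < 4 ^ 32).trans_le (pow_le_pow_right₀ (by norm_num) hk)
    _ = (48 : ℝ) ^ k := by
        rw [← mul_pow]
        norm_num
    _ ≤ (Real.exp 1 ^ 4) ^ k := by
        have := Real.exp_one_gt_d9.le
        gcongr
        calc (48 : ℝ) ≤ 2.7182818283 ^ 4 := by norm_num
          _ ≤ Real.exp 1 ^ 4 := by gcongr
    _ = Real.exp (4 * k) := by
        rw [← pow_mul, ← Real.exp_nat_mul]
        push_cast
        rw [mul_one]
    _ ≤ Real.exp L := Real.exp_le_exp.2 (by linarith)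

lemma sqrt_div_le_sqrt_div_card {k b T L : ℝ} (hk : 0 < k) (hb : 0 < b) (hT : 0 < T)
    (h : b * L ≤ 16 * T) : 1 / 32 * √(L / T) ≤ k * √b / 4 / (2 * (k * b)) := by
  have ratio_le : L / T ≤ 4 ^ 2 / b := by
    rw [div_le_div_iff₀ hT hb]
    linarith
  calc 1 / 32 * √(L / T) ≤ 1 / 32 * (4 / √b) := by
        gcongr
        rw [← Real.sqrt_sq (show (0 : ℝ) ≤ 4 by norm_num), ← Real.sqrt_div (by positivity)]
        exact Real.sqrt_le_sqrt ratio_le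
    _ = k * √b / 4 / (2 * (k * b)) := by
        field_simp
        rw [Real.sq_sqrt hb.le]
        norm_num

theorem gap_lower_bound_general {ι κ : Type*} [Fintype ι] [Fintype κ] {T : ℕ} (hT : 0 < T)
    (hlog : Real.log (Fintype.card ι / T) ≤ T) (hι : Real.exp 128 * T ≤ Fintype.card ι)
    (hκ : 4 * T ≤ Fintype.card κ) :
    ∃ A : Matrix ι κ ℝ, (∀ i j, A i j = -1 ∨ A i j = 1) ∧
      ∀ w : κ → ℝ, #{j | w j ≠ 0} ≤ T →
        1 / 32 * √(Real.log (Fintype.card ι / T) / T) ≤ optimalMargin A - margin A w := by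
  have T_pos : (0 : ℝ) < T := Nat.cast_pos.2 hT
  have rows_pos : (0 : ℝ) < Fintype.card ι := (by positivity : 0 < Real.exp 128 * T).trans_le hι
  have : Nonempty ι := Fintype.card_pos_iff.1 (Nat.cast_pos.1 rows_pos)
  have hL : 128 ≤ Real.log (Fintype.card ι / T) := by
    rwa [Real.le_log_iff_exp_le (by positivity), le_div_iff₀ T_pos]
  obtain ⟨k, b, hk, hkL, hb, hT_le, hle_T, hbL⟩ := exists_block_sizes hL hlog
  have enough_rows : 24 * 12 ^ k * (k * b : ℝ) < Fintype.card ι := by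
    calc 24 * 12 ^ k * (k * b : ℝ) ≤ 24 * 12 ^ k * (2 * T) := by
          gcongr 24 * 12 ^ k * ?_
          exact_mod_cast hle_T
      _ = 48 * 12 ^ k * T := by ring
      _ < Real.exp (Real.log (Fintype.card ι / T)) * T := by
          gcongr
          exact mul_twelve_pow_lt_exp hk hkL
      _ = Fintype.card ι := by rw [Real.exp_log (by positivity), div_mul_cancel₀ _ T_pos.ne']
  obtain ⟨a, ha⟩ := exists_heavySigns_forall_not_inOpenHalfSpace
    (α := Fin (2 * (k * b))) hk hb (Fintype.card_fin _) enough_rows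
  have : NeZero (2 * (k * b)) := ⟨(Nat.mul_pos two_pos (hT.trans_le hT_le)).ne'⟩
  obtain ⟨A, signs, gap⟩ := exists_matrix_div_card_le_optimalMargin_sub_margin
    (κ := κ) (by rw [Fintype.card_fin]; lia) (by rw [Fintype.card_fin]; lia) a ha
  refine ⟨A, signs, fun w hw => le_trans ?_ (gap w (hw.trans hT_le))⟩
  rw [Fintype.card_fin]
  push_cast
  exact sqrt_div_le_sqrt_div_card (by positivity) (by positivity) T_pos hbL

/-- Gap lower bound: for `ln n ≤ T ≤ n/C` there exists `A ∈ {-1,+1}^{n×n}` such that,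
with `ρ* = sup_{‖u‖₁=1} min_i (Au)_i`, every `T`-sparse unit-`ℓ₁` vector `w` has
`ρ* - min_i (Aw)_i ≥ c √(ln(n/T)/T)`. -/
theorem gap_lower_bound :
    ∃ C c : ℝ, 0 < C ∧ 0 < c ∧ ∃ n₀ : ℕ,
      ∀ n : ℕ, n₀ ≤ n → ∀ T : ℕ,
        Real.log n ≤ (T : ℝ) → (T : ℝ) ≤ (n : ℝ) / C →
          ∃ A : Matrix (Fin n) (Fin n) ℝ, (∀ i j, A i j = -1 ∨ A i j = 1) ∧
            ∀ w : Fin n → ℝ, (Finset.univ.filter (fun j => w j ≠ 0)).card ≤ T →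
              (∑ j, |w j|) = 1 →
              c * Real.sqrt (Real.log ((n : ℝ) / (T : ℝ)) / (T : ℝ)) ≤
                (⨆ u : {u : Fin n → ℝ // (∑ j, |u j|) = 1}, ⨅ i, A.mulVec u.1 i) -
                  (⨅ i, A.mulVec w i) := by
  refine ⟨Real.exp 128, 1 / 32, Real.exp_pos _, by norm_num, 2, fun n hn T hlog hTn => ?_⟩
  have one_lt_n : (1 : ℝ) < n := by exact_mod_cast hn
  have T_pos : 0 < T := Nat.cast_pos.1 ((Real.log_pos one_lt_n).trans_le hlog)
  have exp_mul_le : Real.exp 128 * T ≤ n := (le_div_iff₀' (Real.exp_pos _)).1 hTn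
  have four_mul_le : 4 * T ≤ n := by
    have : (4 : ℝ) * T ≤ n := le_trans (by gcongr; linarith [Real.add_one_le_exp 128]) exp_mul_le
    exact_mod_cast this
  have log_le : Real.log (n / T) ≤ T := by
    refine (Real.log_le_log (by positivity) (div_le_self (by positivity) ?_)).trans hlog
    exact_mod_cast T_pos
  obtain ⟨A, signs, gap⟩ := gap_lower_bound_general (ι := Fin n) (κ := Fin n) T_pos
    (by rwa [Fintype.card_fin]) (by rwa [Fintype.card_fin]) (by rwa [Fintype.card_fin])
  rw [Fintype.card_fin] at gap
  exact ⟨A, signs, fun w hw _ => gap w hw⟩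
end

section
/- For every vector w ∈ ℝⁿ, every positive integer t, and every real a ≥ 1, it holds that F(w, a·t) ≤ a²·F(w, t). -/
open Finset
open scoped Classical

/-- `F(w,t)` computed with respect to a permutation `σ` ordering the coordinates of `w`
by decreasing absolute value:
`F(w,t) = Σ_{j=1}^{⌊t²⌋} |w_{i_j}| + t (Σ_{j=⌊t²⌋+1}^n w_{i_j}²)^{1/2}`. -/
noncomputable def Fval {n : ℕ} (w : Fin n → ℝ) (σ : Equiv.Perm (Fin n)) (t : ℝ) : ℝ :=
  (∑ j ∈ Finset.univ.filter (fun j : Fin n => (j : ℕ) < ⌊t ^ 2⌋₊), |w (σ j)|) +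
    t * Real.sqrt (∑ j ∈ Finset.univ.filter (fun j : Fin n => ⌊t ^ 2⌋₊ ≤ (j : ℕ)), (w (σ j)) ^ 2)

/-!
Passing from `t` to `a * t` moves a block of indices from the `ℓ²` tail to the `ℓ¹` head. As `t ^ 2`
is an integer, this block has at most `(a ^ 2 - 1) * t ^ 2` elements. Cauchy–Schwarz bounds the `ℓ¹`
norm of the block plus `a * t` times the `ℓ²` norm of the new tail by `√((2 * a ^ 2 - 1) * t ^ 2)`
times the `ℓ²` norm of the old tail, and `2 * a ^ 2 - 1 ≤ a ^ 4`.
-/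

theorem sqrt_mul_sqrt_add_sqrt_mul_sqrt_le {a b c d : ℝ} (ha : 0 ≤ a) (hb : 0 ≤ b) (hc : 0 ≤ c)
    (hd : 0 ≤ d) : √a * √b + √c * √d ≤ √(a + c) * √(b + d) := by
  simpa using Real.sum_sqrt_mul_sqrt_le (univ : Finset (Fin 2)) (f := ![a, c]) (g := ![b, d])
    (by simp [Fin.forall_fin_two, ha, hc]) (by simp [Fin.forall_fin_two, hb, hd])

section HeadTail

variable {ι : Type*}

theorem sum_abs_le_sqrt_card_mul_sqrt_sum_sq (x : ι → ℝ) (s : Finset ι) :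
    ∑ i ∈ s, |x i| ≤ √(#s : ℝ) * √(∑ i ∈ s, x i ^ 2) := by
  rw [← Real.sqrt_mul (Nat.cast_nonneg _)]
  refine Real.le_sqrt_of_sq_le ?_
  simpa only [sq_abs] using sq_sum_le_card_mul_sum_sq (s := s) (f := fun i => |x i|)

variable [Fintype ι] [DecidableEq ι]

/-- The `ℓ¹` norm of `x` on the head `s` plus `t` times its `ℓ²` norm on the tail `sᶜ`.
Taking `s` to be the first `⌊t²⌋` indices gives `Fval`; here `s` and `t` vary independently. -/
noncomputable def headTail (x : ι → ℝ) (s : Finset ι) (t : ℝ) : ℝ :=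
  ∑ i ∈ s, |x i| + t * √(∑ i ∈ sᶜ, x i ^ 2)

theorem headTail_mono (x : ι → ℝ) (s : Finset ι) : Monotone (headTail x s) := fun t u htu => by
  unfold headTail
  gcongr

theorem headTail_mul_le (x : ι → ℝ) (s : Finset ι) (t : ℝ) {b : ℝ} (hb : 1 ≤ b) :
    headTail x s (b * t) ≤ b * headTail x s t := by
  have head_nonneg : 0 ≤ ∑ i ∈ s, |x i| := sum_nonneg fun _ _ => abs_nonneg _
  rw [headTail, headTail, mul_add, mul_assoc]
  gcongr
  exact le_mul_of_one_le_left head_nonneg hb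

theorem headTail_le_of_subset (x : ι → ℝ) {s u : Finset ι} (hsu : s ⊆ u) (c : ℝ) :
    headTail x u c ≤ headTail x s √(#(u \ s) + c ^ 2) := by
  have head_eq : ∑ i ∈ u, |x i| = ∑ i ∈ s, |x i| + ∑ i ∈ u \ s, |x i| := by
    rw [add_comm, sum_sdiff hsu]
  have tail_eq : ∑ i ∈ sᶜ, x i ^ 2 = ∑ i ∈ u \ s, x i ^ 2 + ∑ i ∈ uᶜ, x i ^ 2 := by
    rw [← sum_sdiff (compl_subset_compl.2 hsu), compl_sdiff_compl]
  have block_le : ∑ i ∈ u \ s, |x i| + c * √(∑ i ∈ uᶜ, x i ^ 2) ≤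
      √(#(u \ s) + c ^ 2) * √(∑ i ∈ sᶜ, x i ^ 2) :=
    calc ∑ i ∈ u \ s, |x i| + c * √(∑ i ∈ uᶜ, x i ^ 2)
        ≤ √(#(u \ s) : ℝ) * √(∑ i ∈ u \ s, x i ^ 2) + √(c ^ 2) * √(∑ i ∈ uᶜ, x i ^ 2) := by
          gcongr
          · exact sum_abs_le_sqrt_card_mul_sqrt_sum_sq x _
          · exact Real.le_sqrt_of_sq_le le_rfl
      _ ≤ √(#(u \ s) + c ^ 2) * √(∑ i ∈ sᶜ, x i ^ 2) := by
          rw [tail_eq]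
          exact sqrt_mul_sqrt_add_sqrt_mul_sqrt_le (Nat.cast_nonneg _)
            (sum_nonneg fun _ _ => sq_nonneg _) (sq_nonneg _) (sum_nonneg fun _ _ => sq_nonneg _)
  rw [headTail, headTail, head_eq, add_assoc]
  gcongr

theorem headTail_mul_le_sq_mul_of_subset (x : ι → ℝ) {s u : Finset ι} (hsu : s ⊆ u) {a t : ℝ}
    (ha : 1 ≤ a) (ht : 0 ≤ t) (hcard : (#(u \ s) : ℝ) ≤ (a * t) ^ 2 - t ^ 2) :
    headTail x u (a * t) ≤ a ^ 2 * headTail x s t := by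
  have weight_le : √(#(u \ s) + (a * t) ^ 2) ≤ a ^ 2 * t := by
    refine Real.sqrt_le_iff.2 ⟨by positivity, ?_⟩
    calc (#(u \ s) : ℝ) + (a * t) ^ 2
        ≤ (a ^ 2 * t) ^ 2 - ((a ^ 2 - 1) * t) ^ 2 := by linear_combination hcard
      _ ≤ (a ^ 2 * t) ^ 2 := sub_le_self _ (sq_nonneg _)
  calc headTail x u (a * t)
      ≤ headTail x s √(#(u \ s) + (a * t) ^ 2) := headTail_le_of_subset x hsu _
    _ ≤ headTail x s (a ^ 2 * t) := headTail_mono x s weight_le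
    _ ≤ a ^ 2 * headTail x s t := headTail_mul_le x s t (one_le_pow₀ ha)

end HeadTail

theorem Fval_eq_headTail {n : ℕ} (w : Fin n → ℝ) (σ : Equiv.Perm (Fin n)) (t : ℝ) :
    Fval w σ t = headTail (w ∘ σ) {j | (j : ℕ) < ⌊t ^ 2⌋₊} t := by
  simp only [Fval, headTail, compl_filter, not_lt, Function.comp_apply]

theorem card_filter_val_lt_sdiff_le (n : ℕ) {m k : ℕ} (hmk : m ≤ k) :
    (#(univ.filter (fun j : Fin n => (j : ℕ) < k) \ univ.filter (fun j : Fin n => (j : ℕ) < m)) : ℝ)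
      ≤ k - m := by
  rw [← Nat.cast_sub hmk, ← Nat.card_Ico, Nat.cast_le]
  refine card_le_card_of_injOn Fin.val (fun j hj => ?_) Fin.val_injective.injOn
  simpa [and_comm] using hj

theorem Fval_scale_general {n : ℕ} (w : Fin n → ℝ) (σ : Equiv.Perm (Fin n)) {t a : ℝ} {m : ℕ}
    (ht : 0 ≤ t) (htm : t ^ 2 = m) (ha : 1 ≤ a) : Fval w σ (a * t) ≤ a ^ 2 * Fval w σ t := by
  have m_le_floor : m ≤ ⌊(a * t) ^ 2⌋₊ := Nat.le_floor <| by
    rw [← htm]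
    exact pow_le_pow_left₀ ht (le_mul_of_one_le_left ht ha) 2
  have floor_le : (⌊(a * t) ^ 2⌋₊ : ℝ) ≤ (a * t) ^ 2 := Nat.floor_le (sq_nonneg _)
  rw [Fval_eq_headTail, Fval_eq_headTail, htm, Nat.floor_natCast]
  refine headTail_mul_le_sq_mul_of_subset _ ?_ ha ht ?_
  · exact monotone_filter_right _ fun _ _ hj => hj.trans_le m_le_floor
  · rw [htm]
    exact (card_filter_val_lt_sdiff_le n m_le_floor).trans (sub_le_sub_right floor_le _)

/-- For every `w ∈ ℝⁿ`, positive integer `t` and real `a ≥ 1`, `F(w, a·t) ≤ a² F(w,t)`. -/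
theorem Fval_scale (n : ℕ) (w : Fin n → ℝ) (t : ℕ) (ht : 0 < t) (a : ℝ) (ha : 1 ≤ a)
    (σ : Equiv.Perm (Fin n)) (hσ : ∀ j k : Fin n, j ≤ k → |w (σ k)| ≤ |w (σ j)|) :
    Fval w σ (a * (t : ℝ)) ≤ a ^ 2 * Fval w σ (t : ℝ) :=
  Fval_scale_general w σ t.cast_nonneg (Nat.cast_pow t 2).symm ha
end
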